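/- Sharp fractional Sobolev inequality on ℝⁿ: Let n ≥ 1 be an integer, s ∈ (0, n) and q⋆ = 2n/(n−s). For every real-valued Schwartz function f on ℝⁿ, ( ∫_{ℝⁿ} |f|^{q⋆} dx )^{2/q⋆} ≤ S_{n,s} · ‖f‖²_{Ḣ^{s/2}} where S_{n,s} = (Γ((n−s)/2)/Γ((n+s)/2)) · |Sⁿ|^{−s/n}. Moreover S_{n,s} is optimal: for every S < S_{n,s} there is a Schwartz function f for which the inequality with S in place of S_{n,s} fails. -/

import Mathlib

open MeasureTheory Real SchwartzMap
open scoped FourierTransform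

/-- The homogeneous Sobolev seminorm squared `‖f‖²_{Ḣ^{s/2}}` of a Schwartz function
`f` on `ℝⁿ`, written via the Fourier transform. -/
noncomputable def homogSobolevNormSq (n : ℕ) (s : ℝ)
    (f : SchwartzMap (EuclideanSpace ℝ (Fin n)) ℝ) : ℝ :=
  ∫ ξ : EuclideanSpace ℝ (Fin n),
    (2 * π * ‖ξ‖) ^ s * ‖𝓕 (fun x => (f x : ℂ)) ξ‖ ^ 2

-- part 1
open MeasureTheory
open scoped ENNReal

set_option linter.unusedSectionVars false
set_option linter.unusedVariables false
namespace SFS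

section abstract_part
variable {X : Type*} [MeasurableSpace X]

/-- The double integral functional. -/
noncomputable def HH (μ : Measure X) (k : X → X → ℝ≥0∞) (u : X → ℝ≥0∞) : ℝ≥0∞ :=
  ∫⁻ x, ∫⁻ y, u x * u y * k x y ∂μ ∂μ

/-- A conformal reflection. -/
structure IsConfRefl (μ : Measure X) (k : X → X → ℝ≥0∞) (p : ℝ) (ρ : X → X)
    (w v : X → ℝ≥0∞) (G : Set X) : Prop where
  mρ : Measurable ρ
  mw : Measurable w
  mv : Measurable v
  conull : ∀ᵐ x ∂μ, x ∈ G
  invol : ∀ x, ρ (ρ x) = x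
  Gρ : ∀ x ∈ G, ρ x ∈ G
  cov : ∀ g : X → ℝ≥0∞, Measurable g → ∫⁻ x, g (ρ x) * (w x * v x) ∂μ = ∫⁻ x, g x ∂μ
  ww : ∀ x ∈ G, w x * w (ρ x) = 1
  wv : ∀ x ∈ G, w x ^ p = w x * v x
  vtop : ∀ x ∈ G, v x ≠ ∞
  dich : ∀ x ∈ G, (w x < 1 ∧ v x < 1) ∨ (1 < w x ∧ 1 < v x)
  k2 : ∀ x ∈ G, ∀ y ∈ G, k (ρ x) (ρ y) * v x * v y = k x y
  kS : ∀ x ∈ G, ∀ y ∈ G, k x (ρ y) * v y = k (ρ x) y * v x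
  kle : ∀ x ∈ G, ∀ y ∈ G, (w x < 1 ↔ w y < 1) → k (ρ x) y * v x ≤ k x y
  kge : ∀ x ∈ G, ∀ y ∈ G, (w x < 1 ↔ ¬ w y < 1) → k x y ≤ k (ρ x) y * v x

/-- reflected function -/
noncomputable def hat (ρ : X → X) (w : X → ℝ≥0∞) (u : X → ℝ≥0∞) (x : X) : ℝ≥0∞ := u (ρ x) * w x

/-- polarized function -/
noncomputable def pol (ρ : X → X) (w : X → ℝ≥0∞) (u : X → ℝ≥0∞) (x : X) : ℝ≥0∞ :=
  open scoped Classical in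
  if w x < 1 then max (u x) (hat ρ w u x) else min (u x) (hat ρ w u x)

variable {μ : Measure X} [SFinite μ] {k : X → X → ℝ≥0∞} {p : ℝ} {ρ : X → X}
    {w v : X → ℝ≥0∞} {G : Set X}

lemma IsConfRefl.measurable_hat (h : IsConfRefl μ k p ρ w v G) {u : X → ℝ≥0∞} (hu : Measurable u) :
    Measurable (hat ρ w u) := (hu.comp h.mρ).mul h.mw

lemma IsConfRefl.measurable_pol (h : IsConfRefl μ k p ρ w v G) {u : X → ℝ≥0∞} (hu : Measurable u) :
    Measurable (pol ρ w u) := by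
  classical
  unfold pol
  refine Measurable.ite (measurableSet_lt h.mw measurable_const) ?_ ?_
  · exact hu.max (h.measurable_hat hu)
  · exact hu.min (h.measurable_hat hu)

lemma IsConfRefl.w_ne_top (h : IsConfRefl μ k p ρ w v G) {x : X} (hx : x ∈ G) : w x ≠ ∞ := by
  intro h1
  have := h.ww x hx
  rw [h1] at this
  by_cases h0 : w (ρ x) = 0
  · simp [h0] at this
  · rw [ENNReal.top_mul h0] at this; simp at this

lemma IsConfRefl.hat_pol (h : IsConfRefl μ k p ρ w v G) (u : X → ℝ≥0∞) {x : X} (hx : x ∈ G) :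
    hat ρ w (pol ρ w u) x =
      open scoped Classical in
      if w x < 1 then min (u x) (hat ρ w u x) else max (u x) (hat ρ w u x) := by
  have hρ := h.Gρ x hx
  have h1 := h.ww x hx
  have h1' : w (ρ x) * w x = 1 := by rw [mul_comm]; exact h1
  have h2 : hat ρ w u (ρ x) * w x = u x := by
    simp only [hat, h.invol, mul_assoc, h1', mul_one]
  by_cases hw : w x < 1
  · have : ¬ w (ρ x) < 1 := by
      intro h3
      have : w x * w (ρ x) < 1 := by
        calc w x * w (ρ x) ≤ w x * 1 := by gcongr
          _ < 1 := by simpa using hw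
      rw [h1] at this; exact lt_irrefl _ this
    simp only [hw, if_true]
    unfold hat pol
    simp only [this, if_false]
    have e := (mul_left_mono (a := w x)).map_min (a := u (ρ x)) (b := hat ρ w u (ρ x))
    change min _ _ * w x = _ at e
    rw [e, h2, min_comm]
  · have hw1 : 1 < w x := by
      rcases h.dich x hx with h3 | h3
      · exact absurd h3.1 hw
      · exact h3.1
    have : w (ρ x) < 1 := by
      by_contra h3
      push Not at h3
      have : 1 < w x * w (ρ x) := by
        calc 1 < w x * 1 := by simpa using hw1
          _ ≤ _ := by gcongr
      rw [h1] at this; exact lt_irrefl _ this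
    simp only [hw, if_false]
    unfold hat pol
    simp only [this, if_true]
    have e := (mul_left_mono (a := w x)).map_max (a := u (ρ x)) (b := hat ρ w u (ρ x))
    change max _ _ * w x = _ at e
    rw [e, h2, max_comm]

lemma HH_b (h : IsConfRefl μ k p ρ w v G) (hk : Measurable (Function.uncurry k))
    {u : X → ℝ≥0∞} (hu : Measurable u) :
    HH μ k u = ∫⁻ x, ∫⁻ y, hat ρ w u x * u y * (k (ρ x) y * v x) ∂μ ∂μ := by
  unfold HH
  have hk1 : ∀ x, Measurable (k x) := fun x => hk.comp measurable_prodMk_left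
  rw [← h.cov (fun x => ∫⁻ y, u x * u y * k x y ∂μ)]
  · refine lintegral_congr fun x => ?_
    rw [← lintegral_mul_const]
    · refine lintegral_congr fun y => ?_
      unfold hat
      ring
    · have := hk1 (ρ x); fun_prop
  · refine Measurable.lintegral_prod_right' (f := fun q : X × X => u q.1 * u q.2 * k q.1 q.2) ?_
    exact ((hu.comp measurable_fst).mul (hu.comp measurable_snd)).mul hk

lemma HH_c (h : IsConfRefl μ k p ρ w v G) (hk : Measurable (Function.uncurry k))
    {u : X → ℝ≥0∞} (hu : Measurable u) :
    HH μ k u = ∫⁻ x, ∫⁻ y, u x * hat ρ w u y * (k (ρ x) y * v x) ∂μ ∂μ := by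
  unfold HH
  have hk1 : ∀ x, Measurable (k x) := fun x => hk.comp measurable_prodMk_left
  refine lintegral_congr_ae ?_
  filter_upwards [h.conull] with x hx
  rw [← h.cov (fun y => u x * u y * k x y) (by have := hk1 x; fun_prop)]
  refine lintegral_congr_ae ?_
  filter_upwards [h.conull] with y hy
  rw [← h.kS x hx y hy]
  unfold hat
  ring

lemma HH_a (h : IsConfRefl μ k p ρ w v G) (hk : Measurable (Function.uncurry k))
    {u : X → ℝ≥0∞} (hu : Measurable u) :
    HH μ k u = ∫⁻ x, ∫⁻ y, hat ρ w u x * hat ρ w u y * k x y ∂μ ∂μ := by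
  rw [HH_b h hk hu]
  have hk1 : ∀ x, Measurable (k x) := fun x => hk.comp measurable_prodMk_left
  refine lintegral_congr_ae ?_
  filter_upwards [h.conull] with x hx
  rw [← h.cov (fun y => hat ρ w u x * u y * (k (ρ x) y * v x))
    (by have := hk1 (ρ x); fun_prop)]
  refine lintegral_congr_ae ?_
  filter_upwards [h.conull] with y hy
  rw [← h.k2 x hx y hy]
  unfold hat
  ring

/-- pointwise symmetrized integrand -/
noncomputable def Phi (a a' b b' c c' : ℝ≥0∞) : ℝ≥0∞ :=
  a * b * c + a' * b' * c + (a' * b * c' + a * b' * c')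

lemma HH_four (h : IsConfRefl μ k p ρ w v G) (hk : Measurable (Function.uncurry k))
    {u : X → ℝ≥0∞} (hu : Measurable u) :
    HH μ k u + HH μ k u + (HH μ k u + HH μ k u) =
      ∫⁻ x, ∫⁻ y, Phi (u x) (hat ρ w u x) (u y) (hat ρ w u y) (k x y) (k (ρ x) y * v x) ∂μ ∂μ := by
  have hh := h.measurable_hat hu
  have hk1 : ∀ x, Measurable (k x) := fun x => hk.comp measurable_prodMk_left
  have hkq : Measurable fun q : X × X => k q.1 q.2 := hk
  have hkr : Measurable fun q : X × X => k (ρ q.1) q.2 :=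
    hk.comp ((h.mρ.comp measurable_fst).prodMk measurable_snd)
  have hv := h.mv
  have e : ∀ x, ∫⁻ y, Phi (u x) (hat ρ w u x) (u y) (hat ρ w u y) (k x y) (k (ρ x) y * v x) ∂μ
      = (∫⁻ y, u x * u y * k x y ∂μ) + (∫⁻ y, hat ρ w u x * hat ρ w u y * k x y ∂μ)
      + ((∫⁻ y, hat ρ w u x * u y * (k (ρ x) y * v x) ∂μ) +
        (∫⁻ y, u x * hat ρ w u y * (k (ρ x) y * v x) ∂μ)) := by
    intro x
    have := hk1 x
    have := hk1 (ρ x)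
    unfold Phi
    rw [lintegral_add_left, lintegral_add_left, lintegral_add_left] <;> fun_prop
  simp_rw [e]
  have m1 : Measurable fun x => ∫⁻ y, u x * u y * k x y ∂μ :=
    Measurable.lintegral_prod_right' (f := fun q : X × X => u q.1 * u q.2 * k q.1 q.2)
      (by fun_prop)
  have m2 : Measurable fun x => ∫⁻ y, hat ρ w u x * hat ρ w u y * k x y ∂μ :=
    Measurable.lintegral_prod_right'
      (f := fun q : X × X => hat ρ w u q.1 * hat ρ w u q.2 * k q.1 q.2) (by fun_prop)
  have m3 : Measurable fun x => ∫⁻ y, hat ρ w u x * u y * (k (ρ x) y * v x) ∂μ :=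
    Measurable.lintegral_prod_right'
      (f := fun q : X × X => hat ρ w u q.1 * u q.2 * (k (ρ q.1) q.2 * v q.1))
      (((hh.comp measurable_fst).mul (hu.comp measurable_snd)).mul (hkr.mul (hv.comp measurable_fst)))
  have m12 : Measurable fun x => ∫⁻ y, u x * u y * k x y ∂μ +
      ∫⁻ y, hat ρ w u x * hat ρ w u y * k x y ∂μ := m1.add m2
  rw [lintegral_add_left m12, lintegral_add_left m1, lintegral_add_left m3,
    ← HH_a h hk hu, ← HH_b h hk hu, ← HH_c h hk hu]
  rfl

lemma rearr2 {a a' b b' : ℝ≥0∞} (ha : a ≤ a') (hb : b' ≤ b) :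
    a * b + a' * b' ≤ a' * b + a * b' := by
  obtain ⟨d, rfl⟩ := exists_add_of_le ha
  obtain ⟨e, rfl⟩ := exists_add_of_le hb
  calc a * (b' + e) + (a + d) * b' ≤ a * (b' + e) + (a + d) * b' + d * e := le_self_add
    _ = _ := by ring

lemma Phi_same {a a' b b' c c' : ℝ≥0∞} (hc : c' ≤ c) :
    Phi a a' b b' c c' ≤ Phi (max a a') (min a a') (max b b') (min b b') c c' := by
  obtain ⟨d, rfl⟩ := exists_add_of_le hc
  have e : ∀ a a' b b' : ℝ≥0∞, Phi a a' b b' (c' + d) c' =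
    (a + a') * (b + b') * c' + (a * b + a' * b') * d := by intros; unfold Phi; ring
  rw [e, e, max_add_min, max_add_min]
  refine add_le_add le_rfl (mul_le_mul' ?_ le_rfl)
  rcases le_total a a' with h1 | h1 <;> rcases le_total b b' with h2 | h2 <;> simp only [h1, h2,
    max_eq_left, max_eq_right, min_eq_left, min_eq_right]
  · rw [add_comm]
  · exact rearr2 h1 h2
  · rw [add_comm]
    calc a' * b' + a * b = b' * a' + b * a := by ring
      _ ≤ b' * a + b * a' := by
        have := rearr2 h2 h1
        calc b' * a' + b * a = b * a + b' * a' := by ring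
          _ ≤ _ := this
      _ = _ := by ring
  · exact le_refl _

lemma Phi_swap (a a' b b' c c' : ℝ≥0∞) : Phi a a' b b' c c' = Phi a a' b' b c' c := by
  unfold Phi; ring

lemma Phi_swap2 (a a' b b' c c' : ℝ≥0∞) : Phi a a' b b' c c' = Phi a' a b' b c c' := by
  unfold Phi; ring

theorem HH_pol_ge (h : IsConfRefl μ k p ρ w v G) (hk : Measurable (Function.uncurry k))
    {u : X → ℝ≥0∞} (hu : Measurable u) : HH μ k u ≤ HH μ k (pol ρ w u) := by
  have key : HH μ k u + HH μ k u + (HH μ k u + HH μ k u) ≤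
    HH μ k (pol ρ w u) + HH μ k (pol ρ w u) + (HH μ k (pol ρ w u) + HH μ k (pol ρ w u)) := by
    rw [HH_four h hk hu, HH_four h hk (h.measurable_pol hu)]
    refine lintegral_mono_ae ?_
    filter_upwards [h.conull] with x hx
    refine lintegral_mono_ae ?_
    filter_upwards [h.conull] with y hy
    rw [h.hat_pol u hx, h.hat_pol u hy]
    unfold pol
    by_cases h1 : w x < 1 <;> by_cases h2 : w y < 1 <;> simp only [h1, h2, if_true, if_false]
    · exact Phi_same (h.kle x hx y hy (by simp [h1, h2]))
    · rw [Phi_swap, Phi_swap (max _ _), min_comm (u y), max_comm (u y)]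
      exact Phi_same (h.kge x hx y hy (by simp [h1, h2]))
    · rw [Phi_swap, Phi_swap (min _ _), Phi_swap2, Phi_swap2 (min _ _), min_comm (u x),
        max_comm (u x)]
      exact Phi_same (h.kge x hx y hy (by simp [h1, h2]))
    · rw [Phi_swap2 (min _ _)]
      exact Phi_same (h.kle x hx y hy (by simp [h1, h2]))
  have e : ∀ a : ℝ≥0∞, a + a + (a + a) = 4 * a := by intro a; ring
  rw [e, e] at key
  exact (ENNReal.mul_le_mul_iff_right (by norm_num) (by norm_num)).1 key

theorem pol_le (h : IsConfRefl μ k p ρ w v G) {u : X → ℝ≥0∞} {C : ℝ≥0∞} (hC : ∀ x, u x ≤ C) (x : X) :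
    pol ρ w u x ≤ C := by
  unfold pol hat
  split_ifs with h1
  · refine max_le (hC x) ?_
    calc u (ρ x) * w x ≤ C * 1 := by gcongr; exact hC _
      _ = C := mul_one C
  · exact (min_le_left _ _).trans (hC x)

theorem lint_pow_pol (h : IsConfRefl μ k p ρ w v G) (hp : 0 < p)
    {u : X → ℝ≥0∞} (hu : Measurable u) :
    ∫⁻ x, pol ρ w u x ^ p ∂μ = ∫⁻ x, u x ^ p ∂μ := by
  have e : ∀ u : X → ℝ≥0∞, Measurable u → ∫⁻ x, u x ^ p ∂μ + ∫⁻ x, u x ^ p ∂μ =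
      ∫⁻ x, (u x ^ p + hat ρ w u x ^ p) ∂μ := by
    intro u hu
    have h1 : ∫⁻ x, u x ^ p ∂μ = ∫⁻ x, hat ρ w u x ^ p ∂μ := by
      rw [← h.cov (fun x => u x ^ p) (by fun_prop)]
      refine lintegral_congr_ae ?_
      filter_upwards [h.conull] with x hx
      unfold hat
      rw [ENNReal.mul_rpow_of_nonneg _ _ hp.le, h.wv x hx]
    rw [lintegral_add_left (by fun_prop), ← h1]
  have e2 : ∫⁻ x, pol ρ w u x ^ p ∂μ + ∫⁻ x, pol ρ w u x ^ p ∂μ =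
     ∫⁻ x, u x ^ p ∂μ + ∫⁻ x, u x ^ p ∂μ := by
    rw [e u hu, e _ (h.measurable_pol hu)]
    refine lintegral_congr_ae ?_
    filter_upwards [h.conull] with x hx
    rw [h.hat_pol u hx]
    unfold pol
    split_ifs
    · rcases le_total (u x) (hat ρ w u x) with h1 | h1 <;> simp [h1, add_comm]
    · rcases le_total (u x) (hat ρ w u x) with h1 | h1 <;> simp [h1, add_comm]
  have e3 : ∀ a : ℝ≥0∞, a + a = 2 * a := by intro a; ring
  rw [e3, e3] at e2
  exact (ENNReal.mul_right_inj (by norm_num) (by norm_num)).1 e2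

theorem lint_two (h : IsConfRefl μ k p ρ w v G) {u : X → ℝ≥0∞} (hu : Measurable u) :
    ∫⁻ x, u x ∂μ + ∫⁻ x, u x ∂μ = ∫⁻ x, (u x + hat ρ w u x * v x) ∂μ := by
  rw [lintegral_add_left hu]
  congr 1
  rw [← h.cov u hu]
  refine lintegral_congr fun x => ?_
  unfold hat; ring

lemma pol_pt (h : IsConfRefl μ k p ρ w v G) (u : X → ℝ≥0∞) {x : X} (hx : x ∈ G) :
    u x + hat ρ w u x * v x ≤ pol ρ w u x + hat ρ w (pol ρ w u) x * v x := by
  rw [h.hat_pol u hx]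
  unfold pol
  rcases h.dich x hx with ⟨h1, h2⟩ | ⟨h1, h2⟩
  · simp only [h1, if_true]
    rcases le_total (u x) (hat ρ w u x) with h3 | h3 <;> simp only [h3, max_eq_left, max_eq_right,
      min_eq_left, min_eq_right, le_refl]
    have := rearr2 h3 h2.le
    simpa using this
  · simp only [not_lt.2 h1.le, if_false]
    rcases le_total (u x) (hat ρ w u x) with h3 | h3 <;> simp only [h3, max_eq_left, max_eq_right,
      min_eq_left, min_eq_right, le_refl]
    have := rearr2 h3 h2.le
    rw [mul_one, mul_one] at this
    rw [add_comm, add_comm (hat ρ w u x)]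
    exact this

/-- if polarization does not increase the integral, `u` is polarized -/
theorem polarized_of_max (h : IsConfRefl μ k p ρ w v G) {u : X → ℝ≥0∞} (hu : Measurable u)
    (hfin : ∫⁻ x, u x ∂μ ≠ ∞) (hut : ∀ x, u x ≠ ∞)
    (hmax : ∫⁻ x, pol ρ w u x ∂μ ≤ ∫⁻ x, u x ∂μ) :
    ∀ᵐ x ∂μ, w x < 1 → u (ρ x) * w x ≤ u x := by
  have hv := h.mv
  have hh := h.measurable_hat hu
  have hpm := h.measurable_pol hu
  have hhp := h.measurable_hat hpm
  have h1 : ∫⁻ x, (pol ρ w u x + hat ρ w (pol ρ w u) x * v x) ∂μ ≤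
      ∫⁻ x, (u x + hat ρ w u x * v x) ∂μ := by
    rw [← lint_two h hu, ← lint_two h hpm]
    gcongr
  have h2 : ∫⁻ x, (u x + hat ρ w u x * v x) ∂μ ≠ ∞ := by
    rw [← lint_two h hu]; simp [hfin]
  have h3 := ae_eq_of_ae_le_of_lintegral_le (μ := μ)
    (f := fun x => u x + hat ρ w u x * v x)
    (g := fun x => pol ρ w u x + hat ρ w (pol ρ w u) x * v x)
    (by filter_upwards [h.conull] with x hx using pol_pt h u hx) h2 (by fun_prop) h1
  filter_upwards [h3, h.conull] with x hx hG hw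
  by_contra hlt
  push Not at hlt
  change u x < hat ρ w u x at hlt
  have hvx : v x < 1 := by
    rcases h.dich x hG with h5 | h5
    · exact h5.2
    · exact absurd h5.1 (not_lt.2 hw.le)
  have hx' : u x + hat ρ w u x * v x = pol ρ w u x + hat ρ w (pol ρ w u) x * v x := hx
  rw [h.hat_pol u hG] at hx'
  unfold pol at hx'
  simp only [hw, if_true, hlt.le, max_eq_right, min_eq_left] at hx'
  have ht : hat ρ w u x ≠ ∞ := ENNReal.mul_ne_top (hut _) (h.w_ne_top hG)
  have hvt := h.vtop x hG
  have r := congrArg ENNReal.toReal hx'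
  rw [ENNReal.toReal_add (hut x) (ENNReal.mul_ne_top ht hvt),
    ENNReal.toReal_add ht (ENNReal.mul_ne_top (hut x) hvt), ENNReal.toReal_mul,
    ENNReal.toReal_mul] at r
  have r1 : (u x).toReal < (hat ρ w u x).toReal := (ENNReal.toReal_lt_toReal (hut x) ht).2 hlt
  have r2 : (v x).toReal < 1 := by
    have := (ENNReal.toReal_lt_toReal hvt (by simp)).2 hvx
    simpa using this
  nlinarith

end abstract_part
end SFS

-- part 2
open MeasureTheory
open scoped ENNReal

set_option linter.unusedSectionVars false
set_option linter.unusedVariables false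
namespace SFS
section compactness
open Filter Topology
variable {X : Type*} [MeasurableSpace X] {μ : Measure X} [IsFiniteMeasure μ] [IsSeparable μ]

instance factTwoNeTop : Fact ((2 : ℝ≥0∞) ≠ ∞) := ⟨by norm_num⟩

lemma memLp_of_bdd {f : X → ℝ} (hf : Measurable f) {C : ℝ} (h : ∀ x, |f x| ≤ C) (p : ℝ≥0∞) :
    MemLp f p μ := MemLp.of_bound hf.aestronglyMeasurable C (Eventually.of_forall h)

lemma weak_l2 (f : ℕ → X → ℝ) (hf : ∀ k, Measurable (f k)) (C : ℝ) (h0 : ∀ k x, 0 ≤ f k x)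
    (hC : ∀ k x, f k x ≤ C) :
    ∃ F : X → ℝ, MemLp F 2 μ ∧ ∃ φ : ℕ → ℕ, StrictMono φ ∧
      ∀ g : X → ℝ, MemLp g 2 μ →
        Tendsto (fun k => ∫ x, f (φ k) x * g x ∂μ) atTop (𝓝 (∫ x, F x * g x ∂μ)) := by
  have habs : ∀ k x, |f k x| ≤ C := fun k x => by rw [abs_of_nonneg (h0 k x)]; exact hC k x
  have hm : ∀ k, MemLp (f k) 2 μ := fun k => memLp_of_bdd (hf k) (habs k) 2
  have hmc : MemLp (fun _ : X => C) 2 μ := memLp_const C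
  let e : ℕ → Lp ℝ 2 μ := fun k => (hm k).toLp
  have hnorm : ∀ k, ‖e k‖ ≤ ‖hmc.toLp‖ := by
    intro k
    refine Lp.norm_le_norm_of_ae_le ?_
    filter_upwards [(hm k).coeFn_toLp, hmc.coeFn_toLp] with x h1 h2
    rw [h1, h2, Real.norm_eq_abs, Real.norm_eq_abs]
    exact (habs k x).trans (le_abs_self C)
  let D : ℕ → WeakDual ℝ (Lp ℝ 2 μ) := fun k =>
    StrongDual.toWeakDual (InnerProductSpace.toDual ℝ (Lp ℝ 2 μ) (e k))
  have hD : ∀ k, D k ∈ (WeakDual.toStrongDual ⁻¹'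
      Metric.closedBall (0 : StrongDual ℝ (Lp ℝ 2 μ)) ‖hmc.toLp‖) := by
    intro k
    simp only [Set.mem_preimage, mem_closedBall_zero_iff]
    change ‖InnerProductSpace.toDual ℝ (Lp ℝ 2 μ) (e k)‖ ≤ _
    rw [LinearIsometryEquiv.norm_map]
    exact hnorm k
  obtain ⟨L, -, φ, hφ, hlim⟩ := WeakDual.isSeqCompact_closedBall ℝ (Lp ℝ 2 μ) 0 ‖hmc.toLp‖ hD
  let F := (InnerProductSpace.toDual ℝ (Lp ℝ 2 μ)).symm (WeakDual.toStrongDual L)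
  refine ⟨F, Lp.memLp F, φ, hφ, fun g hg => ?_⟩
  have h1 := (WeakDual.eval_continuous (𝕜 := ℝ) (E := Lp ℝ 2 μ) hg.toLp).tendsto L |>.comp hlim
  have e1 : ∀ u : Lp ℝ 2 μ, inner ℝ u hg.toLp = ∫ x, u x * g x ∂μ := by
    intro u
    rw [L2.inner_def]
    refine integral_congr_ae ?_
    filter_upwards [hg.coeFn_toLp] with x hx
    rw [hx]; simp [mul_comm]
  have e2 : L hg.toLp = ∫ x, F x * g x ∂μ := by
    rw [← e1]
    have : InnerProductSpace.toDual ℝ (Lp ℝ 2 μ) F = WeakDual.toStrongDual L := by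
      simp [F]
    rw [← InnerProductSpace.toDual_apply_apply, this]
    rfl
  have e3 : ∀ k, D (φ k) hg.toLp = ∫ x, f (φ k) x * g x ∂μ := by
    intro k
    change InnerProductSpace.toDual ℝ (Lp ℝ 2 μ) (e (φ k)) hg.toLp = _
    rw [InnerProductSpace.toDual_apply_apply, e1]
    refine integral_congr_ae ?_
    filter_upwards [(hm (φ k)).coeFn_toLp] with x hx
    rw [hx]
  rw [← e2]
  refine h1.congr fun k => ?_
  exact e3 k

lemma weak_cpt (f : ℕ → X → ℝ) (hf : ∀ k, Measurable (f k)) (C : ℝ) (h0 : ∀ k x, 0 ≤ f k x)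
    (hC : ∀ k x, f k x ≤ C) :
    ∃ F : X → ℝ, Measurable F ∧ (∀ x, 0 ≤ F x) ∧ (∀ x, F x ≤ C) ∧ ∃ φ : ℕ → ℕ, StrictMono φ ∧
      ∀ g : X → ℝ, Integrable g μ →
        Tendsto (fun k => ∫ x, f (φ k) x * g x ∂μ) atTop (𝓝 (∫ x, F x * g x ∂μ)) := by
  rcases isEmpty_or_nonempty X with hX | ⟨⟨x0⟩⟩
  · exact ⟨fun _ => 0, measurable_const, fun x => le_rfl, fun x => hX.elim x, id, strictMono_id,
      fun g hg => by simp [Measure.eq_zero_of_isEmpty μ]⟩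
  have hC0 : 0 ≤ C := (h0 0 x0).trans (hC 0 x0)
  have habs : ∀ k x, |f k x| ≤ C := fun k x => by rw [abs_of_nonneg (h0 k x)]; exact hC k x
  obtain ⟨F0, hF0, φ, hφ, hlim⟩ := weak_l2 (μ := μ) f hf C h0 hC
  have hF0i : Integrable F0 μ := hF0.integrable (by norm_num)
  have hfi : ∀ k, Integrable (f k) μ := fun k =>
    (memLp_of_bdd (hf k) (habs k) 1).integrable le_rfl
  have hset : ∀ s, MeasurableSet s →
      Tendsto (fun k => ∫ x in s, f (φ k) x ∂μ) atTop (𝓝 (∫ x in s, F0 x ∂μ)) := by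
    intro s hs
    have := hlim (s.indicator fun _ => 1) (memLp_indicator_const 2 hs 1 (Or.inr (by simp)))
    have e : ∀ u : X → ℝ, ∫ x, u x * s.indicator (fun _ => (1 : ℝ)) x ∂μ = ∫ x in s, u x ∂μ := by
      intro u
      rw [← integral_indicator hs]
      congr 1; ext x
      by_cases hx : x ∈ s <;> simp [hx]
    simpa only [e] using this
  have hpos : 0 ≤ᵐ[μ] F0 := by
    refine ae_nonneg_of_forall_setIntegral_nonneg hF0i fun s hs _ => ?_
    exact ge_of_tendsto' (hset s hs) fun k => integral_nonneg fun x => h0 _ _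
  have hle : F0 ≤ᵐ[μ] fun _ => C := by
    refine ae_le_of_forall_setIntegral_le hF0i (integrable_const C) fun s hs _ => ?_
    refine le_of_tendsto' (hset s hs) fun k => ?_
    exact setIntegral_mono (hfi _).integrableOn (integrable_const C).integrableOn
      fun x => hC _ x
  obtain ⟨F1, hF1, hF01⟩ := hF0.1.aemeasurable
  let F : X → ℝ := fun x => max 0 (min C (F1 x))
  have hFF : F0 =ᵐ[μ] F := by
    filter_upwards [hpos, hle, hF01] with x h1 h2 h3
    simp only [F, ← h3]
    rw [min_eq_right h2, max_eq_right (show (0:ℝ) ≤ F0 x from h1)]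
  have hFm : Measurable F := by fun_prop
  have hFp : ∀ x, 0 ≤ F x := fun x => le_max_left _ _
  have hFC : ∀ x, F x ≤ C := fun x => max_le hC0 (min_le_left _ _)
  refine ⟨F, hFm, hFp, hFC, φ, hφ, fun g hg => ?_⟩
  have hlim' : ∀ g : X → ℝ, MemLp g 2 μ →
        Tendsto (fun k => ∫ x, f (φ k) x * g x ∂μ) atTop (𝓝 (∫ x, F x * g x ∂μ)) := by
    intro g hg
    have : ∫ x, F x * g x ∂μ = ∫ x, F0 x * g x ∂μ := by
      refine integral_congr_ae ?_
      filter_upwards [hFF] with x hx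
      rw [hx]
    rw [this]; exact hlim g hg
  have hbd : ∀ u : X → ℝ, Measurable u → (∀ x, 0 ≤ u x) → (∀ x, u x ≤ C) → ∀ g : X → ℝ,
      Integrable g μ → Integrable (fun x => u x * g x) μ ∧
        |∫ x, u x * g x ∂μ| ≤ C * ∫ x, |g x| ∂μ := by
    intro u hu hu0 huC g hg
    have hi : Integrable (fun x => u x * g x) μ :=
      hg.bdd_mul (c := C) hu.aestronglyMeasurable
        (Eventually.of_forall fun x => by rw [Real.norm_eq_abs, abs_of_nonneg (hu0 x)]; exact huC x)
    refine ⟨hi, ?_⟩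
    rw [← integral_const_mul]
    refine (abs_integral_le_integral_abs).trans ?_
    refine integral_mono hi.abs (hg.abs.const_mul C) fun x => ?_
    simp only [abs_mul, abs_of_nonneg (hu0 x)]
    gcongr
    exact huC x
  rw [Metric.tendsto_atTop]
  intro ε hε
  have hδ : 0 < ε / (3 * (C + 1)) := by positivity
  obtain ⟨g', hg', hg'm⟩ := (memLp_one_iff_integrable.2 hg).exists_simpleFunc_eLpNorm_sub_lt
    (by simp) (ε := ENNReal.ofReal (ε / (3 * (C + 1)))) (by simpa using hδ)
  have hg'2 : MemLp g' 2 μ := SimpleFunc.memLp_of_isFiniteMeasure g' 2 μ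
  have hg'1 : Integrable g' μ := memLp_one_iff_integrable.1 hg'm
  have hsub : Integrable (fun x => g x - g' x) μ := hg.sub hg'1
  have hd : ∫ x, |g x - g' x| ∂μ < ε / (3 * (C + 1)) := by
    rw [eLpNorm_one_eq_lintegral_enorm] at hg'
    have h1 := ofReal_integral_norm_eq_lintegral_enorm hsub
    have h2 : ENNReal.ofReal (∫ x, ‖g x - g' x‖ ∂μ) < ENNReal.ofReal (ε / (3 * (C + 1))) := by
      rw [h1]; exact hg'
    exact (ENNReal.ofReal_lt_ofReal_iff hδ).1 h2
  obtain ⟨N, hN⟩ := Metric.tendsto_atTop.1 (hlim' g' hg'2) (ε / 3) (by positivity)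
  refine ⟨N, fun k hk => ?_⟩
  have hN := hN k hk
  rw [Real.dist_eq] at hN ⊢
  have a1 := hbd (f (φ k)) (hf _) (h0 _) (hC _)
  have a2 := hbd F hFm hFp hFC
  have s1 : ∫ x, f (φ k) x * g x ∂μ = ∫ x, f (φ k) x * g' x ∂μ +
      ∫ x, f (φ k) x * (g x - g' x) ∂μ := by
    rw [← integral_add (a1 g' hg'1).1 (a1 _ hsub).1]
    congr 1; ext x; ring
  have s2 : ∫ x, F x * g x ∂μ = ∫ x, F x * g' x ∂μ +
      ∫ x, F x * (g x - g' x) ∂μ := by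
    rw [← integral_add (a2 g' hg'1).1 (a2 _ hsub).1]
    congr 1; ext x; ring
  have b1 := (a1 _ hsub).2
  have b2 := (a2 _ hsub).2
  have b3 : C * ∫ x, |g x - g' x| ∂μ ≤ ε / 3 := by
    calc C * ∫ x, |g x - g' x| ∂μ ≤ (C + 1) * (ε / (3 * (C + 1))) := by
          gcongr
          linarith
      _ = ε / 3 := by field_simp
  rw [s1, s2]
  rw [abs_lt] at hN ⊢
  rw [abs_le] at b1 b2
  constructor <;> linarith [hN.1, hN.2, b1.1, b1.2, b2.1, b2.2]

end compactness
end SFS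

-- part 3
open MeasureTheory
open scoped ENNReal

set_option linter.unusedSectionVars false
set_option linter.unusedVariables false
namespace SFS
section compactness2
open Filter Topology
variable {X : Type*} [MeasurableSpace X] {μ : Measure X} [IsFiniteMeasure μ] [IsSeparable μ]
  {k : X → X → ℝ≥0∞}

lemma k_ae (hk : Measurable (Function.uncurry k)) (hfin : HH μ k (fun _ => 1) ≠ ∞) :
    ∀ᵐ x ∂μ, ∫⁻ y, k x y ∂μ ≠ ∞ := by
  unfold HH at hfin
  simp only [one_mul] at hfin
  have := ae_lt_top' (μ := μ) (f := fun x => ∫⁻ y, k x y ∂μ)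
    (Measurable.lintegral_prod_right' (f := fun q : X × X => k q.1 q.2) hk).aemeasurable hfin
  filter_upwards [this] with x hx using hx.ne

lemma HH_real (hk : Measurable (Function.uncurry k)) (hfin : HH μ k (fun _ => 1) ≠ ∞)
    {f : X → ℝ} (hf : Measurable f) {C : ℝ} (h0 : ∀ x, 0 ≤ f x) (hC : ∀ x, f x ≤ C) :
    HH μ k (fun x => ENNReal.ofReal (f x)) =
      ENNReal.ofReal (∫ x, f x * (∫ y, f y * (k x y).toReal ∂μ) ∂μ) ∧
    Integrable (fun x => ∫ y, f y * (k x y).toReal ∂μ) μ ∧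
    ∀ᵐ x ∂μ, |∫ y, f y * (k x y).toReal ∂μ| ≤ C * (∫⁻ y, k x y ∂μ).toReal := by
  have hk1 : ∀ x, Measurable (k x) := fun x => hk.comp measurable_prodMk_left
  have hkr : Measurable fun q : X × X => (k q.1 q.2).toReal := hk.ennreal_toReal
  have hinner : ∀ᵐ x ∂μ, ∫⁻ y, ENNReal.ofReal (f y) * k x y ∂μ =
      ENNReal.ofReal (∫ y, f y * (k x y).toReal ∂μ) ∧
      ∫⁻ y, ENNReal.ofReal (f y) * k x y ∂μ ≤ ENNReal.ofReal C * ∫⁻ y, k x y ∂μ := by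
    filter_upwards [k_ae hk hfin] with x hx
    have hlt : ∀ᵐ y ∂μ, k x y < ∞ := ae_lt_top (hk1 x) hx
    have hi : Integrable (fun y => (k x y).toReal) μ := integrable_toReal_of_lintegral_ne_top
      (hk1 x).aemeasurable hx
    have hfi : Integrable (fun y => f y * (k x y).toReal) μ :=
      hi.bdd_mul (c := C) hf.aestronglyMeasurable
        (Eventually.of_forall fun x => by rw [Real.norm_eq_abs, abs_of_nonneg (h0 x)]; exact hC x)
    constructor
    · rw [ofReal_integral_eq_lintegral_ofReal hfi
        (Eventually.of_forall fun y => mul_nonneg (h0 y) ENNReal.toReal_nonneg)]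
      refine lintegral_congr_ae ?_
      filter_upwards [hlt] with y hy
      rw [ENNReal.ofReal_mul (h0 y), ENNReal.ofReal_toReal hy.ne]
    · rw [← lintegral_const_mul _ (hk1 x)]
      refine lintegral_mono fun y => ?_
      gcongr
      exact hC y
  have hm : Measurable fun x => ∫⁻ y, k x y ∂μ :=
    Measurable.lintegral_prod_right' (f := fun q : X × X => k q.1 q.2) hk
  have hsm : AEStronglyMeasurable (fun x => ∫ y, f y * (k x y).toReal ∂μ) μ := by
    refine StronglyMeasurable.aestronglyMeasurable ?_
    refine StronglyMeasurable.integral_prod_right' (f := fun q : X × X => f q.2 * (k q.1 q.2).toReal) ?_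
    exact ((hf.comp measurable_snd).mul hkr).stronglyMeasurable
  have hnn : ∀ x, 0 ≤ ∫ y, f y * (k x y).toReal ∂μ := fun x =>
    integral_nonneg fun y => mul_nonneg (h0 y) ENNReal.toReal_nonneg
  have hbound : ∀ᵐ x ∂μ, |∫ y, f y * (k x y).toReal ∂μ| ≤ C * (∫⁻ y, k x y ∂μ).toReal := by
    filter_upwards [hinner, k_ae hk hfin] with x hx hx2
    have hCn : 0 ≤ C := (h0 x).trans (hC x)
    rw [abs_of_nonneg (hnn x)]
    have h1 := hx.1 ▸ hx.2
    rw [ENNReal.ofReal_le_iff_le_toReal (ENNReal.mul_ne_top (by simp) hx2)] at h1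
    rwa [ENNReal.toReal_mul, ENNReal.toReal_ofReal hCn] at h1
  have hintg : Integrable (fun x => ∫ y, f y * (k x y).toReal ∂μ) μ := by
    have hi : Integrable (fun x => (∫⁻ y, k x y ∂μ).toReal) μ :=
      integrable_toReal_of_lintegral_ne_top hm.aemeasurable (by simpa [HH] using hfin)
    refine (hi.const_mul C).mono' hsm ?_
    simpa using hbound
  refine ⟨?_, hintg, hbound⟩
  have hi2 : Integrable (fun x => f x * (∫ y, f y * (k x y).toReal ∂μ)) μ :=
      hintg.bdd_mul (c := C) hf.aestronglyMeasurable
        (Eventually.of_forall fun x => by rw [Real.norm_eq_abs, abs_of_nonneg (h0 x)]; exact hC x)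
  rw [ofReal_integral_eq_lintegral_ofReal hi2
    (Eventually.of_forall fun x => mul_nonneg (h0 x) (hnn x))]
  unfold HH
  refine lintegral_congr_ae ?_
  filter_upwards [hinner] with x hx
  rw [ENNReal.ofReal_mul (h0 x), ← hx.1, ← lintegral_const_mul]
  · refine lintegral_congr fun y => ?_
    ring
  · have := hk1 x
    fun_prop

lemma HH_cont (hk : Measurable (Function.uncurry k)) (hfin : HH μ k (fun _ => 1) ≠ ∞)
    {f : ℕ → X → ℝ} (hf : ∀ j, Measurable (f j)) {C : ℝ} (h0 : ∀ j x, 0 ≤ f j x)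
    (hC : ∀ j x, f j x ≤ C) {F : X → ℝ} (hF : Measurable F) (hF0 : ∀ x, 0 ≤ F x)
    (hFC : ∀ x, F x ≤ C)
    (hw : ∀ g : X → ℝ, Integrable g μ →
        Tendsto (fun j => ∫ x, f j x * g x ∂μ) atTop (𝓝 (∫ x, F x * g x ∂μ))) :
    Tendsto (fun j => HH μ k (fun x => ENNReal.ofReal (f j x))) atTop
      (𝓝 (HH μ k (fun x => ENNReal.ofReal (F x)))) := by
  have r := fun j => HH_real hk hfin (hf j) (h0 j) (hC j)
  have R := HH_real hk hfin hF hF0 hFC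
  have hk1 : ∀ x, Measurable (k x) := fun x => hk.comp measurable_prodMk_left
  simp only [R.1, (r _).1]
  refine ENNReal.tendsto_ofReal ?_
  set V : X → ℝ := fun x => ∫ y, F y * (k x y).toReal ∂μ with hV
  set v : ℕ → X → ℝ := fun j x => ∫ y, f j y * (k x y).toReal ∂μ with hv
  have hm : Measurable fun x => ∫⁻ y, k x y ∂μ :=
    Measurable.lintegral_prod_right' (f := fun q : X × X => k q.1 q.2) hk
  have hi : Integrable (fun x => (∫⁻ y, k x y ∂μ).toReal) μ :=
      integrable_toReal_of_lintegral_ne_top hm.aemeasurable (by simpa [HH] using hfin)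
  have hpt : ∀ᵐ x ∂μ, Tendsto (fun j => v j x) atTop (𝓝 (V x)) := by
    filter_upwards [k_ae hk hfin] with x hx
    exact hw _ (integrable_toReal_of_lintegral_ne_top (hk1 x).aemeasurable hx)
  have hb : ∀ u : X → ℝ, (∀ x, 0 ≤ u x) → (∀ x, u x ≤ C) → ∀ᵐ x ∂μ, ‖u x‖ ≤ C := by
    intro u h1 h2
    exact Eventually.of_forall fun x => by rw [Real.norm_eq_abs, abs_of_nonneg (h1 x)]; exact h2 x
  have d : Tendsto (fun j => ∫ x, f j x * (v j x - V x) ∂μ) atTop (𝓝 (∫ x, (0 : ℝ) ∂μ)) := by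
    refine tendsto_integral_of_dominated_convergence
      (fun x => C * (C * (∫⁻ y, k x y ∂μ).toReal + C * (∫⁻ y, k x y ∂μ).toReal)) ?_ ?_ ?_ ?_
    · intro j
      exact (hf j).aestronglyMeasurable.mul ((r j).2.1.1.sub R.2.1.1)
    · exact ((hi.const_mul C).add (hi.const_mul C)).const_mul C
    · intro j
      filter_upwards [(r j).2.2, R.2.2, hb _ (h0 j) (hC j)] with x h1 h2 h3
      rw [norm_mul]
      have : ‖v j x - V x‖ ≤ C * (∫⁻ y, k x y ∂μ).toReal + C * (∫⁻ y, k x y ∂μ).toReal :=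
        (norm_sub_le _ _).trans (add_le_add h1 h2)
      have hCn : 0 ≤ C := (norm_nonneg _).trans h3
      gcongr
    · filter_upwards [hpt] with x hx
      have h1 : Tendsto (fun j => v j x - V x) atTop (𝓝 0) := by
        have := hx.sub_const (V x); simpa using this
      refine squeeze_zero_norm (a := fun j => C * ‖v j x - V x‖) ?_ ?_
      · intro j
        rw [norm_mul, Real.norm_eq_abs, abs_of_nonneg (h0 j x)]
        gcongr
        exact hC j x
      · have := (h1.norm).const_mul C; simpa using this
  have d2 := d.add (hw V R.2.1)
  simp only [integral_zero, zero_add] at d2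
  refine d2.congr fun j => ?_
  rw [← integral_add]
  · congr 1; ext x; ring
  · exact ((r j).2.1.sub R.2.1).bdd_mul (c := C) (hf j).aestronglyMeasurable (hb _ (h0 j) (hC j))
  · exact R.2.1.bdd_mul (c := C) (hf j).aestronglyMeasurable (hb _ (h0 j) (hC j))

lemma pow_lsc {p : ℝ} (hp : 1 < p) 
    {f : ℕ → X → ℝ} (hf : ∀ j, Measurable (f j)) {C : ℝ} (h0 : ∀ j x, 0 ≤ f j x)
    (hC : ∀ j x, f j x ≤ C) {F : X → ℝ} (hF : Measurable F) (hF0 : ∀ x, 0 ≤ F x)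
    (hFC : ∀ x, F x ≤ C)
    (hw : ∀ g : X → ℝ, Integrable g μ →
        Tendsto (fun j => ∫ x, f j x * g x ∂μ) atTop (𝓝 (∫ x, F x * g x ∂μ)))
    {N : ℝ} (hN : ∀ j, ∫ x, f j x ^ p ∂μ ≤ N) : ∫ x, F x ^ p ∂μ ≤ N := by
  have hpq := Real.HolderConjugate.conjExponent hp
  set q := p.conjExponent
  have hp0 : 0 < p := by linarith
  have hib : ∀ (r : ℝ), 0 ≤ r → ∀ u : X → ℝ, Measurable u → (∀ x, 0 ≤ u x) → (∀ x, u x ≤ C) →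
      Integrable (fun x => u x ^ r) μ := by
    intro r hr u hu h1 h2
    refine (memLp_of_bdd (C := C ^ r) (by fun_prop) ?_ 1).integrable le_rfl
    intro x
    rw [abs_of_nonneg (Real.rpow_nonneg (h1 x) _)]
    exact Real.rpow_le_rpow (h1 x) (h2 x) hr
  have hg : Integrable (fun x => F x ^ (p - 1)) μ := hib _ (by linarith) F hF hF0 hFC
  have hFp : Integrable (fun x => F x ^ p) μ := hib _ hp0.le F hF hF0 hFC
  have h1 := hw _ hg
  have e : ∫ x, F x * F x ^ (p - 1) ∂μ = ∫ x, F x ^ p ∂μ := by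
    congr 1; ext x
    rcases (hF0 x).eq_or_lt with h | h
    · rw [← h, Real.zero_rpow hp0.ne']; simp
    · nth_rewrite 1 [← Real.rpow_one (F x)]
      rw [← Real.rpow_add h]; congr 1; ring
  rw [e] at h1
  have h2 : ∀ j, ∫ x, f j x * F x ^ (p - 1) ∂μ ≤ N / p + (∫ x, F x ^ p ∂μ) / q := by
    intro j
    have hfp : Integrable (fun x => f j x ^ p) μ := hib _ hp0.le _ (hf j) (h0 j) (hC j)
    calc ∫ x, f j x * F x ^ (p - 1) ∂μ ≤ ∫ x, (f j x ^ p / p + F x ^ p / q) ∂μ := by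
          refine integral_mono ?_ ((hfp.div_const p).add (hFp.div_const q)) fun x => ?_
          · exact hg.bdd_mul (c := C) (hf j).aestronglyMeasurable
              (Eventually.of_forall fun x => by
                rw [Real.norm_eq_abs, abs_of_nonneg (h0 j x)]; exact hC j x)
          · have := Real.young_inequality_of_nonneg (h0 j x) (Real.rpow_nonneg (hF0 x) (p - 1)) hpq
            rw [← Real.rpow_mul (hF0 x), hpq.sub_one_mul_conj] at this
            exact this
      _ = (∫ x, f j x ^ p ∂μ) / p + (∫ x, F x ^ p ∂μ) / q := by
          rw [integral_add (hfp.div_const p) (hFp.div_const q), integral_div, integral_div]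
      _ ≤ _ := by gcongr; exact hN j
  have h3 := le_of_tendsto' h1 h2
  have h4 := hpq.inv_add_inv_eq_one
  set A := ∫ x, F x ^ p ∂μ
  have h5 : A / q = A - A / p := by
    have : q⁻¹ = 1 - p⁻¹ := by linarith
    rw [div_eq_mul_inv, this, div_eq_mul_inv]; ring
  rw [h5] at h3
  have : A / p ≤ N / p := by linarith
  exact (div_le_div_iff_of_pos_right hp0).1 this

/-- existence of an optimal competitor -/
theorem exists_max (hk : Measurable (Function.uncurry k)) (hfin : HH μ k (fun _ => 1) ≠ ∞)
    {p : ℝ} (hp : 1 < p) {g : X → ℝ≥0∞} (hg : Measurable g) {C : ℝ} (hC0 : 0 ≤ C)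
    (hgC : ∀ x, g x ≤ ENNReal.ofReal C) :
    ∃ u : X → ℝ≥0∞, Measurable u ∧ (∀ x, u x ≤ ENNReal.ofReal C) ∧
      ∫⁻ x, u x ^ p ∂μ ≤ ∫⁻ x, g x ^ p ∂μ ∧ HH μ k g ≤ HH μ k u ∧
      ∀ u' : X → ℝ≥0∞, Measurable u' → (∀ x, u' x ≤ ENNReal.ofReal C) →
      ∫⁻ x, u' x ^ p ∂μ ≤ ∫⁻ x, g x ^ p ∂μ → HH μ k g ≤ HH μ k u' →
      ∫⁻ x, u' x ∂μ ≤ ∫⁻ x, u x ∂μ := by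
  have hp0 : 0 < p := by linarith
  let A : Set ℝ≥0∞ := {t | ∃ u : X → ℝ≥0∞, Measurable u ∧ (∀ x, u x ≤ ENNReal.ofReal C) ∧
      ∫⁻ x, u x ^ p ∂μ ≤ ∫⁻ x, g x ^ p ∂μ ∧ HH μ k g ≤ HH μ k u ∧ ∫⁻ x, u x ∂μ = t}
  have hA : A.Nonempty := ⟨_, g, hg, hgC, le_rfl, le_rfl, rfl⟩
  obtain ⟨t, -, ht, htA⟩ := exists_seq_tendsto_sSup hA (OrderTop.bddAbove A)
  choose u hum huC hup huH hut using htA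
  let f : ℕ → X → ℝ := fun j x => (u j x).toReal
  have hune : ∀ j x, u j x ≠ ∞ := fun j x => ((huC j x).trans_lt ENNReal.ofReal_lt_top).ne
  have hfu : ∀ j x, ENNReal.ofReal (f j x) = u j x := fun j x => ENNReal.ofReal_toReal (hune j x)
  have hf : ∀ j, Measurable (f j) := fun j => (hum j).ennreal_toReal
  have h0 : ∀ j x, 0 ≤ f j x := fun j x => ENNReal.toReal_nonneg
  have hC : ∀ j x, f j x ≤ C := fun j x => ENNReal.toReal_le_of_le_ofReal hC0 (huC j x)
  obtain ⟨F, hF, hF0, hFC, φ, hφ, hw⟩ := weak_cpt (μ := μ) f hf C h0 hC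
  have hgne : ∀ x, g x ≠ ∞ := fun x => ((hgC x).trans_lt ENNReal.ofReal_lt_top).ne
  have powr : ∀ v : X → ℝ, Measurable v → (∀ x, 0 ≤ v x) → (∀ x, v x ≤ C) → ∀ r : ℝ, 0 < r →
      ∫⁻ x, (ENNReal.ofReal (v x)) ^ r ∂μ = ENNReal.ofReal (∫ x, v x ^ r ∂μ) := by
    intro v hv hv0 hvC r hr
    rw [ofReal_integral_eq_lintegral_ofReal]
    · refine lintegral_congr fun x => ?_
      rw [ENNReal.ofReal_rpow_of_nonneg (hv0 x) hr.le]
    · refine (memLp_of_bdd (C := C ^ r) (by fun_prop) ?_ 1).integrable le_rfl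
      intro x
      rw [abs_of_nonneg (Real.rpow_nonneg (hv0 x) _)]
      exact Real.rpow_le_rpow (hv0 x) (hvC x) hr.le
    · exact Eventually.of_forall fun x => Real.rpow_nonneg (hv0 x) _
  have hgfin : ∫⁻ x, g x ^ p ∂μ ≠ ∞ := by
    have : ∫⁻ x, g x ^ p ∂μ ≤ ∫⁻ x, (ENNReal.ofReal C) ^ p ∂μ := by
      refine lintegral_mono fun x => ?_
      gcongr
      exact hgC x
    refine (this.trans_lt ?_).ne
    rw [lintegral_const]
    exact ENNReal.mul_lt_top (ENNReal.rpow_lt_top_of_nonneg hp0.le ENNReal.ofReal_ne_top)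
      (measure_lt_top _ _)
  have hFm : Measurable fun x => ENNReal.ofReal (F x) := by fun_prop
  have hlimI : Tendsto (fun j => ∫⁻ x, u (φ j) x ∂μ) atTop (𝓝 (∫⁻ x, ENNReal.ofReal (F x) ∂μ)) := by
    have h1 := hw (fun _ => 1) (integrable_const 1)
    simp only [mul_one] at h1
    have h2 := ENNReal.tendsto_ofReal h1
    have e := fun v hv hv0 hvC => powr v hv hv0 hvC 1 one_pos
    simp only [ENNReal.rpow_one, Real.rpow_one] at e
    rw [e F hF hF0 hFC]
    refine h2.congr fun j => ?_
    rw [← e _ (hf _) (h0 _) (hC _)]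
    exact lintegral_congr fun x => hfu _ _
  refine ⟨fun x => ENNReal.ofReal (F x), hFm, fun x => ENNReal.ofReal_le_ofReal (hFC x), ?_, ?_, ?_⟩
  · rw [powr F hF hF0 hFC p hp0]
    refine ENNReal.ofReal_le_of_le_toReal ?_
    refine pow_lsc hp (fun j => hf (φ j)) (fun j => h0 (φ j)) (fun j => hC (φ j)) hF hF0 hFC hw ?_
    intro j
    have h1 := hup (φ j)
    have h2 : ∫⁻ x, u (φ j) x ^ p ∂μ = ENNReal.ofReal (∫ x, f (φ j) x ^ p ∂μ) := by
      rw [← powr _ (hf _) (h0 _) (hC _) p hp0]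
      exact lintegral_congr fun x => by rw [hfu]
    rw [h2] at h1
    exact (ENNReal.ofReal_le_iff_le_toReal hgfin).1 h1
  · have h1 := HH_cont hk hfin (fun j => hf (φ j)) (fun j => h0 (φ j)) (fun j => hC (φ j)) hF hF0
      hFC hw
    refine ge_of_tendsto' h1 fun j => ?_
    simp only [hfu]
    exact huH (φ j)
  · intro u' h1 h2 h3 h4
    have h5 : ∫⁻ x, u' x ∂μ ≤ sSup A := le_sSup ⟨u', h1, h2, h3, h4, rfl⟩
    refine h5.trans (le_of_eq ?_)
    refine tendsto_nhds_unique (ht.comp hφ.tendsto_atTop) ?_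
    refine hlimI.congr fun j => ?_
    simp [hut]

end compactness2
end SFS

-- part 4
open MeasureTheory
open scoped ENNReal
set_option linter.unusedSectionVars false
set_option linter.unusedVariables false
namespace SFS
section refl
open EuclideanGeometry

/-- Euclidean space -/
abbrev EE (n : ℕ) := EuclideanSpace ℝ (Fin n)

variable {n : ℕ}

/-- bracket -/
noncomputable def J (x : EE n) : ℝ := 1 + ‖x‖ ^ 2

lemma J_pos (x : EE n) : 0 < J x := by unfold J; positivity
lemma J_ge (x : EE n) : 1 ≤ J x := by unfold J; nlinarith [sq_nonneg ‖x‖]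
lemma J_cont : Continuous (J : EE n → ℝ) := by unfold J; fun_prop

lemma measurable_inv (a : EE n) (r : ℝ) : Measurable (inversion a r) := by
  have : (inversion a r : EE n → EE n) = fun x => (r / dist x a) ^ 2 • (x - a) + a := by
    ext1 x; simp [inversion]
  rw [this]
  fun_prop

lemma inv_cov (hn : 1 ≤ n) (a : EE n) {r : ℝ} (hr : 0 < r) (g : EE n → ℝ≥0∞) :
    ∫⁻ x, ENNReal.ofReal ((r / dist x a) ^ (2 * n)) * g (inversion a r x) = ∫⁻ x, g x := by
  have : Nonempty (Fin n) := ⟨⟨0, hn⟩⟩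
  have h := lintegral_image_eq_lintegral_abs_det_fderiv_mul (volume : Measure (EE n))
    (s := {a}ᶜ) (f := inversion a r)
    (f' := fun x => ((r / dist x a) ^ 2 • ((Submodule.span ℝ {x - a})ᗮ.reflection : EE n →L[ℝ] EE n)))
    (measurableSet_singleton a).compl (fun x hx => (hasFDerivAt_inversion hx).hasFDerivWithinAt)
    ((inversion_injective a hr.ne').injOn) g
  have himg : inversion a r '' {a}ᶜ = {a}ᶜ := by
    rw [Set.image_compl_eq (inversion_bijective a hr.ne'), Set.image_singleton, inversion_self]
  have hae : (volume : Measure (EE n)).restrict {a}ᶜ = volume := by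
    rw [Measure.restrict_eq_self_of_ae_mem]
    exact compl_mem_ae_iff.2 (by simp)
  rw [himg, hae] at h
  rw [h]
  refine lintegral_congr fun x => ?_
  congr 2
  simp only [ContinuousLinearMap.det, ContinuousLinearMap.toLinearMap_smul, LinearMap.det_smul]
  rw [abs_mul, finrank_euclideanSpace_fin]
  have : |LinearMap.det (((Submodule.span ℝ {x - a})ᗮ.reflection : EE n →L[ℝ] EE n) : EE n →ₗ[ℝ] EE n)| = 1 := by
    have := Submodule.det_reflection (𝕜 := ℝ) ((Submodule.span ℝ {x - a})ᗮ)
    have h2 : |LinearMap.det ((Submodule.span ℝ {x - a})ᗮ.reflection.toLinearMap)| = 1 := by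
      rw [this]; simp
    exact h2
  rw [this, mul_one, ← pow_mul, abs_of_nonneg (by positivity)]

lemma ae_ne (hn : 1 ≤ n) (a : EE n) : ∀ᵐ x : EE n, x ≠ a := by
  have : Nonempty (Fin n) := ⟨⟨0, hn⟩⟩
  have h : ({a}ᶜ : Set (EE n)) ∈ ae volume := compl_mem_ae_iff.2 (by simp)
  exact h

variable (a : EE n) (r : ℝ)

/-- conformal factor -/
noncomputable def qf (x : EE n) : ℝ := r ^ 2 * J x / (dist x a ^ 2 * J (inversion a r x))

/-- normalized distance squared -/
noncomputable def dd (x y : EE n) : ℝ := ‖x - y‖ ^ 2 / (J x * J y)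

lemma dd_nonneg (x y : EE n) : 0 ≤ dd x y := by
  unfold dd; have := J_pos x; have := J_pos y; positivity

variable {a r}

lemma key1 (hr : 0 < r) {x : EE n} (hx : x ≠ a) (y : EE n) :
    ‖inversion a r x - y‖ ^ 2 * dist x a ^ 2 - r ^ 2 * ‖x - y‖ ^ 2
      = (r ^ 2 - dist x a ^ 2) * (r ^ 2 - dist y a ^ 2) := by
  obtain ⟨X, rfl⟩ : ∃ X, x = X + a := ⟨x - a, by simp⟩
  obtain ⟨Y, rfl⟩ : ∃ Y, y = Y + a := ⟨y - a, by simp⟩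
  have hX : ‖X‖ ≠ 0 := by simpa using hx
  have e1 : inversion a r (X + a) - (Y + a) = (r / ‖X‖) ^ 2 • X - Y := by
    simp [inversion, dist_eq_norm]
  have e2 : X + a - (Y + a) = X - Y := by abel
  rw [e1, e2, dist_eq_norm, dist_eq_norm, add_sub_cancel_right, add_sub_cancel_right,
    @norm_sub_sq_real, @norm_sub_sq_real, norm_smul, inner_smul_left, Real.norm_of_nonneg (by positivity)]
  simp only [conj_trivial]
  field_simp
  ring

lemma key2 (hr : 0 < r) {x : EE n} (hx : x ≠ a) :
    dist x a ^ 2 * J (inversion a r x) - r ^ 2 * J x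
      = (r ^ 2 - dist x a ^ 2) * (r ^ 2 - J a) := by
  have h := key1 hr hx 0
  simp only [sub_zero, dist_zero_left] at h
  unfold J
  linear_combination h

lemma qf_pos (hr : 0 < r) {x : EE n} (hx : x ≠ a) : 0 < qf a r x := by
  have := J_pos x; have := J_pos (inversion a r x)
  have : 0 < dist x a := dist_pos.2 hx
  unfold qf; positivity

lemma qf_inv (hr : 0 < r) {x : EE n} (hx : x ≠ a) : qf a r x * qf a r (inversion a r x) = 1 := by
  have h1 := J_pos x; have h2 := J_pos (inversion a r x)
  have h3 : 0 < dist x a := dist_pos.2 hx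
  unfold qf
  rw [inversion_inversion a hr.ne', dist_inversion_center]
  field_simp

lemma qf_lt_one (hr : 0 < r) {x : EE n} (hx : x ≠ a) :
    qf a r x < 1 ↔ 0 < (r ^ 2 - dist x a ^ 2) * (r ^ 2 - J a) := by
  have h1 := J_pos x; have h2 := J_pos (inversion a r x)
  have h3 : 0 < dist x a := dist_pos.2 hx
  rw [← key2 hr hx, sub_pos, qf, div_lt_one (by positivity)]

lemma one_lt_qf (hr : 0 < r) {x : EE n} (hx : x ≠ a) :
    1 < qf a r x ↔ (r ^ 2 - dist x a ^ 2) * (r ^ 2 - J a) < 0 := by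
  have h1 := J_pos x; have h2 := J_pos (inversion a r x)
  have h3 : 0 < dist x a := dist_pos.2 hx
  rw [← key2 hr hx, sub_neg, qf, one_lt_div (by positivity)]

lemma dd_inv_div (hr : 0 < r) {x : EE n} (hx : x ≠ a) (y : EE n) :
    dd (inversion a r x) y / qf a r x
      = ‖inversion a r x - y‖ ^ 2 * dist x a ^ 2 / (r ^ 2 * (J x * J y)) := by
  have h1 := J_pos x; have h2 := J_pos (inversion a r x)
  have h3 : 0 < dist x a := dist_pos.2 hx
  have h4 := J_pos y
  unfold dd qf
  field_simp

lemma dd_inv_inv (hr : 0 < r) {x y : EE n} (hx : x ≠ a) (hy : y ≠ a) :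
    dd (inversion a r x) (inversion a r y) / (qf a r x * qf a r y) = dd x y := by
  have h1 := J_pos x; have h2 := J_pos (inversion a r x)
  have h3 : 0 < dist x a := dist_pos.2 hx
  have h3' : 0 < dist y a := dist_pos.2 hy
  have h4 := J_pos y;  have h2 := J_pos (inversion a r y)
  unfold dd qf
  rw [← dist_eq_norm, dist_inversion_inversion hx hy, ← dist_eq_norm]
  field_simp

lemma dd_comm (x y : EE n) : dd x y = dd y x := by
  unfold dd; rw [norm_sub_rev, mul_comm]

lemma dd_S (hr : 0 < r) {x y : EE n} (hx : x ≠ a) (hy : y ≠ a) :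
    dd x (inversion a r y) / qf a r y = dd (inversion a r x) y / qf a r x := by
  rw [dd_comm, dd_inv_div hr hx, dd_inv_div hr hy]
  have h1 := key1 hr hx y
  have h2 := key1 hr hy x
  rw [norm_sub_rev y x] at h2
  have : ‖inversion a r x - y‖ ^ 2 * dist x a ^ 2 = ‖inversion a r y - x‖ ^ 2 * dist y a ^ 2 := by
    linear_combination h1 - h2
  rw [this, mul_comm (J x)]

lemma dd_sub (hr : 0 < r) {x y : EE n} (hx : x ≠ a) (hy : y ≠ a) :
    dd (inversion a r x) y / qf a r x - dd x y
      = (r ^ 2 - dist x a ^ 2) * (r ^ 2 - dist y a ^ 2) / (r ^ 2 * (J x * J y)) := by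
  rw [dd_inv_div hr hx, ← key1 hr hx, dd]
  have h1 := J_pos x; have h4 := J_pos y
  field_simp

/-- The kernel -/
noncomputable def ker (l : ℝ) (x y : EE n) : ℝ≥0∞ := ((ENNReal.ofReal (dd x y))⁻¹) ^ (l / 2)

/-- The conformal measure -/
noncomputable def mu (n : ℕ) : Measure (EE n) :=
  volume.withDensity fun x => ENNReal.ofReal (J x ^ (-(n : ℝ)))

lemma inv_mul_ofReal {d q : ℝ} (hd : 0 ≤ d) (hq : 0 < q) :
    (ENNReal.ofReal d)⁻¹ * ENNReal.ofReal q = (ENNReal.ofReal (d / q))⁻¹ := by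
  rw [ENNReal.ofReal_div_of_pos hq, ENNReal.inv_div (by simp) (by simp [hq]), div_eq_mul_inv, mul_comm]

lemma dd_cont : Continuous (Function.uncurry (dd : EE n → EE n → ℝ)) := by
  unfold dd Function.uncurry
  have := @J_cont n
  refine Continuous.div (by fun_prop) (by fun_prop) fun p => (mul_pos (J_pos _) (J_pos _)).ne'

lemma measurable_ker (l : ℝ) : Measurable (Function.uncurry (ker l : EE n → EE n → ℝ≥0∞)) := by
  have h : Measurable (Function.uncurry (dd : EE n → EE n → ℝ)) := dd_cont.measurable
  have : Function.uncurry (ker l : EE n → EE n → ℝ≥0∞)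
      = fun p => ((ENNReal.ofReal (Function.uncurry dd p))⁻¹) ^ (l / 2) := rfl
  rw [this]
  fun_prop

lemma measurable_qf : Measurable (qf a r : EE n → ℝ) := by
  have h1 := (@J_cont n).measurable
  have h2 := measurable_inv a r
  unfold qf
  fun_prop

lemma isConfRefl (hn : 1 ≤ n) {s : ℝ} (hs0 : 0 < s) (hsn : s < n) (hr : 0 < r) (hra : r ^ 2 ≠ J a) :
    IsConfRefl (mu n) (ker (n - s)) (2 * n / (n + s)) (inversion a r)
      (fun x => ENNReal.ofReal (qf a r x) ^ ((n + s) / 2))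
      (fun x => ENNReal.ofReal (qf a r x) ^ ((n - s) / 2)) {x | x ≠ a ∧ dist x a ≠ r} := by
  have : Nonempty (Fin n) := ⟨⟨0, hn⟩⟩
  have hn' : (1 : ℝ) ≤ n := by exact_mod_cast hn
  have hq0 : ∀ x : EE n, x ≠ a → ENNReal.ofReal (qf a r x) ≠ 0 := fun x hx => by
    simpa using qf_pos hr hx
  have hA : 0 < (n + s) / 2 := by linarith
  have hB : 0 < (n - s) / 2 := by linarith
  have hqm := @measurable_qf n a r
  have wlt : ∀ x ∈ {x : EE n | x ≠ a ∧ dist x a ≠ r}, ∀ c : ℝ, 0 < c →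
      (ENNReal.ofReal (qf a r x) ^ c < 1 ↔ 0 < (r ^ 2 - dist x a ^ 2) * (r ^ 2 - J a)) := by
    intro x hx c hc
    rw [← qf_lt_one hr hx.1, ← ENNReal.ofReal_lt_one, ← ENNReal.one_rpow c,
      ENNReal.rpow_lt_rpow_iff hc, ENNReal.one_rpow]
  have rd : ∀ x ∈ {x : EE n | x ≠ a ∧ dist x a ≠ r}, r ^ 2 - dist x a ^ 2 ≠ 0 := by
    intro x hx h
    exact hx.2 (by rw [sub_eq_zero, sq_eq_sq₀ hr.le dist_nonneg] at h; exact h.symm)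
  refine ⟨measurable_inv a r, by fun_prop, by fun_prop, ?_, inversion_inversion a hr.ne', ?_, ?_, ?_,
    ?_, ?_, ?_, ?_, ?_, ?_, ?_⟩
  · refine (withDensity_absolutelyContinuous volume _).ae_le ?_
    have h1 : ∀ᵐ x : EE n, x ≠ a := ae_ne hn a
    have h2 : ∀ᵐ x : EE n, x ∉ Metric.sphere a r :=
      compl_mem_ae_iff.2 (by simpa using Measure.addHaar_sphere volume a r)
    filter_upwards [h1, h2] with x h1 h2
    exact ⟨h1, h2⟩
  · rintro x ⟨hx, hd⟩
    refine ⟨by rwa [Ne, inversion_eq_center hr.ne'], ?_⟩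
    rw [dist_inversion_center]
    have h3 : 0 < dist x a := dist_pos.2 hx
    intro h
    apply hd
    field_simp at h
    exact h.symm
  · intro g hg
    have hJ := (@J_cont n).measurable
    have hI := measurable_inv a r
    unfold mu
    rw [lintegral_withDensity_eq_lintegral_mul _ (by fun_prop) (by fun_prop),
      lintegral_withDensity_eq_lintegral_mul _ (by fun_prop) hg]
    conv_rhs => rw [← inv_cov hn a hr]
    refine lintegral_congr_ae ?_
    have h1 : ∀ᵐ x : EE n, x ≠ a := ae_ne hn a
    filter_upwards [h1] with x hx
    simp only [Pi.mul_apply]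
    rw [← mul_assoc (ENNReal.ofReal ((r / dist x a) ^ (2 * n))), mul_left_comm, mul_comm (g _)]
    congr 1
    rw [← ENNReal.rpow_add _ _ (hq0 x hx) (by simp), show ((n : ℝ) + s) / 2 + (n - s) / 2 = n by ring,
      ENNReal.ofReal_rpow_of_pos (qf_pos hr hx), ← ENNReal.ofReal_mul (by have := J_pos x; positivity),
      ← ENNReal.ofReal_mul (by positivity)]
    congr 1
    have h1 := J_pos x; have h2 := J_pos (inversion a r x)
    have h3 : 0 < dist x a := dist_pos.2 hx
    rw [Real.rpow_neg h1.le, Real.rpow_neg h2.le, Real.rpow_natCast, Real.rpow_natCast,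
      Real.rpow_natCast, qf, pow_mul, ← inv_pow, ← inv_pow, ← mul_pow, ← mul_pow]
    congr 1
    field_simp
  · rintro x ⟨hx, -⟩
    rw [← ENNReal.mul_rpow_of_nonneg _ _ hA.le, ← ENNReal.ofReal_mul (qf_pos hr hx).le,
      qf_inv hr hx]
    simp
  · rintro x ⟨hx, -⟩
    rw [← ENNReal.rpow_add _ _ (hq0 x hx) (by simp), ← ENNReal.rpow_mul]
    congr 1
    field_simp
    ring
  · rintro x ⟨hx, -⟩
    exact (ENNReal.rpow_lt_top_of_nonneg hB.le (by simp)).ne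
  · intro x hx
    rcases lt_or_gt_of_ne (mul_ne_zero (rd x hx) (sub_ne_zero.2 hra)) with h | h
    · right
      have : 1 < ENNReal.ofReal (qf a r x) := by
        rw [ENNReal.one_lt_ofReal]; exact (one_lt_qf hr hx.1).2 h
      exact ⟨ENNReal.one_lt_rpow this hA, ENNReal.one_lt_rpow this hB⟩
    · left
      exact ⟨(wlt x hx _ hA).2 h, (wlt x hx _ hB).2 h⟩
  · rintro x ⟨hx, -⟩ y ⟨hy, -⟩
    simp only [ker]
    rw [← ENNReal.mul_rpow_of_nonneg _ _ hB.le, ← ENNReal.mul_rpow_of_nonneg _ _ hB.le,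
      inv_mul_ofReal (dd_nonneg _ _) (qf_pos hr hx),
      inv_mul_ofReal (div_nonneg (dd_nonneg _ _) (qf_pos hr hx).le) (qf_pos hr hy),
      div_div, dd_inv_inv hr hx hy]
  · rintro x ⟨hx, -⟩ y ⟨hy, -⟩
    simp only [ker]
    rw [← ENNReal.mul_rpow_of_nonneg _ _ hB.le, ← ENNReal.mul_rpow_of_nonneg _ _ hB.le,
      inv_mul_ofReal (dd_nonneg _ _) (qf_pos hr hx), inv_mul_ofReal (dd_nonneg _ _) (qf_pos hr hy),
      dd_S hr hx hy]
  · intro x hx y hy h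
    rw [wlt x hx _ hA, wlt y hy _ hA] at h
    simp only [ker]
    rw [← ENNReal.mul_rpow_of_nonneg _ _ hB.le, inv_mul_ofReal (dd_nonneg _ _) (qf_pos hr hx.1)]
    refine ENNReal.rpow_le_rpow (ENNReal.inv_le_inv.2 (ENNReal.ofReal_le_ofReal ?_)) hB.le
    rw [← sub_nonneg, dd_sub hr hx.1 hy.1]
    have h1 := J_pos x; have h4 := J_pos y
    refine div_nonneg ?_ (by positivity)
    rcases lt_or_gt_of_ne (rd x hx) with h5 | h5 <;> rcases lt_or_gt_of_ne (rd y hy) with h6 | h6 <;>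
    rcases lt_or_gt_of_ne (sub_ne_zero.2 hra) with h7 | h7 <;>
    · revert h
      generalize r ^ 2 - dist x a ^ 2 = A at *
      generalize r ^ 2 - dist y a ^ 2 = B at *
      generalize r ^ 2 - J a = C at *
      intro h
      simp only [mul_pos_iff] at h
      simp only [mul_nonneg_iff]
      grind
  · intro x hx y hy h
    rw [wlt x hx _ hA, wlt y hy _ hA] at h
    simp only [ker]
    rw [← ENNReal.mul_rpow_of_nonneg _ _ hB.le, inv_mul_ofReal (dd_nonneg _ _) (qf_pos hr hx.1)]
    refine ENNReal.rpow_le_rpow (ENNReal.inv_le_inv.2 (ENNReal.ofReal_le_ofReal ?_)) hB.le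
    rw [← sub_nonpos, dd_sub hr hx.1 hy.1]
    have h1 := J_pos x; have h4 := J_pos y
    refine div_nonpos_of_nonpos_of_nonneg ?_ (by positivity)
    rcases lt_or_gt_of_ne (rd x hx) with h5 | h5 <;> rcases lt_or_gt_of_ne (rd y hy) with h6 | h6 <;>
    rcases lt_or_gt_of_ne (sub_ne_zero.2 hra) with h7 | h7 <;>
    · revert h
      generalize r ^ 2 - dist x a ^ 2 = A at *
      generalize r ^ 2 - dist y a ^ 2 = B at *
      generalize r ^ 2 - J a = C at *
      intro h
      simp only [mul_pos_iff] at h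
      simp only [mul_nonpos_iff]
      grind

end refl
end SFS

-- part 5
open MeasureTheory
open scoped ENNReal
set_option linter.unusedSectionVars false
set_option linter.unusedVariables false
namespace SFS
section const
open EuclideanGeometry
variable {n : ℕ}

lemma ae_affine {F : Type*} [NormedAddCommGroup F] [NormedSpace ℝ F] [MeasurableSpace F]
    [BorelSpace F] [FiniteDimensional ℝ F] (μ : Measure F) [μ.IsAddHaarMeasure] {c : ℝ} (hc : c ≠ 0)
    (b : F) {p : F → Prop} (hp : ∀ᵐ x ∂μ, p x) : ∀ᵐ x ∂μ, p (c • x + b) := by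
  have h1 : Measure.QuasiMeasurePreserving (fun x : F => c • x) μ μ := by
    refine ⟨measurable_const_smul c, ?_⟩
    rw [Measure.map_addHaar_smul μ hc]
    exact Measure.smul_absolutelyContinuous
  have h2 := (measurePreserving_add_right μ b).quasiMeasurePreserving.comp h1
  exact h2.ae hp

lemma mu_ae_iff {p : EE n → Prop} : (∀ᵐ x ∂(mu n), p x) ↔ ∀ᵐ x, p x := by
  have hJ := (@J_cont n).measurable
  constructor
  · intro h
    refine (withDensity_absolutelyContinuous' (by fun_prop) ?_).ae_le h
    refine Filter.Eventually.of_forall fun x => ?_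
    exact (ENNReal.ofReal_pos.2 (Real.rpow_pos_of_pos (J_pos x) _)).ne'
  · intro h
    exact (withDensity_absolutelyContinuous volume _).ae_le h

lemma ae_const_of_polarized (hn : 1 ≤ n) {A : ℝ} (hA : 0 < A) {u : EE n → ℝ≥0∞} (hu : Measurable u)
    (hut : ∀ x, u x ≠ ∞)
    (h : ∀ (a : EE n) (r : ℝ), 0 < r → r ^ 2 ≠ J a → ∀ᵐ x, ENNReal.ofReal (qf a r x) ^ A < 1 →
      u (inversion a r x) * ENNReal.ofReal (qf a r x) ^ A ≤ u x) :
    ∃ c, c ≠ ∞ ∧ ∀ᵐ x, u x = c := by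
  have hJ := (@J_cont n).measurable
  let Q : EE n → EE n → ℝ → Prop := fun x y κ =>
    ENNReal.ofReal (κ ^ 2 * J x / J y) ^ A < 1 →
      u y * ENNReal.ofReal (κ ^ 2 * J x / J y) ^ A ≤ u x
  have hQm : MeasurableSet {z : EE n × EE n × ℝ | Q z.1 z.2.1 z.2.2} := by
    refine measurableSet_setOfPred.2 (Measurable.imp ?_ ?_)
    · exact measurableSet_setOfPred.1 (measurableSet_lt (by fun_prop) (by fun_prop))
    · exact measurableSet_setOfPred.1 (measurableSet_le (by fun_prop) (by fun_prop))
  -- step 1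
  have s1 : ∀ z : EE n × ℝ, ∀ᵐ x : EE n, 0 < z.2 → z.2 ^ 2 ≠ J z.1 →
      Q x (inversion z.1 z.2 x) (z.2 / dist x z.1) := by
    rintro ⟨a, r⟩
    by_cases hr : 0 < r
    swap
    · exact Filter.Eventually.of_forall fun x h => absurd h hr
    by_cases hra : r ^ 2 = J a
    · exact Filter.Eventually.of_forall fun x _ h => absurd hra h
    filter_upwards [h a r hr hra] with x hx _ _
    have : (r / dist x a) ^ 2 * J x / J (inversion a r x) = qf a r x := by
      unfold qf
      rw [div_pow, div_mul_eq_mul_div, div_div]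
    simp only [Q, this]
    exact hx
  have s2 : ∀ᵐ x : EE n, ∀ᵐ z : EE n × ℝ, 0 < z.2 → z.2 ^ 2 ≠ J z.1 →
      Q x (inversion z.1 z.2 x) (z.2 / dist x z.1) := by
    refine (Measure.ae_ae_comm (μ := (volume : Measure (EE n × ℝ))) (ν := (volume : Measure (EE n)))
      (p := fun z x => 0 < z.2 → z.2 ^ 2 ≠ J z.1 →
      Q x (inversion z.1 z.2 x) (z.2 / dist x z.1)) ?_).1 (Filter.Eventually.of_forall s1)
    refine measurableSet_setOfPred.2 (Measurable.imp ?_ (Measurable.imp ?_ ?_))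
    · exact measurableSet_setOfPred.1 (measurableSet_lt (by fun_prop) (by fun_prop))
    · exact measurableSet_setOfPred.1 (measurableSet_eq_fun (by fun_prop) (by fun_prop)).compl
    · have : Measurable (fun z : (EE n × ℝ) × EE n =>
        ((z.2, inversion z.1.1 z.1.2 z.2, z.1.2 / dist z.2 z.1.1) : EE n × EE n × ℝ)) := by
        simp only [inversion]
        simp only [vsub_eq_sub, vadd_eq_add]
        fun_prop
      exact measurableSet_setOfPred.1 (this hQm)
  have s3 : ∀ᵐ x : EE n, ∀ᵐ a : EE n, ∀ᵐ κ : ℝ, 0 < κ → Q x (κ ^ 2 • (x - a) + a) κ := by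
    filter_upwards [s2] with x hx
    rw [Measure.volume_eq_prod] at hx
    filter_upwards [Measure.ae_ae_of_ae_prod hx, ae_ne hn x] with a ha hax
    have hd : 0 < dist x a := dist_pos.2 hax.symm
    have h1 := ae_affine volume hd.ne' 0 ha
    have h2 : ∀ᵐ κ : ℝ, κ ≠ √(J a) / dist x a := by
      have h : ({√(J a) / dist x a}ᶜ : Set ℝ) ∈ ae volume := compl_mem_ae_iff.2 (by simp)
      exact h
    filter_upwards [h1, h2] with κ h1 h2 hκ
    simp only [smul_eq_mul, add_zero] at h1
    have h3 := h1 (by positivity) ?_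
    · have e : dist x a * κ / dist x a = κ := by field_simp
      have e2 : inversion a (dist x a * κ) x = κ ^ 2 • (x - a) + a := by
        simp [inversion, e]
      rw [e, e2] at h3
      exact h3
    · intro h3
      apply h2
      rw [← h3, Real.sqrt_sq (by positivity)]
      field_simp
  have s4 : ∀ᵐ x : EE n, ∀ᵐ y : EE n, ∀ᵐ κ : ℝ, 0 < κ → Q x y κ := by
    filter_upwards [s3] with x hx
    have m1 : MeasurableSet {z : EE n × ℝ | 0 < z.2 → Q x (z.2 ^ 2 • (x - z.1) + z.1) z.2} := by
      refine measurableSet_setOfPred.2 (Measurable.imp ?_ ?_)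
      · exact measurableSet_setOfPred.1 (measurableSet_lt (by fun_prop) (by fun_prop))
      · have : Measurable (fun z : EE n × ℝ =>
          ((x, z.2 ^ 2 • (x - z.1) + z.1, z.2) : EE n × EE n × ℝ)) := by fun_prop
        exact measurableSet_setOfPred.1 (this hQm)
    have h1 := (Measure.ae_ae_comm (p := fun a κ => 0 < κ → Q x (κ ^ 2 • (x - a) + a) κ) m1).1 hx
    have m2 : MeasurableSet {z : ℝ × EE n | 0 < z.1 → Q x z.2 z.1} := by
      refine measurableSet_setOfPred.2 (Measurable.imp ?_ ?_)
      · exact measurableSet_setOfPred.1 (measurableSet_lt (by fun_prop) (by fun_prop))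
      · have : Measurable (fun z : ℝ × EE n =>
          ((x, z.2, z.1) : EE n × EE n × ℝ)) := by fun_prop
        exact measurableSet_setOfPred.1 (this hQm)
    refine (Measure.ae_ae_comm (p := fun κ y => 0 < κ → Q x y κ) m2).1 ?_
    have h2 : ∀ᵐ κ : ℝ, κ ≠ 1 := by
      have h : ({1}ᶜ : Set ℝ) ∈ ae volume := compl_mem_ae_iff.2 (by simp)
      exact h
    filter_upwards [h1, h2] with κ hκ hκ1
    by_cases hκ0 : 0 < κ
    swap
    · exact Filter.Eventually.of_forall fun x h => absurd h hκ0
    have hc : 1 - κ ^ 2 ≠ 0 := by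
      intro h
      have : κ = 1 := by nlinarith
      exact hκ1 this
    have h3 := ae_affine volume (inv_ne_zero hc) (-((1 - κ ^ 2)⁻¹ * κ ^ 2) • x) hκ
    filter_upwards [h3] with y hy _
    have e : κ ^ 2 • (x - ((1 - κ ^ 2)⁻¹ • y + (-((1 - κ ^ 2)⁻¹ * κ ^ 2)) • x)) +
      ((1 - κ ^ 2)⁻¹ • y + (-((1 - κ ^ 2)⁻¹ * κ ^ 2)) • x) = y := by
      ext i
      simp
      field_simp
      ring
    have h4 := hy hκ0
    rw [e] at h4
    exact h4
  have s5 : ∀ᵐ x : EE n, ∀ᵐ y : EE n, u y ≤ u x := by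
    filter_upwards [s4] with x hx
    filter_upwards [hx] with y hy
    have hx0 := J_pos x
    have hy0 := J_pos y
    set κ0 := √(J y / J x) with hκ0
    have hκp : 0 < κ0 := by positivity
    have hd := Measure.dense_of_ae hy
    have hf : ∃ᶠ κ in nhds κ0, κ ∈ Set.Iio κ0 ∩ {κ | 0 < κ → Q x y κ} := by
      rw [← mem_closure_iff_frequently]
      have := hd.open_subset_closure_inter (isOpen_Iio (a := κ0))
      have h2 := closure_minimal this isClosed_closure
      apply h2
      simp
    have hlim : Filter.Tendsto (fun κ : ℝ => u y * ENNReal.ofReal (κ ^ 2 * J x / J y) ^ A)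
        (nhds κ0) (nhds (u y * 1)) := by
      refine ENNReal.Tendsto.const_mul ?_ (Or.inr (hut y))
      have : ENNReal.ofReal (κ0 ^ 2 * J x / J y) ^ A = 1 := by
        rw [hκ0, Real.sq_sqrt (by positivity)]
        field_simp
        simp
      rw [← this]
      have hc : Continuous (fun κ : ℝ => κ ^ 2 * J x / J y) := by fun_prop
      exact (ENNReal.continuous_rpow_const.comp (ENNReal.continuous_ofReal.comp hc)).tendsto κ0
    rw [mul_one] at hlim
    refine le_of_tendsto_of_frequently hlim ?_
    refine (hf.and_eventually (lt_mem_nhds hκp)).mono ?_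
    rintro κ ⟨⟨h1, h2⟩, h3⟩
    refine h2 h3 ?_
    refine ENNReal.rpow_lt_one ?_ hA
    rw [ENNReal.ofReal_lt_one, div_lt_one hy0, ← lt_div_iff₀ hx0]
    exact (Real.lt_sqrt h3.le).1 h1
  have s6 : ∀ᵐ x : EE n, ∀ᵐ y : EE n, u x ≤ u y := by
    refine (Measure.ae_ae_comm (p := fun x y => u y ≤ u x) ?_).1 s5
    exact measurableSet_le (by fun_prop) (by fun_prop)
  obtain ⟨x0, h1, h2⟩ := (s5.and s6).exists
  refine ⟨u x0, hut _, ?_⟩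
  filter_upwards [h1, h2] with x h1 h2
  exact le_antisymm h1 h2

theorem HLS_bdd (hn : 1 ≤ n) {s : ℝ} (hs0 : 0 < s) (hsn : s < n) (hM : mu n Set.univ ≠ ∞)
    (hfin : HH (mu n) (ker (n - s)) (fun _ => 1) ≠ ∞) {g : EE n → ℝ≥0∞} (hg : Measurable g)
    {C : ℝ} (hC0 : 0 ≤ C) (hgC : ∀ x, g x ≤ ENNReal.ofReal C) :
    HH (mu n) (ker (n - s)) g * mu n Set.univ ^ ((n + s) / n) ≤
      HH (mu n) (ker (n - s)) (fun _ => 1) * (∫⁻ x, g x ^ (2 * n / (n + s)) ∂(mu n)) ^ ((n + s) / n) := by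
  have hn' : (1 : ℝ) ≤ n := by exact_mod_cast hn
  have : IsFiniteMeasure (mu n) := ⟨hM.lt_top⟩
  have hp : 1 < 2 * n / (n + s) := by
    rw [one_lt_div (by linarith)]; linarith
  obtain ⟨u, hum, huC, hup, huH, hmax⟩ := exists_max (measurable_ker _) hfin hp hg hC0 hgC
  have hut : ∀ x, u x ≠ ∞ := fun x => ne_top_of_le_ne_top (by simp) (huC x)
  have hpol : ∀ (a : EE n) (r : ℝ), 0 < r → r ^ 2 ≠ J a → ∀ᵐ x,
      ENNReal.ofReal (qf a r x) ^ ((n + s) / 2) < 1 →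
      u (inversion a r x) * ENNReal.ofReal (qf a r x) ^ ((n + s) / 2) ≤ u x := by
    intro a r hr hra
    have hR := isConfRefl hn hs0 hsn hr hra
    refine mu_ae_iff.1 (polarized_of_max hR hum ?_ hut ?_)
    · refine ne_top_of_le_ne_top ?_ (lintegral_mono huC)
      rw [lintegral_const]
      exact ENNReal.mul_ne_top (by simp) hM
    · refine hmax _ (hR.measurable_pol hum) (pol_le hR huC) ?_ ?_
      · rw [lint_pow_pol hR (by linarith) hum]; exact hup
      · exact huH.trans (HH_pol_ge hR (measurable_ker _) hum)
  obtain ⟨c, hct, hc⟩ := ae_const_of_polarized hn (by linarith : 0 < ((n : ℝ) + s) / 2) hum hut hpol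
  have hc' := mu_ae_iff.2 hc
  have e1 : ∫⁻ x, u x ^ (2 * n / (n + s)) ∂(mu n) = c ^ (2 * n / (n + s)) * mu n Set.univ := by
    rw [← lintegral_const]
    refine lintegral_congr_ae ?_
    filter_upwards [hc'] with x hx
    rw [hx]
  have e2 : HH (mu n) (ker (n - s)) u = c ^ 2 * HH (mu n) (ker (n - s)) (fun _ => 1) := by
    unfold HH
    rw [← lintegral_const_mul' _ _ (by finiteness)]
    refine lintegral_congr_ae ?_
    filter_upwards [hc'] with x hx
    rw [← lintegral_const_mul' _ _ (by finiteness)]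
    refine lintegral_congr_ae ?_
    filter_upwards [hc'] with y hy
    rw [hx, hy]; ring
  rw [e1] at hup
  rw [e2] at huH
  calc _ ≤ c ^ 2 * HH (mu n) (ker (n - s)) (fun _ => 1) * mu n Set.univ ^ ((n + s) / n) := by gcongr
    _ = HH (mu n) (ker (n - s)) (fun _ => 1) * (c ^ 2 * mu n Set.univ ^ ((n + s) / n)) := by ring
    _ = HH (mu n) (ker (n - s)) (fun _ => 1) * (c ^ (2 * n / (n + s)) * mu n Set.univ) ^ ((n + s) / n) := by
      rw [ENNReal.mul_rpow_of_nonneg _ _ (by positivity), ← ENNReal.rpow_mul]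
      congr 2
      have : (2 * (n : ℝ) / (n + s) * ((n + s) / n)) = (2 : ℕ) := by
        field_simp; norm_num
      rw [this, ENNReal.rpow_natCast]
    _ ≤ _ := by gcongr
end const
end SFS

-- part 6
open MeasureTheory
open scoped ENNReal
set_option linter.unusedSectionVars false
set_option linter.unusedVariables false
namespace SFS
section consts
open EuclideanGeometry
open Real (Gamma pi exp)
variable {n : ℕ}

lemma lint_gauss {b : ℝ} (hb : 0 < b) :
    ∫⁻ x : EE n, ENNReal.ofReal (exp (-b * ‖x‖ ^ 2)) = ENNReal.ofReal ((Real.pi / b) ^ ((n : ℝ) / 2)) := by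
  have h := GaussianFourier.integral_rexp_neg_mul_sq_norm (V := EE n) hb
  rw [finrank_euclideanSpace_fin] at h
  rw [← h, ofReal_integral_eq_lintegral_ofReal]
  · by_contra hc
    rw [integral_undef hc] at h
    have : 0 < (Real.pi / b) ^ ((n : ℝ) / 2) := by have := Real.pi_pos; positivity
    linarith
  · exact Filter.Eventually.of_forall fun x => (Real.exp_pos _).le

lemma lint_gamma {a b : ℝ} (ha : 0 < a) (hb : 0 < b) :
    ∫⁻ t in Set.Ioi (0 : ℝ), ENNReal.ofReal (t ^ (a - 1) * exp (-(b * t))) = ENNReal.ofReal (Gamma a * b ^ (-a)) := by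
  have h := Real.integral_rpow_mul_exp_neg_mul_Ioi ha hb
  have h2 : (1 / b) ^ a * Gamma a = Gamma a * b ^ (-a) := by
    rw [one_div, Real.inv_rpow hb.le, Real.rpow_neg hb.le, mul_comm]
  rw [h2] at h
  have hp : 0 < Gamma a * b ^ (-a) := mul_pos (Real.Gamma_pos_of_pos ha) (Real.rpow_pos_of_pos hb _)
  rw [← h, ofReal_integral_eq_lintegral_ofReal]
  · by_contra hc
    rw [integral_undef hc] at h
    linarith
  · filter_upwards [ae_restrict_mem measurableSet_Ioi] with t ht
    exact mul_nonneg (Real.rpow_nonneg (le_of_lt ht) _) (Real.exp_pos _).le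

/-- value of the Japanese bracket integral -/
noncomputable def IJ (n : ℕ) (a : ℝ) : ℝ := Real.pi ^ ((n : ℝ) / 2) * Gamma (a - n / 2) / Gamma a

lemma IJ_pos {a : ℝ} (ha : (n : ℝ) / 2 < a) : 0 < IJ n a := by
  unfold IJ
  have h0 : (0 : ℝ) ≤ (n : ℝ) / 2 := by positivity
  have := Real.pi_pos
  have := Real.Gamma_pos_of_pos (by linarith : 0 < a)
  have := Real.Gamma_pos_of_pos (by linarith : 0 < a - n / 2)
  positivity

lemma lint_J {a : ℝ} (ha : (n : ℝ) / 2 < a) :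
    ∫⁻ x : EE n, ENNReal.ofReal (J x ^ (-a)) = ENNReal.ofReal (IJ n a) := by
  have h0 : (0 : ℝ) ≤ (n : ℝ) / 2 := by positivity
  have ha0 : 0 < a := by linarith
  have hG := Real.Gamma_pos_of_pos ha0
  have hJ := (@J_cont n).measurable
  have e1 : ENNReal.ofReal (Gamma a) * ∫⁻ x : EE n, ENNReal.ofReal (J x ^ (-a)) =
      ENNReal.ofReal (Real.pi ^ ((n : ℝ) / 2) * Gamma (a - n / 2)) := by
    rw [← lintegral_const_mul _ (by fun_prop)]
    calc _ = ∫⁻ x : EE n, ∫⁻ t in Set.Ioi (0 : ℝ), ENNReal.ofReal (t ^ (a - 1) * exp (-(J x * t))) := by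
          refine lintegral_congr fun x => ?_
          rw [lint_gamma ha0 (J_pos x), ENNReal.ofReal_mul hG.le]
      _ = ∫⁻ t in Set.Ioi (0 : ℝ), ∫⁻ x : EE n, ENNReal.ofReal (t ^ (a - 1) * exp (-(J x * t))) := by
          rw [lintegral_lintegral_swap]
          refine Measurable.aemeasurable ?_
          simp only [Function.uncurry_def]
          fun_prop
      _ = ∫⁻ t in Set.Ioi (0 : ℝ), ENNReal.ofReal (Real.pi ^ ((n : ℝ) / 2)) *
            ENNReal.ofReal (t ^ (a - n / 2 - 1) * exp (-(1 * t))) := by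
          refine setLIntegral_congr_fun measurableSet_Ioi fun t ht => ?_
          have ht : 0 < t := ht
          have : ∀ x : EE n, ENNReal.ofReal (t ^ (a - 1) * exp (-(J x * t))) =
              ENNReal.ofReal (t ^ (a - 1) * exp (-t)) * ENNReal.ofReal (exp (-t * ‖x‖ ^ 2)) := by
            intro x
            rw [← ENNReal.ofReal_mul (by positivity), mul_assoc, ← Real.exp_add]
            congr 3
            unfold J; ring
          simp only [this]
          rw [lintegral_const_mul _ (by fun_prop), lint_gauss ht, ← ENNReal.ofReal_mul (by positivity),
            ← ENNReal.ofReal_mul (by positivity)]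
          congr 1
          rw [Real.div_rpow Real.pi_pos.le ht.le, show a - n / 2 - 1 = (a - 1) - n / 2 by ring,
            Real.rpow_sub ht (a - 1), one_mul]
          ring
      _ = _ := by
          rw [lintegral_const_mul _ (by fun_prop), lint_gamma (by linarith) one_pos,
            ← ENNReal.ofReal_mul (by have := Real.pi_pos; positivity), Real.one_rpow, mul_one]
  have e2 : ENNReal.ofReal (Gamma a) * ENNReal.ofReal (IJ n a) =
      ENNReal.ofReal (Real.pi ^ ((n : ℝ) / 2) * Gamma (a - n / 2)) := by
    rw [← ENNReal.ofReal_mul hG.le, IJ]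
    congr 1
    field_simp
  rw [← e2] at e1
  exact (ENNReal.mul_right_inj (by simpa using hG) (by simp)).1 e1

lemma mu_univ (hn : 1 ≤ n) : mu n Set.univ = ENNReal.ofReal (IJ n n) := by
  have hn' : (1 : ℝ) ≤ n := by exact_mod_cast hn
  rw [mu, withDensity_apply _ MeasurableSet.univ, Measure.restrict_univ, lint_J (by linarith)]

lemma measurable_ker_right (l : ℝ) (x : EE n) : Measurable (fun y => ker l x y) := by
  have h : Continuous (fun y : EE n => dd x y) := by
    unfold dd
    have := @J_cont n
    refine Continuous.div (by fun_prop) (by fun_prop) fun p => (mul_pos (J_pos _) (J_pos _)).ne'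
  have hm := h.measurable
  unfold ker
  fun_prop

lemma ker_pot (hn : 1 ≤ n) {s : ℝ} (hs0 : 0 < s) (hsn : s < n) (x : EE n) :
    ∫⁻ y, ker (n - s) x y ∂(mu n) = ENNReal.ofReal (IJ n ((n + s) / 2)) := by
  have hJ := (@J_cont n).measurable
  have hx0 := J_pos x
  have hr : 0 < √(J x) := Real.sqrt_pos.2 hx0
  have hr2 : √(J x) ^ 2 = J x := Real.sq_sqrt hx0.le
  have hkm : Measurable (fun y => ker (n - s) x y) := measurable_ker_right _ x
  rw [mu, lintegral_withDensity_eq_lintegral_mul _ (by fun_prop) hkm, ← inv_cov hn x hr,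
    ← lint_J (by linarith)]
  refine lintegral_congr_ae ?_
  filter_upwards [ae_ne hn x] with z hz
  have hz0 := J_pos z
  have hi0 := J_pos (inversion x √(J x) z)
  have hd : 0 < dist z x := dist_pos.2 hz
  have k := key2 hr hz
  rw [hr2, sub_self, mul_zero, sub_eq_zero] at k
  have e1 : dd x (inversion x √(J x) z) = (J z)⁻¹ := by
    unfold dd
    rw [← dist_eq_norm, dist_comm, dist_inversion_center, hr2, div_pow, div_div]
    have : dist z x ^ 2 * (J x * J (inversion x √(J x) z)) = J x ^ 2 * J z := by
      rw [mul_left_comm, k]; ring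
    rw [this]
    field_simp
  simp only [Pi.mul_apply, ker]
  rw [e1, ENNReal.ofReal_inv_of_pos hz0, inv_inv, ENNReal.ofReal_rpow_of_pos hz0,
    ← ENNReal.ofReal_mul (by positivity), ← ENNReal.ofReal_mul (by positivity)]
  congr 1
  have e2 : (√(J x) / dist z x) ^ (2 * n) * J (inversion x √(J x) z) ^ (-(n : ℝ)) = J z ^ (-(n : ℝ)) := by
    rw [Real.rpow_neg hi0.le, Real.rpow_neg hz0.le, Real.rpow_natCast, Real.rpow_natCast, pow_mul,
      ← inv_pow, ← inv_pow, ← mul_pow, div_pow, hr2]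
    congr 1
    rw [← div_eq_mul_inv, div_div, k]
    field_simp
  rw [← mul_assoc, e2, ← Real.rpow_add hz0]
  congr 1
  ring

lemma HH_one (hn : 1 ≤ n) {s : ℝ} (hs0 : 0 < s) (hsn : s < n) :
    HH (mu n) (ker (n - s)) (fun _ => 1) = ENNReal.ofReal (IJ n ((n + s) / 2)) * ENNReal.ofReal (IJ n n) := by
  unfold HH
  simp only [one_mul, ker_pot hn hs0 hsn]
  rw [lintegral_const, mu_univ hn]

/-- Riesz kernel -/
noncomputable def RK (l : ℝ) (x y : EE n) : ℝ≥0∞ := ((ENNReal.ofReal (‖x - y‖ ^ 2))⁻¹) ^ (l / 2)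

theorem HLS_leb (hn : 1 ≤ n) {s : ℝ} (hs0 : 0 < s) (hsn : s < n) {f : EE n → ℝ≥0∞} (hf : Measurable f)
    {C : ℝ} (hC0 : 0 ≤ C) (hfC : ∀ x, f x ≤ ENNReal.ofReal (C * J x ^ (-((n + s) / 2)))) :
    (∫⁻ x, ∫⁻ y, f x * f y * RK (n - s) x y) * ENNReal.ofReal (IJ n n) ^ ((n + s) / n) ≤
      ENNReal.ofReal (IJ n ((n + s) / 2)) * ENNReal.ofReal (IJ n n) *
        (∫⁻ x, f x ^ (2 * n / (n + s))) ^ ((n + s) / n) := by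
  have hn' : (1 : ℝ) ≤ n := by exact_mod_cast hn
  have hJ := (@J_cont n).measurable
  let g : EE n → ℝ≥0∞ := fun x => f x * ENNReal.ofReal (J x ^ ((n + s) / 2))
  have hg : Measurable g := by fun_prop
  have h := HLS_bdd hn hs0 hsn (by rw [mu_univ hn]; simp) (by
    rw [HH_one hn hs0 hsn]; exact ENNReal.mul_ne_top (by simp) (by simp)) hg hC0 (fun x => by
      have hx0 := J_pos x
      calc g x ≤ ENNReal.ofReal (C * J x ^ (-((n + s) / 2))) * ENNReal.ofReal (J x ^ ((n + s) / 2)) := by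
            simp only [g]; gcongr; exact hfC x
        _ = ENNReal.ofReal C := by
          rw [← ENNReal.ofReal_mul (by positivity), mul_assoc, ← Real.rpow_add hx0]
          simp)
  rw [HH_one hn hs0 hsn, mu_univ hn] at h
  convert h using 2
  · unfold HH mu
    have hkm := @measurable_ker n (n - s)
    rw [lintegral_withDensity_eq_lintegral_mul _ (by fun_prop)]
    swap
    · refine Measurable.lintegral_prod_right' (f := fun p : EE n × EE n => g p.1 * g p.2 * ker (n - s) p.1 p.2) ?_
      exact Measurable.mul (by fun_prop) hkm
    refine lintegral_congr fun x => ?_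
    have hkx : Measurable (fun y => ker (n - s) x y) := measurable_ker_right _ x
    simp only [Pi.mul_apply]
    rw [lintegral_withDensity_eq_lintegral_mul _ (by fun_prop) (by fun_prop), ← lintegral_const_mul' _ _ (by simp)]
    refine lintegral_congr fun y => ?_
    have hx0 := J_pos x
    have hy0 := J_pos y
    have hB : 0 < (n - s) / 2 := by linarith
    have e1 : ker (n - s) x y = RK (n - s) x y * ENNReal.ofReal (J x ^ ((n - s) / 2)) * ENNReal.ofReal (J y ^ ((n - s) / 2)) := by
      unfold ker RK dd
      rw [← ENNReal.ofReal_rpow_of_pos hx0, ← ENNReal.ofReal_rpow_of_pos hy0,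
        ← ENNReal.mul_rpow_of_nonneg _ _ hB.le, ← ENNReal.mul_rpow_of_nonneg _ _ hB.le, mul_assoc,
        ← ENNReal.ofReal_mul hx0.le, inv_mul_ofReal (by positivity) (by positivity)]
    have e2 : ∀ z : EE n, ENNReal.ofReal (J z ^ (-(n : ℝ))) * ENNReal.ofReal (J z ^ ((n + s) / 2)) *
        ENNReal.ofReal (J z ^ ((n - s) / 2)) = 1 := by
      intro z
      have hz := J_pos z
      rw [← ENNReal.ofReal_mul (by positivity), ← ENNReal.ofReal_mul (by positivity),
        ← Real.rpow_add hz, ← Real.rpow_add hz]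
      ring_nf
      simp
    simp only [Pi.mul_apply, g]
    rw [e1]
    calc _ = f x * f y * RK (n - s) x y * 1 * 1 := by ring
      _ = f x * f y * RK (n - s) x y * (ENNReal.ofReal (J x ^ (-(n : ℝ))) * ENNReal.ofReal (J x ^ ((n + s) / 2)) *
        ENNReal.ofReal (J x ^ ((n - s) / 2))) * (ENNReal.ofReal (J y ^ (-(n : ℝ))) * ENNReal.ofReal (J y ^ ((n + s) / 2)) *
        ENNReal.ofReal (J y ^ ((n - s) / 2))) := by rw [e2, e2]
      _ = _ := by ring
  · congr 1
    unfold mu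
    rw [lintegral_withDensity_eq_lintegral_mul _ (by fun_prop) (by fun_prop)]
    refine lintegral_congr fun x => ?_
    have hx0 := J_pos x
    simp only [Pi.mul_apply, g]
    rw [ENNReal.mul_rpow_of_nonneg _ _ (by positivity), ENNReal.ofReal_rpow_of_pos (by positivity),
      ← Real.rpow_mul hx0.le, mul_left_comm, ← ENNReal.ofReal_mul (by positivity), ← Real.rpow_add hx0]
    have : -(n : ℝ) + (n + s) / 2 * (2 * n / (n + s)) = 0 := by
      field_simp; ring
    rw [this]
    simp
end consts
end SFS

-- part 7
open MeasureTheory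
open scoped ENNReal
set_option linter.unusedSectionVars false
set_option linter.unusedVariables false
namespace SFS
section fourier
open EuclideanGeometry
open scoped FourierTransform
open Real (Gamma pi exp)
variable {n : ℕ}

lemma flip1 {f g : EE n → ℂ} (hf : Integrable f) (hg : Integrable g) :
    ∫ ξ, 𝓕 f ξ * g ξ = ∫ x, f x * 𝓕 g x := by
  simpa using! VectorFourier.integral_fourierIntegral_smul_eq_flip (L := innerₗ (EE n))
    Real.continuous_fourierChar continuous_inner hf hg

lemma flip2 {f g : EE n → ℂ} (hf : Integrable f) (hg : Integrable g) :
    ∫ ξ, inner ℂ (𝓕 f ξ) (g ξ) = ∫ x, inner ℂ (f x) (𝓕⁻ g x) := by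
  simpa using! VectorFourier.integral_sesq_fourierIntegral_eq_neg_flip (innerSL ℂ) (L := innerₗ (EE n))
    Real.continuous_fourierChar continuous_inner hf hg

lemma fourier_cont {f : EE n → ℂ} (hf : Integrable f) : Continuous (𝓕 f) :=
  VectorFourier.fourierIntegral_continuous Real.continuous_fourierChar continuous_inner hf

lemma fourier_bdd (f : EE n → ℂ) (ξ : EE n) : ‖𝓕 f ξ‖ ≤ ∫ x, ‖f x‖ :=
  VectorFourier.norm_fourierIntegral_le_integral_norm _ _ _ _ _

lemma integrable_gauss {b : ℝ} (hb : 0 < b) : Integrable (fun x : EE n => exp (-b * ‖x‖ ^ 2)) := by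
  have h := GaussianFourier.integral_rexp_neg_mul_sq_norm (V := EE n) hb
  by_contra hc
  rw [integral_undef hc] at h
  have : 0 < (Real.pi / b) ^ ((Module.finrank ℝ (EE n) : ℝ) / 2) := by have := Real.pi_pos; positivity
  linarith

lemma gauss_smooth {g : EE n → ℂ} (hg : Integrable g) {b : ℝ} (hb : 0 < b) :
    ∫⁻ ξ, ‖𝓕 g ξ‖ₑ ^ 2 * ENNReal.ofReal (exp (-b * ‖ξ‖ ^ 2)) ≤
      ∫⁻ x, ∫⁻ y, ‖g x‖ₑ * ‖g y‖ₑ * ENNReal.ofReal ((Real.pi / b) ^ ((n : ℝ) / 2) *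
        exp (-Real.pi ^ 2 * ‖x - y‖ ^ 2 / b)) := by
  have hgc := fourier_cont hg
  have hFi : Integrable (fun ξ => 𝓕 g ξ * (exp (-b * ‖ξ‖ ^ 2) : ℂ)) := by
    refine (integrable_gauss hb).ofReal.bdd_mul hgc.aestronglyMeasurable
      (Filter.Eventually.of_forall (fourier_bdd g))
  have hInt : Integrable (fun ξ => ‖𝓕 g ξ‖ ^ 2 * exp (-b * ‖ξ‖ ^ 2)) := by
    refine (integrable_gauss hb).bdd_mul (c := (∫ x, ‖g x‖) ^ 2) (by fun_prop)
      (Filter.Eventually.of_forall fun ξ => ?_)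
    rw [norm_pow, norm_norm]
    gcongr
    exact fourier_bdd g ξ
  have e1 : ((∫ ξ, ‖𝓕 g ξ‖ ^ 2 * exp (-b * ‖ξ‖ ^ 2) : ℝ) : ℂ) =
      ∫ ξ, inner ℂ (𝓕 g ξ) (𝓕 g ξ * (exp (-b * ‖ξ‖ ^ 2) : ℂ)) := by
    rw [← integral_complex_ofReal]
    refine integral_congr_ae (Filter.Eventually.of_forall fun ξ => ?_)
    have h1 : (𝓕 g ξ * (exp (-b * ‖ξ‖ ^ 2) : ℂ)) = (exp (-b * ‖ξ‖ ^ 2) : ℂ) • 𝓕 g ξ := by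
      rw [smul_eq_mul, mul_comm]
    simp only [h1]
    rw [inner_smul_right, inner_self_eq_norm_sq_to_K, mul_comm]
    push_cast
    rfl
  have e2 : ∀ x, 𝓕⁻ (fun ξ => 𝓕 g ξ * (exp (-b * ‖ξ‖ ^ 2) : ℂ)) x =
      ∫ y, g y * (((Real.pi / b) ^ ((n : ℝ) / 2) * exp (-Real.pi ^ 2 * ‖x - y‖ ^ 2 / b) : ℝ) : ℂ) := by
    intro x
    have J := GaussianFourier.integrable_cexp_neg_mul_sq_norm_add (V := EE n) (b := (b : ℂ))
      (by simpa using hb) (2 * Real.pi * Complex.I) x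
    have h := flip1 hg J
    have hg' := fourier_gaussian_innerProductSpace' (V := EE n) (b := (b : ℂ)) (by simpa using hb) x
    simp only [hg'] at h
    rw [Real.fourierInv_eq']
    convert h using 1
    · refine integral_congr_ae (Filter.Eventually.of_forall fun ξ => ?_)
      simp only [smul_eq_mul]
      rw [mul_left_comm]
      congr 1
      push_cast
      rw [← Complex.exp_add]
      congr 1
      rw [real_inner_comm]
      ring
    · refine integral_congr_ae (Filter.Eventually.of_forall fun y => ?_)
      simp only
      congr 1
      rw [finrank_euclideanSpace_fin]
      push_cast
      congr 1
      rw [Complex.ofReal_cpow (by have := Real.pi_pos; positivity)]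
      push_cast
      rfl
  have e3 : ENNReal.ofReal (∫ ξ, ‖𝓕 g ξ‖ ^ 2 * exp (-b * ‖ξ‖ ^ 2)) =
      ∫⁻ ξ, ‖𝓕 g ξ‖ₑ ^ 2 * ENNReal.ofReal (exp (-b * ‖ξ‖ ^ 2)) := by
    rw [ofReal_integral_eq_lintegral_ofReal hInt (Filter.Eventually.of_forall fun ξ => by
      show 0 ≤ _; positivity)]
    refine lintegral_congr fun ξ => ?_
    rw [ENNReal.ofReal_mul (by positivity), ENNReal.ofReal_pow (by positivity), ofReal_norm]
  have e4 : ENNReal.ofReal (∫ ξ, ‖𝓕 g ξ‖ ^ 2 * exp (-b * ‖ξ‖ ^ 2)) =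
      ‖((∫ ξ, ‖𝓕 g ξ‖ ^ 2 * exp (-b * ‖ξ‖ ^ 2) : ℝ) : ℂ)‖ₑ := by
    rw [← ofReal_norm, Complex.norm_real, Real.norm_of_nonneg]
    exact integral_nonneg fun ξ => by positivity
  rw [← e3, e4, e1, flip2 hg hFi]
  refine (enorm_integral_le_lintegral_enorm _).trans ?_
  refine lintegral_mono fun x => ?_
  have e5 : ‖inner ℂ (g x) (𝓕⁻ (fun ξ => 𝓕 g ξ * (exp (-b * ‖ξ‖ ^ 2) : ℂ)) x)‖ₑ =
      ‖g x‖ₑ * ‖𝓕⁻ (fun ξ => 𝓕 g ξ * (exp (-b * ‖ξ‖ ^ 2) : ℂ)) x‖ₑ := by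
    simp [RCLike.inner_apply, enorm_mul, mul_comm]
  rw [e5, e2]
  refine (mul_le_mul_right (enorm_integral_le_lintegral_enorm _) _).trans ?_
  rw [← lintegral_const_mul' _ _ (by simp)]
  refine lintegral_mono fun y => ?_
  rw [enorm_mul, mul_assoc]
  refine le_of_eq ?_
  congr 2
  rw [← ofReal_norm, Complex.norm_real, Real.norm_of_nonneg]
  have := Real.pi_pos; positivity

lemma lint_gamma_inv {a b : ℝ} (ha : 0 < a) (hb : 0 < b) :
    ∫⁻ t in Set.Ioi (0 : ℝ), ENNReal.ofReal (t ^ (-a - 1) * exp (-(b / t))) = ENNReal.ofReal (Gamma a * b ^ (-a)) := by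
  rw [← lint_gamma ha hb]
  have himg : (fun t : ℝ => t⁻¹) '' Set.Ioi 0 = Set.Ioi 0 := by
    ext t; simp
  have h := lintegral_image_eq_lintegral_abs_deriv_mul (f := fun t : ℝ => t⁻¹) (f' := fun t => -(t ^ 2)⁻¹)
    measurableSet_Ioi (s := Set.Ioi 0)
    (fun t ht => (hasDerivAt_inv (ne_of_gt ht)).hasDerivWithinAt) (inv_injective.injOn)
    (fun t => ENNReal.ofReal (t ^ (-a - 1) * exp (-(b / t))))
  rw [himg] at h
  rw [h]
  refine setLIntegral_congr_fun measurableSet_Ioi fun t ht => ?_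
  have ht : 0 < t := ht
  rw [← ENNReal.ofReal_mul (by positivity), abs_neg, abs_of_pos (by positivity), div_inv_eq_mul, ← mul_assoc]
  congr 2
  rw [Real.inv_rpow ht.le, ← Real.rpow_neg ht.le, ← Real.rpow_natCast, ← Real.rpow_neg ht.le, ← Real.rpow_add ht]
  congr 1
  push_cast
  ring

/-- The Riesz constant -/
noncomputable def cR (n : ℕ) (s : ℝ) : ℝ := (4 * Real.pi) ^ (-((n : ℝ) / 2)) * (4 ^ ((n - s) / 2) * Gamma ((n - s) / 2))

lemma cR_pos {s : ℝ} (hsn : s < n) : 0 < cR n s := by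
  unfold cR
  have := Real.pi_pos
  have := Real.Gamma_pos_of_pos (by linarith : 0 < ((n : ℝ) - s) / 2)
  positivity

theorem riesz_le (hn : 1 ≤ n) {s : ℝ} (hs0 : 0 < s) (hsn : s < n) {g : EE n → ℂ} (hg : Integrable g)
    (hgm : Measurable g) :
    ENNReal.ofReal (Gamma (s / 2)) * ∫⁻ ξ, ENNReal.ofReal ((2 * Real.pi * ‖ξ‖) ^ (-s)) * ‖𝓕 g ξ‖ₑ ^ 2 ≤
      ENNReal.ofReal (cR n s) * ∫⁻ x, ∫⁻ y, ‖g x‖ₑ * ‖g y‖ₑ * RK (n - s) x y := by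
  have hpi := Real.pi_pos
  have hgc := (fourier_cont hg).measurable
  have hB : 0 < ((n : ℝ) - s) / 2 := by linarith
  have hA : 0 < s / 2 := by linarith
  have hGA := Real.Gamma_pos_of_pos hA
  have hRKm : Measurable (fun p : EE n × EE n => RK (n - s) p.1 p.2) := by
    unfold RK; fun_prop
  calc _ = ∫⁻ ξ, ∫⁻ t in Set.Ioi (0 : ℝ), ENNReal.ofReal (t ^ (s / 2 - 1)) *
        (‖𝓕 g ξ‖ₑ ^ 2 * ENNReal.ofReal (exp (-(4 * Real.pi ^ 2 * t) * ‖ξ‖ ^ 2))) := by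
        rw [← lintegral_const_mul _ (by fun_prop)]
        refine lintegral_congr_ae ?_
        filter_upwards [ae_ne hn 0] with ξ hξ
        have hξ0 : 0 < ‖ξ‖ := norm_pos_iff.2 hξ
        have h := lint_gamma hA (by positivity : 0 < (2 * Real.pi * ‖ξ‖) ^ 2)
        rw [← Real.rpow_natCast, ← Real.rpow_mul (by positivity)] at h
        have e : ((2 : ℕ) : ℝ) * -(s / 2) = -s := by push_cast; ring
        rw [e] at h
        rw [← mul_assoc, ← ENNReal.ofReal_mul hGA.le, ← h, ← lintegral_mul_const' _ _ (by simp)]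
        refine setLIntegral_congr_fun measurableSet_Ioi fun t ht => ?_
        have ht : 0 < t := ht
        rw [ENNReal.ofReal_mul (by positivity), mul_assoc, mul_comm (‖𝓕 g ξ‖ₑ ^ 2)]
        congr 4
        push_cast
        rw [Real.rpow_ofNat]; ring
    _ = ∫⁻ t in Set.Ioi (0 : ℝ), ∫⁻ ξ, ENNReal.ofReal (t ^ (s / 2 - 1)) *
        (‖𝓕 g ξ‖ₑ ^ 2 * ENNReal.ofReal (exp (-(4 * Real.pi ^ 2 * t) * ‖ξ‖ ^ 2))) := by
        rw [lintegral_lintegral_swap]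
        refine Measurable.aemeasurable ?_
        simp only [Function.uncurry_def]
        fun_prop
    _ ≤ ∫⁻ t in Set.Ioi (0 : ℝ), ∫⁻ x, ∫⁻ y, ENNReal.ofReal (t ^ (s / 2 - 1)) *
        (‖g x‖ₑ * ‖g y‖ₑ * ENNReal.ofReal ((Real.pi / (4 * Real.pi ^ 2 * t)) ^ ((n : ℝ) / 2) *
        exp (-Real.pi ^ 2 * ‖x - y‖ ^ 2 / (4 * Real.pi ^ 2 * t)))) := by
        refine setLIntegral_mono' measurableSet_Ioi fun t ht => ?_
        have ht : 0 < t := ht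
        rw [lintegral_const_mul _ (by fun_prop)]
        refine (mul_le_mul_right (gauss_smooth hg (by positivity)) _).trans (le_of_eq ?_)
        rw [← lintegral_const_mul' _ _ (by simp)]
        refine lintegral_congr fun x => ?_
        rw [← lintegral_const_mul' _ _ (by simp)]
    _ = ∫⁻ x, ∫⁻ y, ∫⁻ t in Set.Ioi (0 : ℝ), ENNReal.ofReal (t ^ (s / 2 - 1)) *
        (‖g x‖ₑ * ‖g y‖ₑ * ENNReal.ofReal ((Real.pi / (4 * Real.pi ^ 2 * t)) ^ ((n : ℝ) / 2) *
        exp (-Real.pi ^ 2 * ‖x - y‖ ^ 2 / (4 * Real.pi ^ 2 * t)))) := by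
        rw [lintegral_lintegral_swap]
        · refine lintegral_congr fun x => ?_
          rw [lintegral_lintegral_swap]
          refine Measurable.aemeasurable ?_
          simp only [Function.uncurry_def]
          fun_prop
        · refine Measurable.aemeasurable ?_
          simp only [Function.uncurry_def]
          refine Measurable.lintegral_prod_right' (f := fun p : (ℝ × EE n) × EE n =>
            ENNReal.ofReal (p.1.1 ^ (s / 2 - 1)) *
        (‖g p.1.2‖ₑ * ‖g p.2‖ₑ * ENNReal.ofReal ((Real.pi / (4 * Real.pi ^ 2 * p.1.1)) ^ ((n : ℝ) / 2) *
        exp (-Real.pi ^ 2 * ‖p.1.2 - p.2‖ ^ 2 / (4 * Real.pi ^ 2 * p.1.1))))) ?_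
          fun_prop
    _ ≤ ∫⁻ x, ∫⁻ y, ENNReal.ofReal (cR n s) * (‖g x‖ₑ * ‖g y‖ₑ * RK (n - s) x y) := by
        refine lintegral_mono fun x => lintegral_mono_ae ?_
        filter_upwards [ae_ne hn x] with y hy
        have hd : 0 < ‖x - y‖ := norm_pos_iff.2 (sub_ne_zero.2 hy.symm)
        have e : ∀ t ∈ Set.Ioi (0 : ℝ), ENNReal.ofReal (t ^ (s / 2 - 1)) *
          (‖g x‖ₑ * ‖g y‖ₑ * ENNReal.ofReal ((Real.pi / (4 * Real.pi ^ 2 * t)) ^ ((n : ℝ) / 2) *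
          exp (-Real.pi ^ 2 * ‖x - y‖ ^ 2 / (4 * Real.pi ^ 2 * t)))) =
          (‖g x‖ₑ * ‖g y‖ₑ * ENNReal.ofReal ((4 * Real.pi) ^ (-((n : ℝ) / 2)))) *
            ENNReal.ofReal (t ^ (-((n - s) / 2) - 1) * exp (-((‖x - y‖ ^ 2 / 4) / t))) := by
          intro t ht
          have ht : 0 < t := ht
          rw [mul_left_comm, mul_assoc (‖g x‖ₑ * ‖g y‖ₑ), ← ENNReal.ofReal_mul (by positivity),
            ← ENNReal.ofReal_mul (by positivity)]
          congr 2
          have e1 : Real.pi / (4 * Real.pi ^ 2 * t) = ((4 * Real.pi) * t)⁻¹ := by field_simp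
          have e2 : -Real.pi ^ 2 * ‖x - y‖ ^ 2 / (4 * Real.pi ^ 2 * t) = -((‖x - y‖ ^ 2 / 4) / t) := by
            field_simp
          rw [e1, e2, Real.inv_rpow (by positivity), ← Real.rpow_neg (by positivity),
            Real.mul_rpow (by positivity) ht.le, show -(((n : ℝ) - s) / 2) - 1 = (s / 2 - 1) + -((n : ℝ) / 2) by ring,
            Real.rpow_add ht]
          ring
        rw [setLIntegral_congr_fun measurableSet_Ioi e, lintegral_const_mul _ (by fun_prop),
          lint_gamma_inv hB (by positivity), mul_left_comm, mul_assoc (‖g x‖ₑ * ‖g y‖ₑ), RK,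
          ← ENNReal.ofReal_inv_of_pos (by positivity), ENNReal.ofReal_rpow_of_pos (by positivity),
          ← ENNReal.ofReal_mul (by positivity), ← ENNReal.ofReal_mul (cR_pos hsn).le]
        refine le_of_eq ?_
        congr 2
        unfold cR
        rw [Real.div_rpow (by positivity) (by positivity), Real.inv_rpow (by positivity),
          Real.rpow_neg (by norm_num : (0 : ℝ) ≤ 4) ((n - s) / 2), ← Real.rpow_neg (by positivity)]
        field_simp
        rw [← Real.rpow_add (by positivity), ← Real.rpow_add (by positivity)]
        simp
    _ = _ := by
        rw [← lintegral_const_mul' _ _ (by simp)]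
        refine lintegral_congr fun x => ?_
        rw [← lintegral_const_mul' _ _ (by simp)]
end fourier
end SFS

-- part 8
open MeasureTheory
open scoped ENNReal
set_option linter.unusedSectionVars false
set_option linter.unusedVariables false
namespace SFS
section ineq
open scoped FourierTransform
open Real (Gamma pi exp)
variable {n : ℕ}

lemma sch_bound {s : ℝ} (hs0 : 0 < s) (hsn : s < n) (f : SchwartzMap (EE n) ℝ) :
    ∃ C : ℝ, 0 < C ∧ ∀ x, |f x| ≤ C * J x ^ (-(((n : ℝ) - s) / 2)) := by
  refine ⟨2 ^ n * ((Finset.Iic (n, 0)).sup (fun m => SchwartzMap.seminorm ℝ m.1 m.2) f : ℝ) + 1, ?_, fun x => ?_⟩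
  · have := apply_nonneg ((Finset.Iic (n, 0)).sup (fun m => SchwartzMap.seminorm ℝ m.1 m.2)) f
    positivity
  · have h := SchwartzMap.one_add_le_sup_seminorm_apply (𝕜 := ℝ) (m := (n, 0)) le_rfl le_rfl f x
    rw [norm_iteratedFDeriv_zero, Real.norm_eq_abs] at h
    have hJ := J_pos x
    rw [Real.rpow_neg hJ.le, ← div_eq_mul_inv, le_div_iff₀ (by positivity), mul_comm]
    refine le_trans ?_ (h.trans (by linarith))
    gcongr
    have h1 : J x ≤ (1 + ‖x‖) ^ 2 := by unfold J; nlinarith [norm_nonneg x]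
    calc J x ^ (((n : ℝ) - s) / 2) ≤ ((1 + ‖x‖) ^ 2) ^ (((n : ℝ) - s) / 2) := by
          apply Real.rpow_le_rpow hJ.le h1; linarith
      _ = (1 + ‖x‖) ^ ((n : ℝ) - s) := by
          rw [← Real.rpow_natCast, ← Real.rpow_mul (by positivity)]; congr 1; push_cast; ring
      _ ≤ (1 + ‖x‖) ^ (n : ℝ) := by
          apply Real.rpow_le_rpow_of_exponent_le <;> [linarith [norm_nonneg x]; linarith]
      _ = _ := Real.rpow_natCast _ _

lemma sob_integrable {s : ℝ} (hs0 : 0 < s) (hsn : s < n) (Φ : SchwartzMap (EE n) ℂ) :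
    Integrable (fun ξ => (2 * Real.pi * ‖ξ‖) ^ s * ‖𝓕 (Φ : EE n → ℂ) ξ‖ ^ 2) := by
  have hF : 𝓕 (Φ : EE n → ℂ) = (𝓕 Φ : SchwartzMap (EE n) ℂ) := (SchwartzMap.fourier_coe Φ).symm
  rw [hF]
  set Ψ : SchwartzMap (EE n) ℂ := 𝓕 Φ
  have i0 := Ψ.integrable_pow_mul (volume : Measure (EE n)) 0
  have i1 := Ψ.integrable_pow_mul (volume : Measure (EE n)) n
  set C := (SchwartzMap.seminorm ℝ 0 0 Ψ : ℝ)
  have hC : ∀ ξ, ‖Ψ ξ‖ ≤ C := fun ξ => SchwartzMap.norm_le_seminorm ℝ Ψ ξ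
  have hpi := Real.pi_pos
  refine ((i0.add i1).const_mul ((2 * Real.pi) ^ s * C)).mono' ?_ (Filter.Eventually.of_forall fun ξ => ?_)
  · refine AEStronglyMeasurable.mul (Measurable.aestronglyMeasurable (by fun_prop)) ?_
    exact (Ψ.continuous.norm.pow 2).aestronglyMeasurable
  · rw [Real.norm_of_nonneg (by positivity), Real.mul_rpow (by positivity) (by positivity)]
    have h1 : ‖ξ‖ ^ s ≤ 1 + ‖ξ‖ ^ n := by
      rcases le_total ‖ξ‖ 1 with h | h
      · have := Real.rpow_le_one (norm_nonneg ξ) h hs0.le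
        have : 0 ≤ ‖ξ‖ ^ n := by positivity
        linarith
      · have := Real.rpow_le_rpow_of_exponent_le h hsn.le
        rw [Real.rpow_natCast] at this; linarith
    have h2 : ‖Ψ ξ‖ ^ 2 ≤ C * ‖Ψ ξ‖ := by
      rw [sq]; exact mul_le_mul_of_nonneg_right (hC ξ) (norm_nonneg _)
    have hC0 : 0 ≤ C := (norm_nonneg _).trans (hC ξ)
    simp only [Pi.add_apply, pow_zero, one_mul]
    calc _ ≤ (2 * Real.pi) ^ s * (1 + ‖ξ‖ ^ n) * (C * ‖Ψ ξ‖) := by gcongr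
      _ = _ := by ring

lemma sob_lint {s : ℝ} (hs0 : 0 < s) (hsn : s < n) (Φ : SchwartzMap (EE n) ℂ) :
    ENNReal.ofReal (∫ ξ, (2 * Real.pi * ‖ξ‖) ^ s * ‖𝓕 (Φ : EE n → ℂ) ξ‖ ^ 2) =
      ∫⁻ ξ, ENNReal.ofReal ((2 * Real.pi * ‖ξ‖) ^ s) * ‖𝓕 (Φ : EE n → ℂ) ξ‖ₑ ^ 2 := by
  have hpi := Real.pi_pos
  rw [ofReal_integral_eq_lintegral_ofReal (sob_integrable hs0 hsn Φ)
    (Filter.Eventually.of_forall fun ξ => by positivity)]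
  refine lintegral_congr fun ξ => ?_
  rw [ENNReal.ofReal_mul (by positivity), ENNReal.ofReal_pow (norm_nonneg _), ofReal_norm]

lemma dual_bound (hn : 1 ≤ n) {s : ℝ} (hs0 : 0 < s) (hsn : s < n) (Φ : SchwartzMap (EE n) ℂ)
    {g : EE n → ℂ} (hg : Integrable g) :
    ‖∫ x, Φ x * g x‖ₑ ^ 2 ≤
      (∫⁻ ξ, ENNReal.ofReal ((2 * Real.pi * ‖ξ‖) ^ s) * ‖𝓕 (Φ : EE n → ℂ) ξ‖ₑ ^ 2) *
      ∫⁻ ξ, ENNReal.ofReal ((2 * Real.pi * ‖ξ‖) ^ (-s)) * ‖𝓕 g ξ‖ₑ ^ 2 := by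
  have hpi := Real.pi_pos
  set Ψ : SchwartzMap (EE n) ℂ := 𝓕⁻ Φ with hΨ
  have hgc := (fourier_cont hg).measurable
  have hF : 𝓕 (Ψ : EE n → ℂ) = Φ := by
    rw [← SchwartzMap.fourier_coe, hΨ, FourierTransform.fourier_fourierInv_eq]
  have hΨ2 : ∀ ξ, Ψ ξ = 𝓕 (Φ : EE n → ℂ) (-ξ) := by
    intro ξ
    rw [hΨ, SchwartzMap.fourierInv_coe, Real.fourierInv_eq_fourier_neg]
  have e1 : ∫ x, Φ x * g x = ∫ ξ, Ψ ξ * 𝓕 g ξ := by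
    rw [← hF]; exact flip1 Ψ.integrable hg
  have e2 : ∫⁻ ξ, ENNReal.ofReal ((2 * Real.pi * ‖ξ‖) ^ s) * ‖𝓕 (Φ : EE n → ℂ) ξ‖ₑ ^ 2 =
      ∫⁻ ξ, ENNReal.ofReal ((2 * Real.pi * ‖ξ‖) ^ s) * ‖Ψ ξ‖ₑ ^ 2 := by
    rw [← lintegral_neg_eq_self]
    simp only [norm_neg, hΨ2]
  rw [e1, e2]
  have h0 : ‖∫ ξ, Ψ ξ * 𝓕 g ξ‖ₑ ≤ ∫⁻ ξ,
      ((fun ξ => ENNReal.ofReal ((2 * Real.pi * ‖ξ‖) ^ (s / 2)) * ‖Ψ ξ‖ₑ) *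
      (fun ξ => ENNReal.ofReal ((2 * Real.pi * ‖ξ‖) ^ (-(s / 2))) * ‖𝓕 g ξ‖ₑ)) ξ := by
    refine (enorm_integral_le_lintegral_enorm _).trans (le_of_eq ?_)
    refine lintegral_congr_ae ?_
    filter_upwards [ae_ne hn 0] with ξ hξ
    have : 0 < ‖ξ‖ := norm_pos_iff.2 hξ
    rw [enorm_mul, Pi.mul_apply, mul_mul_mul_comm, ← ENNReal.ofReal_mul (by positivity),
      ← Real.rpow_add (by positivity)]
    simp
  have h1 := h0.trans (ENNReal.lintegral_mul_le_Lp_mul_Lq volume Real.HolderConjugate.two_two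
    (by have := Ψ.continuous.measurable; fun_prop) (by fun_prop))
  have h2 : ∀ (a : ℝ) (u : EE n → ℝ≥0∞), ∫⁻ ξ, (ENNReal.ofReal ((2 * Real.pi * ‖ξ‖) ^ (a / 2)) * u ξ) ^ (2 : ℝ)
      = ∫⁻ ξ, ENNReal.ofReal ((2 * Real.pi * ‖ξ‖) ^ a) * u ξ ^ 2 := by
    intro a u
    refine lintegral_congr fun ξ => ?_
    rw [ENNReal.mul_rpow_of_nonneg _ _ (by norm_num), ENNReal.ofReal_rpow_of_nonneg (by positivity) (by norm_num),
      ← Real.rpow_mul (by positivity)]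
    congr 1
    · congr 2; ring
    · rw [← ENNReal.rpow_natCast]; norm_num
  have h3 := h2 (-s) (fun ξ => ‖𝓕 g ξ‖ₑ)
  rw [neg_div] at h3
  rw [h2 s, h3] at h1
  calc _ ≤ _ := pow_le_pow_left' h1 2
    _ = _ := by
      rw [mul_pow, ← ENNReal.rpow_natCast, ← ENNReal.rpow_natCast, ← ENNReal.rpow_mul, ← ENNReal.rpow_mul]
      norm_num

end ineq
end SFS

-- part 9
open MeasureTheory
open scoped ENNReal
set_option linter.unusedSectionVars false
set_option linter.unusedVariables false
namespace SFS
section ineq2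
open scoped FourierTransform
open Real (Gamma pi exp)
variable {n : ℕ}

/-- The surface measure of the unit sphere in dimension `n + 1`. -/
noncomputable def Sph (n : ℕ) : ℝ := 2 * Real.pi ^ (((n : ℝ) + 1) / 2) / Gamma (((n : ℝ) + 1) / 2)

/-- The sharp constant. -/
noncomputable def SC (n : ℕ) (s : ℝ) : ℝ :=
  Gamma (((n : ℝ) - s) / 2) / Gamma (((n : ℝ) + s) / 2) * Sph n ^ (-(s / n))

lemma Sph_pos : 0 < Sph n := by
  unfold Sph
  have := Real.pi_pos
  have := Real.Gamma_pos_of_pos (s := ((n : ℝ) + 1) / 2) (by positivity)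
  positivity

lemma V_eq (hn : 1 ≤ n) : IJ n n = 2 ^ (-(n : ℝ)) * Sph n := by
  have hn' : (0 : ℝ) < n := by exact_mod_cast hn
  have h := Real.Gamma_mul_Gamma_add_half ((n : ℝ) / 2)
  have g1 := Real.Gamma_pos_of_pos (s := ((n : ℝ) + 1) / 2) (by positivity)
  have g2 := Real.Gamma_pos_of_pos (s := (n : ℝ)) (by positivity)
  have e1 : (n : ℝ) / 2 + 1 / 2 = (n + 1) / 2 := by ring
  have e2 : 2 * ((n : ℝ) / 2) = n := by ring
  have e3 : (n : ℝ) - n / 2 = n / 2 := by ring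
  rw [e1, e2] at h
  unfold IJ Sph
  rw [e3]
  have hpi : Real.pi ^ (((n : ℝ) + 1) / 2) = Real.pi ^ ((n : ℝ) / 2) * Real.sqrt Real.pi := by
    rw [Real.sqrt_eq_rpow, ← Real.rpow_add Real.pi_pos]; congr 1; ring
  have h2 : (2 : ℝ) ^ (1 - (n : ℝ)) = 2 * 2 ^ (-(n : ℝ)) := by
    rw [sub_eq_add_neg, Real.rpow_add (by norm_num), Real.rpow_one]
  rw [hpi, div_eq_iff g2.ne']
  rw [h2] at h
  field_simp
  linear_combination h

lemma const_eq (hn : 1 ≤ n) {s : ℝ} (hs0 : 0 < s) (hsn : s < n) :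
    cR n s * IJ n (((n : ℝ) + s) / 2) / Gamma (s / 2) * IJ n n ^ (-(s / n)) = SC n s := by
  have hn' : (0 : ℝ) < n := by exact_mod_cast hn
  have g1 := Real.Gamma_pos_of_pos (s := s / 2) (by positivity)
  have g2 := Real.Gamma_pos_of_pos (s := ((n : ℝ) + s) / 2) (by positivity)
  have hpi := Real.pi_pos
  rw [V_eq hn, Real.mul_rpow (by positivity) Sph_pos.le, ← Real.rpow_mul (by norm_num)]
  have e1 : -(n : ℝ) * -(s / n) = s := by field_simp
  rw [e1]
  unfold SC cR IJ
  have e2 : ((n : ℝ) + s) / 2 - n / 2 = s / 2 := by ring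
  rw [e2, Real.mul_rpow (by norm_num) hpi.le]
  have e3 : Real.pi ^ (-((n : ℝ) / 2)) * Real.pi ^ ((n : ℝ) / 2) = 1 := by
    rw [← Real.rpow_add hpi]; simp
  have e4 : (4 : ℝ) ^ (-((n : ℝ) / 2)) * 4 ^ (((n : ℝ) - s) / 2) * 2 ^ s = 1 := by
    have : (2 : ℝ) ^ s = 4 ^ (s / 2) := by
      rw [show (4 : ℝ) = 2 ^ (2 : ℝ) by norm_num, ← Real.rpow_mul (by norm_num)]; congr 1; ring
    rw [this, ← Real.rpow_add (by norm_num), ← Real.rpow_add (by norm_num)]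
    ring_nf; simp
  set A := (4 : ℝ) ^ (-((n : ℝ) / 2))
  set B := (4 : ℝ) ^ (((n : ℝ) - s) / 2)
  set P := Real.pi ^ (-((n : ℝ) / 2))
  set P' := Real.pi ^ ((n : ℝ) / 2)
  set T := Sph n ^ (-(s / n))
  field_simp
  calc _ = (A * B * 2 ^ s) * (P * P') * Gamma (((n : ℝ) - s) / 2) * T := by ring
    _ = _ := by rw [e3, e4]; ring

theorem sobolev_ineq (hn : 1 ≤ n) {s : ℝ} (hs0 : 0 < s) (hsn : s < n) (f : SchwartzMap (EE n) ℝ) :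
    (∫ x, |f x| ^ (2 * n / (n - s))) ^ (2 / (2 * n / (n - s))) ≤
      SC n s * ∫ ξ, (2 * Real.pi * ‖ξ‖) ^ s * ‖𝓕 (fun x => (f x : ℂ)) ξ‖ ^ 2 := by
  have hn' : (0 : ℝ) < n := by exact_mod_cast hn
  have hd : 0 < (n : ℝ) - s := by linarith
  have hpi := Real.pi_pos
  set q : ℝ := 2 * n / (n - s) with hq
  have hq1 : q - 1 = (n + s) / (n - s) := by rw [hq]; field_simp; ring
  have hq0 : 0 < q := by positivity
  have hq10 : 0 < q - 1 := by rw [hq1]; positivity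
  have hfc := f.continuous
  obtain ⟨C, hC, hfC⟩ := sch_bound hs0 hsn f
  let Φ : SchwartzMap (EE n) ℂ := SchwartzMap.postcompCLM (𝕜 := ℝ) Complex.ofRealCLM f
  have hΦ : (Φ : EE n → ℂ) = fun x => (f x : ℂ) := rfl
  set N := ∫ ξ, (2 * Real.pi * ‖ξ‖) ^ s * ‖𝓕 (fun x => (f x : ℂ)) ξ‖ ^ 2 with hN
  have hN0 : 0 ≤ N := integral_nonneg fun ξ => by positivity
  let g : EE n → ℂ := fun x => ((|f x| ^ (q - 2) * f x : ℝ) : ℂ)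
  have hgm : Measurable g := by
    have := hfc.measurable
    have h2 : Measurable (fun x => |f x|) := hfc.abs.measurable
    exact Complex.measurable_ofReal.comp ((h2.pow_const _).mul this)
  have hgn : ∀ x, ‖g x‖ = |f x| ^ (q - 1) := by
    intro x
    simp only [g, Complex.norm_real, norm_mul, Real.norm_eq_abs]
    rw [abs_of_nonneg (by positivity)]
    rcases eq_or_ne (f x) 0 with h | h
    · rw [h]; simp [Real.zero_rpow hq10.ne']
    · have := abs_pos.2 h
      nth_rw 2 [← Real.rpow_one (|f x|)]
      rw [← Real.rpow_add this]; congr 1; ring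
  have hfg : ∀ x, Φ x * g x = ((|f x| ^ q : ℝ) : ℂ) := by
    intro x
    rw [hΦ]
    simp only [g]
    rw [← Complex.ofReal_mul]
    congr 1
    rcases eq_or_ne (f x) 0 with h | h
    · rw [h]; simp [Real.zero_rpow hq0.ne']
    · have := abs_pos.2 h
      have e : |f x| ^ q = |f x| ^ (q - 2) * |f x| ^ (2 : ℝ) := by
        rw [← Real.rpow_add this]; congr 1; ring
      rw [e]
      norm_num; ring
  have hgb : ∀ x, ‖g x‖ ≤ C ^ (q - 1) * J x ^ (-(((n : ℝ) + s) / 2)) := by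
    intro x
    have hJ := J_pos x
    rw [hgn]
    refine (Real.rpow_le_rpow (abs_nonneg _) (hfC x) hq10.le).trans (le_of_eq ?_)
    rw [Real.mul_rpow hC.le (by positivity), ← Real.rpow_mul hJ.le, hq1]
    congr 2; field_simp
  have hfb : ∀ x, |f x| ^ q ≤ C ^ q * J x ^ (-(n : ℝ)) := by
    intro x
    have hJ := J_pos x
    refine (Real.rpow_le_rpow (abs_nonneg _) (hfC x) hq0.le).trans (le_of_eq ?_)
    rw [Real.mul_rpow hC.le (by positivity), ← Real.rpow_mul hJ.le, hq]
    congr 2; field_simp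
  have hJi : ∀ a : ℝ, (n : ℝ) / 2 < a → Integrable (fun x : EE n => J x ^ (-a)) := by
    intro a ha
    refine ⟨(Measurable.pow_const J_cont.measurable _).aestronglyMeasurable, ?_⟩
    rw [hasFiniteIntegral_iff_ofReal (Filter.Eventually.of_forall fun x => by have := J_pos x; positivity), lint_J ha]
    exact ENNReal.ofReal_lt_top
  have hgi : Integrable g :=
    ((hJi (((n : ℝ) + s) / 2) (by linarith)).const_mul _).mono' hgm.aestronglyMeasurable
      (Filter.Eventually.of_forall hgb)
  have hfi : Integrable (fun x => |f x| ^ q) :=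
    ((hJi (n : ℝ) (by linarith)).const_mul _).mono'
      (Measurable.pow_const hfc.abs.measurable _).aestronglyMeasurable
      (Filter.Eventually.of_forall fun x => by
        rw [Real.norm_of_nonneg (by positivity)]; exact hfb x)
  set Q := ∫ x, |f x| ^ q with hQ
  have hQ0 : 0 ≤ Q := integral_nonneg fun x => by positivity
  have d := dual_bound hn hs0 hsn Φ hgi
  rw [← sob_lint hs0 hsn Φ, hΦ, ← hN] at d
  have r := riesz_le hn hs0 hsn hgi hgm
  have h := HLS_leb hn hs0 hsn (f := fun x => ‖g x‖ₑ) hgm.enorm (C := C ^ (q - 1)) (by positivity)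
    (fun x => by rw [← ofReal_norm]; exact ENNReal.ofReal_le_ofReal (hgb x))
  have hQe : ∫⁻ x, ‖g x‖ₑ ^ (2 * (n : ℝ) / (n + s)) = ENNReal.ofReal Q := by
    rw [hQ, ofReal_integral_eq_lintegral_ofReal hfi (Filter.Eventually.of_forall fun x => by positivity)]
    refine lintegral_congr fun x => ?_
    rw [← ofReal_norm, ENNReal.ofReal_rpow_of_nonneg (norm_nonneg _) (by positivity), hgn,
      ← Real.rpow_mul (abs_nonneg _), hq1, hq]
    congr 2
    field_simp
  have hintg : ‖∫ x, (f x : ℂ) * g x‖ₑ = ENNReal.ofReal Q := by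
    have : ∫ x, (f x : ℂ) * g x = ((Q : ℝ) : ℂ) := by
      rw [hQ, ← integral_complex_ofReal]
      exact integral_congr_ae (Filter.Eventually.of_forall hfg)
    rw [this, ← ofReal_norm, Complex.norm_real, Real.norm_of_nonneg hQ0]
  rw [hintg] at d
  rw [hQe] at h
  set W := ∫⁻ ξ, ENNReal.ofReal ((2 * Real.pi * ‖ξ‖) ^ (-s)) * ‖𝓕 g ξ‖ₑ ^ 2
  set D := ∫⁻ x, ∫⁻ y, ‖g x‖ₑ * ‖g y‖ₑ * RK (n - s) x y
  have hG := Real.Gamma_pos_of_pos (s := s / 2) (by positivity)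
  have hV : 0 < IJ n n := IJ_pos (by linarith)
  have hI : 0 < IJ n (((n : ℝ) + s) / 2) := IJ_pos (by linarith)
  have hcR := cR_pos (n := n) hsn
  set V := IJ n n
  set I := IJ n (((n : ℝ) + s) / 2)
  set c := cR n s
  set G := Gamma (s / 2)
  set p : ℝ := (n + s) / n with hp
  have hp0 : 0 < p := by positivity
  have key : ENNReal.ofReal (Q ^ 2 * G * V ^ p) ≤ ENNReal.ofReal (N * c * I * V * Q ^ p) := by
    rw [ENNReal.ofReal_mul (by positivity), ENNReal.ofReal_mul (by positivity), ENNReal.ofReal_mul (by positivity),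
      ENNReal.ofReal_mul (by positivity), ENNReal.ofReal_mul (by positivity), ENNReal.ofReal_mul (by positivity),
      ENNReal.ofReal_pow hQ0, ← ENNReal.ofReal_rpow_of_nonneg hV.le hp0.le,
      ← ENNReal.ofReal_rpow_of_nonneg hQ0 hp0.le]
    calc _ ≤ (ENNReal.ofReal N * W) * ENNReal.ofReal G * ENNReal.ofReal V ^ p := by gcongr
      _ = ENNReal.ofReal N * (ENNReal.ofReal G * W) * ENNReal.ofReal V ^ p := by ring
      _ ≤ ENNReal.ofReal N * (ENNReal.ofReal c * D) * ENNReal.ofReal V ^ p := by gcongr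
      _ = ENNReal.ofReal N * ENNReal.ofReal c * (D * ENNReal.ofReal V ^ p) := by ring
      _ ≤ _ := (mul_le_mul_right h _)
      _ = _ := by ring
  rw [ENNReal.ofReal_le_ofReal_iff (by positivity)] at key
  have e2q : 2 / q = 2 - p := by rw [hq, hp]; field_simp; ring
  have h2q : 0 < 2 / q := by positivity
  rw [← const_eq hn hs0 hsn]
  rcases hQ0.eq_or_lt with h0 | h0
  · rw [← h0, Real.zero_rpow h2q.ne']
    positivity
  · rw [e2q, Real.rpow_sub h0, Real.rpow_ofNat, div_le_iff₀ (by positivity)]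
    have eV : V ^ (-(s / n)) = V / V ^ p := by
      have : -(s / n) = 1 - p := by rw [hp]; field_simp; ring
      rw [this, Real.rpow_sub hV, Real.rpow_one]
    change _ ≤ c * I / G * V ^ (-(s / n)) * N * Q ^ p
    rw [eV]
    have : c * I / G * (V / V ^ p) * N * Q ^ p = (N * c * I * V * Q ^ p) / (G * V ^ p) := by
      field_simp
    rw [this, le_div_iff₀ (by positivity)]
    linarith

end ineq2
end SFS

-- part 10
open MeasureTheory
open scoped ENNReal
set_option linter.unusedSectionVars false
set_option linter.unusedVariables false
namespace SFS
section schw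
open scoped FourierTransform ContDiff
open Real (Gamma pi exp)
variable {n : ℕ}

lemma gauss_decay {e : ℝ} (he : 0 < e) (m : ℕ) : ∃ K : ℝ, ∀ r : ℝ, 0 ≤ r → (1 + r) ^ m * exp (-e * r ^ 2) ≤ K := by
  refine ⟨m.factorial * exp (1 + 1 / (4 * e)), fun r hr => ?_⟩
  have h := Real.pow_div_factorial_le_exp (1 + r) (by linarith) m
  rw [div_le_iff₀ (by positivity)] at h
  have h2 : 1 + r + -e * r ^ 2 ≤ 1 + 1 / (4 * e) := by
    have : 0 ≤ (2 * e * r - 1) ^ 2 / (4 * e) := by positivity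
    have e1 : (2 * e * r - 1) ^ 2 / (4 * e) = e * r ^ 2 - r + 1 / (4 * e) := by field_simp; ring
    linarith
  calc _ ≤ exp (1 + r) * m.factorial * exp (-e * r ^ 2) := by gcongr
    _ = m.factorial * exp (1 + r + -e * r ^ 2) := by rw [Real.exp_add (1 + r)]; ring
    _ ≤ _ := by gcongr

/-- The Gaussian as a Schwartz function. -/
noncomputable def gaussS (n : ℕ) (e : ℝ) (he : 0 < e) : SchwartzMap (EE n) ℝ where
  toFun x := exp (-e * ‖x‖ ^ 2)
  smooth' := Real.contDiff_exp.comp (contDiff_const.mul (contDiff_norm_sq ℝ))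
  decay' := by
    intro k m
    have ht : (fun x : EE n => -e * ‖x‖ ^ 2).HasTemperateGrowth := by
      have := (Function.HasTemperateGrowth.const (-e) (E := EE n)).mul (Function.hasTemperateGrowth_norm_sq (EE n))
      exact this
    obtain ⟨l, C, hC, hb⟩ := ht.norm_iteratedFDeriv_le_uniform m
    obtain ⟨K, hK⟩ := gauss_decay he (k + l * m)
    refine ⟨m.factorial * (1 + C) ^ m * K, fun x => ?_⟩
    have h1 : 1 ≤ (1 + C) * (1 + ‖x‖) ^ l :=
      one_le_mul_of_one_le_of_one_le (by linarith) (one_le_pow₀ (by linarith [norm_nonneg x]))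
    have h := norm_iteratedFDeriv_comp_le (𝕜 := ℝ) (N := ∞) (n := m) (g := Real.exp)
      (f := fun x : EE n => -e * ‖x‖ ^ 2) Real.contDiff_exp ht.1 (by exact_mod_cast le_top) x
      (C := exp (-e * ‖x‖ ^ 2)) (D := (1 + C) * (1 + ‖x‖) ^ l)
      (by
        intro i _
        rw [norm_iteratedFDeriv_eq_norm_iteratedDeriv, iteratedDeriv_eq_iterate, Real.iter_deriv_exp]
        simp)
      (by
        intro i hi him
        refine (hb i him x).trans ?_
        refine le_trans ?_ (le_self_pow₀ h1 (by omega))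
        gcongr; linarith)
    calc _ ≤ ‖x‖ ^ k * (m.factorial * exp (-e * ‖x‖ ^ 2) * ((1 + C) * (1 + ‖x‖) ^ l) ^ m) :=
          mul_le_mul_of_nonneg_left h (by positivity)
      _ ≤ (1 + ‖x‖) ^ k * (m.factorial * exp (-e * ‖x‖ ^ 2) * ((1 + C) * (1 + ‖x‖) ^ l) ^ m) := by
          gcongr; linarith
      _ = m.factorial * (1 + C) ^ m * ((1 + ‖x‖) ^ (k + l * m) * exp (-e * ‖x‖ ^ 2)) := by
          rw [mul_pow, ← pow_mul, pow_add]; ring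
      _ ≤ _ := by
          gcongr
          exact hK _ (norm_nonneg x)

/-- The approximate extremizers. -/
noncomputable def fE (n : ℕ) (a e : ℝ) (he : 0 < e) : SchwartzMap (EE n) ℝ :=
  SchwartzMap.smulLeftCLM ℝ (fun x : EE n => (1 + ‖x‖ ^ 2) ^ (-a)) (gaussS n e he)

lemma fE_apply (a e : ℝ) (he : 0 < e) (x : EE n) : fE n a e he x = J x ^ (-a) * exp (-e * ‖x‖ ^ 2) := by
  unfold fE
  rw [SchwartzMap.smulLeftCLM_apply_apply (Function.hasTemperateGrowth_one_add_norm_sq_rpow (EE n) (-a))]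
  rfl

lemma int_pow_gauss (hn : 1 ≤ n) {s b : ℝ} (hs0 : 0 < s) (hb : 0 < b) :
    ∫ ξ : EE n, ‖ξ‖ ^ s * exp (-b * ‖ξ‖ ^ 2) =
      Real.pi ^ ((n : ℝ) / 2) * Gamma (((n : ℝ) + s) / 2) / Gamma ((n : ℝ) / 2) * b ^ (-(((n : ℝ) + s) / 2)) := by
  have hn' : (0 : ℝ) < n := by exact_mod_cast hn
  have : Nonempty (Fin n) := ⟨⟨0, hn⟩⟩
  have h := integral_fun_norm_addHaar (volume : Measure (EE n)) (fun r => r ^ s * exp (-b * r ^ 2))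
  rw [h, finrank_euclideanSpace_fin]
  have e1 : ∫ y in Set.Ioi (0 : ℝ), y ^ (n - 1) • (y ^ s * exp (-b * y ^ 2)) =
      ∫ y in Set.Ioi (0 : ℝ), y ^ ((n : ℝ) - 1 + s) * exp (-b * y ^ (2 : ℝ)) := by
    refine setIntegral_congr_fun measurableSet_Ioi fun y hy => ?_
    have hy' : 0 < y := hy
    simp only [smul_eq_mul, Real.rpow_ofNat]
    have e0 : (n : ℝ) - 1 = ((n - 1 : ℕ) : ℝ) := by push_cast [hn]; ring
    rw [Real.rpow_add hy', e0, Real.rpow_natCast]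
    ring
  rw [e1, integral_rpow_mul_exp_neg_mul_rpow (by norm_num) (by linarith) hb, Measure.real, EuclideanSpace.volume_ball]
  have g := Real.Gamma_pos_of_pos (s := (n : ℝ) / 2) (by positivity)
  simp only [ENNReal.ofReal_one, one_pow, one_mul, Fintype.card_fin]
  rw [Real.Gamma_add_one (by positivity), ENNReal.toReal_ofReal (by positivity)]
  have e2 : ((n : ℝ) - 1 + s + 1) / 2 = (n + s) / 2 := by ring
  have e3 : -((n : ℝ) - 1 + s + 1) / 2 = -((n + s) / 2) := by ring
  have e4 : Real.sqrt Real.pi ^ n = Real.pi ^ ((n : ℝ) / 2) := by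
    rw [Real.sqrt_eq_rpow, ← Real.rpow_natCast, ← Real.rpow_mul Real.pi_pos.le]; congr 1; ring
  rw [e2, e3, e4]
  simp only [nsmul_eq_mul, smul_eq_mul]
  field_simp

lemma lint_pow_gauss (hn : 1 ≤ n) {s b : ℝ} (hs0 : 0 < s) (hb : 0 < b) :
    ∫⁻ ξ : EE n, ENNReal.ofReal ((2 * Real.pi * ‖ξ‖) ^ s) * ENNReal.ofReal (exp (-b * ‖ξ‖ ^ 2)) =
      ENNReal.ofReal ((2 * Real.pi) ^ s * (Real.pi ^ ((n : ℝ) / 2) * Gamma (((n : ℝ) + s) / 2) / Gamma ((n : ℝ) / 2)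
        * b ^ (-(((n : ℝ) + s) / 2)))) := by
  have hn' : (0 : ℝ) < n := by exact_mod_cast hn
  have hpi := Real.pi_pos
  have g := Real.Gamma_pos_of_pos (s := (n : ℝ) / 2) (by positivity)
  have g' := Real.Gamma_pos_of_pos (s := ((n : ℝ) + s) / 2) (by positivity)
  have h := int_pow_gauss hn hs0 hb
  have hi : Integrable (fun ξ : EE n => ‖ξ‖ ^ s * exp (-b * ‖ξ‖ ^ 2)) := by
    by_contra hc
    rw [integral_undef hc] at h
    have : 0 < Real.pi ^ ((n : ℝ) / 2) * Gamma (((n : ℝ) + s) / 2) / Gamma ((n : ℝ) / 2) * b ^ (-(((n : ℝ) + s) / 2)) := by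
      positivity
    linarith
  rw [← h, ← integral_const_mul, ofReal_integral_eq_lintegral_ofReal (hi.const_mul _)
    (Filter.Eventually.of_forall fun ξ => by positivity)]
  refine lintegral_congr fun ξ => ?_
  rw [← ENNReal.ofReal_mul (by positivity), Real.mul_rpow (by positivity) (by positivity), mul_assoc]

end schw
end SFS

-- part 11
open MeasureTheory
open scoped ENNReal
set_option linter.unusedSectionVars false
set_option linter.unusedVariables false
namespace SFS
section ft
open scoped FourierTransform ContDiff
open Real (Gamma pi exp)
variable {n : ℕ}

lemma fE_sub {a e : ℝ} (ha : 0 < a) (he : 0 < e) (x : EE n) :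
    fE n a e he x = (Gamma a)⁻¹ * ∫ t in Set.Ioi (0 : ℝ), t ^ (a - 1) * exp (-t) * exp (-(t + e) * ‖x‖ ^ 2) := by
  have hJ := J_pos x
  have g := Real.Gamma_pos_of_pos ha
  have h := Real.integral_rpow_mul_exp_neg_mul_Ioi ha hJ
  have : ∀ t : ℝ, t ^ (a - 1) * exp (-t) * exp (-(t + e) * ‖x‖ ^ 2) =
      exp (-e * ‖x‖ ^ 2) * (t ^ (a - 1) * exp (-(J x * t))) := by
    intro t
    have : exp (-t) * exp (-(t + e) * ‖x‖ ^ 2) = exp (-e * ‖x‖ ^ 2) * exp (-(J x * t)) := by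
      rw [← Real.exp_add, ← Real.exp_add]; congr 1; unfold J; ring
    rw [mul_assoc, this]; ring
  simp_rw [this]
  rw [integral_const_mul, h, fE_apply, one_div, Real.inv_rpow hJ.le, Real.rpow_neg hJ.le]
  field_simp

lemma fE_prod_integrable {a e : ℝ} (ha : 0 < a) (he : 0 < e) (ξ : EE n) :
    Integrable (fun p : EE n × ℝ => (Real.fourierChar (-(inner ℝ p.1 ξ)) : ℂ) *
      ((p.2 ^ (a - 1) * exp (-p.2) * exp (-(p.2 + e) * ‖p.1‖ ^ 2) : ℝ) : ℂ))
      (volume.prod (volume.restrict (Set.Ioi (0 : ℝ)))) := by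
  have hm : Measurable (fun p : EE n × ℝ => (Real.fourierChar (-(inner ℝ p.1 ξ)) : ℂ) *
      ((p.2 ^ (a - 1) * exp (-p.2) * exp (-(p.2 + e) * ‖p.1‖ ^ 2) : ℝ) : ℂ)) := by
    have h1 : Continuous (fun p : EE n × ℝ => (Real.fourierChar (-(inner ℝ p.1 ξ)) : ℂ)) := by fun_prop
    refine h1.measurable.mul (Complex.measurable_ofReal.comp ?_)
    fun_prop
  refine ⟨hm.aestronglyMeasurable, ?_⟩
  unfold HasFiniteIntegral
  rw [lintegral_prod_symm _ hm.enorm.aemeasurable]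
  have hle : ∫⁻ t in Set.Ioi (0 : ℝ), ∫⁻ x : EE n, ‖(Real.fourierChar (-(inner ℝ x ξ)) : ℂ) *
      ((t ^ (a - 1) * exp (-t) * exp (-(t + e) * ‖x‖ ^ 2) : ℝ) : ℂ)‖ₑ ≤
      ∫⁻ t in Set.Ioi (0 : ℝ), ENNReal.ofReal (t ^ (a - 1) * exp (-(1 * t))) * ENNReal.ofReal ((Real.pi / e) ^ ((n : ℝ) / 2)) := by
    refine setLIntegral_mono (by fun_prop) fun t ht => ?_
    have ht' : 0 < t := ht
    have : ∀ x : EE n, ‖(Real.fourierChar (-(inner ℝ x ξ)) : ℂ) *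
      ((t ^ (a - 1) * exp (-t) * exp (-(t + e) * ‖x‖ ^ 2) : ℝ) : ℂ)‖ₑ =
      ENNReal.ofReal (t ^ (a - 1) * exp (-(1 * t))) * ENNReal.ofReal (exp (-(t + e) * ‖x‖ ^ 2)) := by
      intro x
      rw [← ofReal_norm, norm_mul, Circle.norm_coe, one_mul, Complex.norm_real, Real.norm_of_nonneg (by positivity),
        one_mul, ENNReal.ofReal_mul (by positivity)]
    simp_rw [this]
    rw [lintegral_const_mul' _ _ (by simp), lint_gauss (by positivity)]
    gcongr
    have := Real.pi_pos
    linarith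
  refine lt_of_le_of_lt hle ?_
  rw [lintegral_mul_const' _ _ (by simp), lint_gamma ha one_pos]
  exact ENNReal.mul_lt_top ENNReal.ofReal_lt_top ENNReal.ofReal_lt_top

lemma fE_fourier {a e : ℝ} (ha : 0 < a) (he : 0 < e) (ξ : EE n) :
    ‖𝓕 (fun x : EE n => (fE n a e he x : ℂ)) ξ‖ₑ ≤ ENNReal.ofReal (Gamma a)⁻¹ *
      ∫⁻ t in Set.Ioi (0 : ℝ), ENNReal.ofReal (t ^ (a - 1) * exp (-t)) *
        ENNReal.ofReal ((Real.pi / (t + e)) ^ ((n : ℝ) / 2) * exp (-Real.pi ^ 2 * ‖ξ‖ ^ 2 / (t + e))) := by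
  have g := Real.Gamma_pos_of_pos ha
  have e1 : 𝓕 (fun x : EE n => (fE n a e he x : ℂ)) ξ = ((Gamma a)⁻¹ : ℝ) *
      ∫ x : EE n, ∫ t in Set.Ioi (0 : ℝ), (Real.fourierChar (-(inner ℝ x ξ)) : ℂ) *
      ((t ^ (a - 1) * exp (-t) * exp (-(t + e) * ‖x‖ ^ 2) : ℝ) : ℂ) := by
    rw [Real.fourier_eq, ← integral_const_mul]
    refine integral_congr_ae (Filter.Eventually.of_forall fun x => ?_)
    simp only []
    rw [integral_const_mul, integral_complex_ofReal, fE_sub ha he, Circle.smul_def, smul_eq_mul]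
    push_cast
    ring
  rw [e1, integral_integral_swap (fE_prod_integrable ha he ξ), enorm_mul]
  have e2 : ‖(((Gamma a)⁻¹ : ℝ) : ℂ)‖ₑ = ENNReal.ofReal (Gamma a)⁻¹ := by
    rw [← ofReal_norm, Complex.norm_real, Real.norm_of_nonneg (by positivity)]
  rw [e2]
  gcongr
  refine (enorm_integral_le_lintegral_enorm _).trans (le_of_eq ?_)
  refine setLIntegral_congr_fun measurableSet_Ioi fun t ht => ?_
  have ht' : 0 < t := ht
  have hte : 0 < t + e := by positivity
  have hpi := Real.pi_pos
  have e3 : ∫ x : EE n, (Real.fourierChar (-(inner ℝ x ξ)) : ℂ) *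
      ((t ^ (a - 1) * exp (-t) * exp (-(t + e) * ‖x‖ ^ 2) : ℝ) : ℂ) =
      ((t ^ (a - 1) * exp (-t) : ℝ) : ℂ) * 𝓕 (fun v : EE n => Complex.exp (-((t + e : ℝ) : ℂ) * ‖v‖ ^ 2)) ξ := by
    rw [Real.fourier_eq, ← integral_const_mul]
    refine integral_congr_ae (Filter.Eventually.of_forall fun x => ?_)
    simp only [Circle.smul_def, smul_eq_mul]
    push_cast
    ring
  rw [e3, fourier_gaussian_innerProductSpace (by simpa using hte), enorm_mul]
  congr 1
  · rw [← ofReal_norm, Complex.norm_real, Real.norm_of_nonneg (by positivity)]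
  · have : ((Real.pi : ℂ) / ((t + e : ℝ) : ℂ)) ^ ((Module.finrank ℝ (EE n) : ℂ) / 2) *
        Complex.exp (-(Real.pi : ℂ) ^ 2 * (‖ξ‖ : ℂ) ^ 2 / ((t + e : ℝ) : ℂ)) =
        (((Real.pi / (t + e)) ^ ((n : ℝ) / 2) * exp (-Real.pi ^ 2 * ‖ξ‖ ^ 2 / (t + e)) : ℝ) : ℂ) := by
      rw [Complex.ofReal_mul, Complex.ofReal_cpow (by positivity), finrank_euclideanSpace_fin]
      push_cast
      rfl
    rw [this, ← ofReal_norm, Complex.norm_real, Real.norm_of_nonneg (by positivity)]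

end ft
end SFS

-- part 12
open MeasureTheory
open scoped ENNReal
set_option linter.unusedSectionVars false
set_option linter.unusedVariables false
namespace SFS
section nb
open scoped FourierTransform ContDiff
open Real (Gamma pi exp)
variable {n : ℕ}

/-- Lebesgue measure on the half line. -/
noncomputable def nu : Measure ℝ := volume.restrict (Set.Ioi (0 : ℝ))

instance : SFinite nu := by unfold nu; infer_instance

/-- The constant in the norm formula. -/
noncomputable def CN (n : ℕ) (s : ℝ) : ℝ :=
  2 ^ s * (Real.pi ^ ((n : ℝ) / 2) * Gamma (((n : ℝ) + s) / 2) / Gamma ((n : ℝ) / 2))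

lemma CN_pos (hn : 1 ≤ n) {s : ℝ} (hs0 : 0 < s) : 0 < CN n s := by
  have hn' : (0 : ℝ) < n := by exact_mod_cast hn
  have hpi := Real.pi_pos
  have g := Real.Gamma_pos_of_pos (s := (n : ℝ) / 2) (by positivity)
  have g' := Real.Gamma_pos_of_pos (s := ((n : ℝ) + s) / 2) (by positivity)
  unfold CN; positivity

/-- The weight. -/
noncomputable def wt (a t : ℝ) : ℝ := t ^ (a - 1) * exp (-t)

/-- The integrand in the norm formula. -/
noncomputable def FN (n : ℕ) (s e : ℝ) (p : ℝ × ℝ) : ℝ :=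
  CN n s * (wt (((n : ℝ) - s) / 2) p.1 * wt (((n : ℝ) - s) / 2) p.2) *
    (((p.1 + e) * (p.2 + e)) ^ (s / 2) * ((p.1 + e) + (p.2 + e)) ^ (-(((n : ℝ) + s) / 2)))

lemma nu_prod_pos : ∀ᵐ p ∂(nu.prod nu), 0 < p.1 ∧ 0 < p.2 := by
  unfold nu
  rw [Measure.prod_restrict]
  filter_upwards [ae_restrict_mem (measurableSet_Ioi.prod measurableSet_Ioi)] with p hp
  exact hp

lemma alg_id (s : ℝ) {x y : ℝ} (hx : 0 < x) (hy : 0 < y) :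
    (Real.pi / x) ^ ((n : ℝ) / 2) * (Real.pi / y) ^ ((n : ℝ) / 2) * ((2 * Real.pi) ^ s *
      (Real.pi ^ ((n : ℝ) / 2) * Gamma (((n : ℝ) + s) / 2) / Gamma ((n : ℝ) / 2)
        * (Real.pi ^ 2 * (x + y) / (x * y)) ^ (-(((n : ℝ) + s) / 2)))) =
    CN n s * ((x * y) ^ (s / 2) * (x + y) ^ (-(((n : ℝ) + s) / 2))) := by
  have hpi := Real.pi_pos
  unfold CN
  set K := Real.pi ^ ((n : ℝ) / 2) * Gamma (((n : ℝ) + s) / 2) / Gamma ((n : ℝ) / 2)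
  have h1 : (Real.pi / x) ^ ((n : ℝ) / 2) * (Real.pi / y) ^ ((n : ℝ) / 2) = Real.pi ^ (n : ℝ) * (x * y) ^ (-((n : ℝ) / 2)) := by
    rw [← Real.mul_rpow (by positivity) (by positivity), show Real.pi / x * (Real.pi / y) = Real.pi ^ (2 : ℝ) * (x * y)⁻¹ by
      rw [Real.rpow_ofNat]; field_simp, Real.mul_rpow (by positivity) (by positivity), ← Real.rpow_mul hpi.le,
      Real.inv_rpow (by positivity), Real.rpow_neg (by positivity)]
    congr 2; ring
  have h2 : (Real.pi ^ 2 * (x + y) / (x * y)) ^ (-(((n : ℝ) + s) / 2)) =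
      Real.pi ^ (-((n : ℝ) + s)) * (x + y) ^ (-(((n : ℝ) + s) / 2)) * (x * y) ^ ((((n : ℝ) + s) / 2)) := by
    rw [Real.div_rpow (by positivity) (by positivity), Real.mul_rpow (by positivity) (by positivity),
      Real.rpow_neg (by positivity : 0 ≤ x * y), div_inv_eq_mul, ← Real.rpow_ofNat, ← Real.rpow_mul hpi.le]
    congr 3; ring
  rw [h1, h2, Real.mul_rpow (by norm_num) hpi.le]
  have h3 : Real.pi ^ (n : ℝ) * Real.pi ^ s * Real.pi ^ (-((n : ℝ) + s)) = 1 := by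
    rw [← Real.rpow_add hpi, ← Real.rpow_add hpi]; ring_nf; simp
  have h4 : (x * y) ^ (-((n : ℝ) / 2)) * (x * y) ^ ((((n : ℝ) + s) / 2)) = (x * y) ^ (s / 2) := by
    rw [← Real.rpow_add (by positivity)]; ring_nf
  rw [← h4]
  calc _ = (Real.pi ^ (n : ℝ) * Real.pi ^ s * Real.pi ^ (-((n : ℝ) + s))) * (2 ^ s * K * ((x * y) ^ (-((n : ℝ) / 2)) * (x * y) ^ ((((n : ℝ) + s) / 2)) * (x + y) ^ (-(((n : ℝ) + s) / 2)))) := by ring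
    _ = _ := by rw [h3, one_mul]

lemma norm_le (hn : 1 ≤ n) {s : ℝ} (hs0 : 0 < s) (hsn : s < n) {e : ℝ} (he : 0 < e) :
    ∫⁻ ξ : EE n, ENNReal.ofReal ((2 * Real.pi * ‖ξ‖) ^ s) *
      ‖𝓕 (fun x : EE n => (fE n (((n : ℝ) - s) / 2) e he x : ℂ)) ξ‖ₑ ^ 2 ≤
    ENNReal.ofReal (Gamma (((n : ℝ) - s) / 2))⁻¹ ^ 2 * ∫⁻ p, ENNReal.ofReal (FN n s e p) ∂(nu.prod nu) := by
  have hpi := Real.pi_pos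
  have ha : 0 < ((n : ℝ) - s) / 2 := by linarith
  have hCN := CN_pos hn hs0
  set a := ((n : ℝ) - s) / 2 with hadef
  let A : EE n → ℝ → ℝ≥0∞ := fun ξ t => ENNReal.ofReal (t ^ (a - 1) * exp (-t)) *
        ENNReal.ofReal ((Real.pi / (t + e)) ^ ((n : ℝ) / 2) * exp (-Real.pi ^ 2 * ‖ξ‖ ^ 2 / (t + e)))
  have hA : Measurable (Function.uncurry A) := by
    simp only [A, Function.uncurry_def]
    fun_prop
  have hA3 : Measurable (Function.uncurry (fun (ξ : EE n) (p : ℝ × ℝ) => ENNReal.ofReal ((2 * Real.pi * ‖ξ‖) ^ s) *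
        (A ξ p.1 * A ξ p.2))) := by
    simp only [A, Function.uncurry_def]
    fun_prop
  have hA1 : ∀ ξ, Measurable (A ξ) := fun ξ => hA.comp measurable_prodMk_left
  calc _ ≤ ∫⁻ ξ : EE n, ENNReal.ofReal (Gamma a)⁻¹ ^ 2 * ∫⁻ p, ENNReal.ofReal ((2 * Real.pi * ‖ξ‖) ^ s) *
        (A ξ p.1 * A ξ p.2) ∂(nu.prod nu) := by
        refine lintegral_mono fun ξ => ?_
        rw [lintegral_const_mul' _ _ (by simp), lintegral_prod_mul (hA1 ξ).aemeasurable (hA1 ξ).aemeasurable, mul_left_comm]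
        gcongr
        refine (pow_le_pow_left' (fE_fourier ha he ξ) 2).trans (le_of_eq ?_)
        rw [mul_pow, sq (lintegral _ _)]
        rfl
    _ = ENNReal.ofReal (Gamma a)⁻¹ ^ 2 * ∫⁻ p : ℝ × ℝ, (∫⁻ ξ : EE n, ENNReal.ofReal ((2 * Real.pi * ‖ξ‖) ^ s) *
        (A ξ p.1 * A ξ p.2)) ∂(nu.prod nu) := by
        rw [lintegral_const_mul' _ _ (by simp), lintegral_lintegral_swap]
        exact (hA3).aemeasurable
    _ = _ := by
        congr 1
        refine lintegral_congr_ae ?_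
        filter_upwards [nu_prod_pos] with p hp
        obtain ⟨h1, h2⟩ := hp
        have hx : 0 < p.1 + e := by linarith
        have hy : 0 < p.2 + e := by linarith
        have e1 : ∀ ξ : EE n, ENNReal.ofReal ((2 * Real.pi * ‖ξ‖) ^ s) * (A ξ p.1 * A ξ p.2) =
            ENNReal.ofReal (wt a p.1 * wt a p.2 * ((Real.pi / (p.1 + e)) ^ ((n : ℝ) / 2) * (Real.pi / (p.2 + e)) ^ ((n : ℝ) / 2))) *
            (ENNReal.ofReal ((2 * Real.pi * ‖ξ‖) ^ s) *
              ENNReal.ofReal (exp (-(Real.pi ^ 2 * (p.1 + e + (p.2 + e)) / ((p.1 + e) * (p.2 + e))) * ‖ξ‖ ^ 2))) := by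
          intro ξ
          simp only [A]
          have hw : ∀ t : ℝ, 0 < t → 0 ≤ wt a t := fun t ht => by unfold wt; positivity
          have := hw _ h1
          have := hw _ h2
          have e2 : exp (-(Real.pi ^ 2 * (p.1 + e + (p.2 + e)) / ((p.1 + e) * (p.2 + e))) * ‖ξ‖ ^ 2) =
            exp (-Real.pi ^ 2 * ‖ξ‖ ^ 2 / (p.1 + e)) * exp (-Real.pi ^ 2 * ‖ξ‖ ^ 2 / (p.2 + e)) := by
            rw [← Real.exp_add]; congr 1; field_simp; ring
          rw [e2, ← ENNReal.ofReal_mul (by positivity), ← ENNReal.ofReal_mul (by positivity),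
            ← ENNReal.ofReal_mul (by positivity), ← ENNReal.ofReal_mul (by positivity),
            ← ENNReal.ofReal_mul (by positivity), ← ENNReal.ofReal_mul (by positivity)]
          congr 1
          unfold wt
          ring
        simp_rw [e1]
        rw [lintegral_const_mul' _ _ (by simp), lint_pow_gauss hn hs0 (by positivity)]
        have hw : ∀ t : ℝ, 0 < t → 0 ≤ wt a t := fun t ht => by unfold wt; positivity
        have := hw _ h1
        have := hw _ h2
        rw [← ENNReal.ofReal_mul (by positivity), mul_assoc, alg_id s hx hy]
        congr 1
        unfold FN
        ring

lemma FN_meas (s e : ℝ) : Measurable (fun p => ENNReal.ofReal (FN n s e p)) := by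
  unfold FN wt; fun_prop

lemma FN_bound (hn : 1 ≤ n) {s : ℝ} (hs0 : 0 < s) (hsn : s < n) {e : ℝ} (he : 0 < e) {p : ℝ × ℝ}
    (h1 : 0 < p.1) (h2 : 0 < p.2) :
    FN n s e p ≤ CN n s * (wt (((n : ℝ) - s) / 4) p.1 * wt (((n : ℝ) - s) / 4) p.2) := by
  have hCN := CN_pos hn hs0
  have hn' : (0 : ℝ) < n := by exact_mod_cast hn
  obtain ⟨t, t'⟩ := p
  simp only at h1 h2
  unfold FN wt
  simp only
  set x := t + e with hx
  set y := t' + e with hy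
  have hx0 : 0 < x := by linarith
  have hy0 : 0 < y := by linarith
  have k1 : (x + y) ^ (-(((n : ℝ) + s) / 2)) ≤ (x * y) ^ (-(((n : ℝ) + s) / 4)) := by
    have : (x * y) ^ (-(((n : ℝ) + s) / 4)) = (Real.sqrt (x * y)) ^ (-(((n : ℝ) + s) / 2)) := by
      rw [Real.sqrt_eq_rpow, ← Real.rpow_mul (by positivity)]; congr 1; ring
    rw [this]
    apply Real.rpow_le_rpow_of_nonpos (by positivity)
    · rw [Real.sqrt_le_left (by positivity)]
      nlinarith
    · have : 0 < ((n : ℝ) + s) / 2 := by positivity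
      linarith
  have k2 : (x * y) ^ (s / 2) * (x + y) ^ (-(((n : ℝ) + s) / 2)) ≤ (t * t') ^ (-(((n : ℝ) - s) / 4)) := by
    calc _ ≤ (x * y) ^ (s / 2) * (x * y) ^ (-(((n : ℝ) + s) / 4)) := by gcongr
      _ = (x * y) ^ (-(((n : ℝ) - s) / 4)) := by
        rw [← Real.rpow_add (by positivity)]; congr 1; ring
      _ ≤ _ := by
        apply Real.rpow_le_rpow_of_nonpos (by positivity)
        · apply mul_le_mul <;> linarith
        · linarith
  refine (mul_le_mul_of_nonneg_left k2 (by positivity)).trans (le_of_eq ?_)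
  have k3 : ∀ u : ℝ, 0 < u → u ^ (((n : ℝ) - s) / 4 - 1) = u ^ (((n : ℝ) - s) / 2 - 1) * u ^ (-(((n : ℝ) - s) / 4)) := by
    intro u hu
    rw [← Real.rpow_add hu]; congr 1; ring
  rw [k3 t h1, k3 t' h2, Real.mul_rpow h1.le h2.le]
  ring

lemma lint_wt {a : ℝ} (ha : 0 < a) : ∫⁻ t, ENNReal.ofReal (wt a t) ∂nu = ENNReal.ofReal (Gamma a) := by
  have := lint_gamma ha one_pos
  simpa [nu, wt] using this

lemma wt_meas (a : ℝ) : Measurable (wt a) := by unfold wt; fun_prop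

lemma FN_tendsto (hn : 1 ≤ n) {s : ℝ} (hs0 : 0 < s) (hsn : s < n) :
    Filter.Tendsto (fun k : ℕ => ∫⁻ p, ENNReal.ofReal (FN n s (1 / ((k : ℝ) + 1)) p) ∂(nu.prod nu)) Filter.atTop
      (nhds (∫⁻ p, ENNReal.ofReal (FN n s 0 p) ∂(nu.prod nu))) := by
  have hCN := CN_pos hn hs0
  have ha : 0 < ((n : ℝ) - s) / 4 := by linarith
  refine tendsto_lintegral_of_dominated_convergence
    (fun p => ENNReal.ofReal (CN n s) * (ENNReal.ofReal (wt (((n : ℝ) - s) / 4) p.1) * ENNReal.ofReal (wt (((n : ℝ) - s) / 4) p.2)))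
    (fun k => FN_meas _ _) ?_ ?_ ?_
  · intro k
    filter_upwards [nu_prod_pos] with p hp
    have hw : ∀ t : ℝ, 0 < t → 0 ≤ wt (((n : ℝ) - s) / 4) t := fun t ht => by unfold wt; positivity
    have := hw _ hp.1
    have := hw _ hp.2
    rw [← ENNReal.ofReal_mul (by positivity), ← ENNReal.ofReal_mul (by positivity)]
    exact ENNReal.ofReal_le_ofReal (FN_bound hn hs0 hsn (by positivity) hp.1 hp.2)
  · have hm := wt_meas (((n : ℝ) - s) / 4)
    rw [lintegral_const_mul' _ _ (by simp), lintegral_prod_mul (f := fun t => ENNReal.ofReal (wt (((n : ℝ) - s) / 4) t))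
      (g := fun t => ENNReal.ofReal (wt (((n : ℝ) - s) / 4) t)) (by fun_prop) (by fun_prop), lint_wt ha]
    exact ENNReal.mul_ne_top (by simp) (by simp [ENNReal.mul_eq_top])
  · filter_upwards [nu_prod_pos] with p hp
    refine (ENNReal.continuous_ofReal.tendsto _).comp ?_
    have hc : ContinuousAt (fun e => FN n s e p) 0 := by
      have h1 : ContinuousAt (fun e : ℝ => ((p.1 + e) * (p.2 + e)) ^ (s / 2)) 0 :=
        ContinuousAt.rpow_const (by fun_prop) (Or.inr (by positivity))
      have h2 : ContinuousAt (fun e : ℝ => ((p.1 + e) + (p.2 + e)) ^ (-(((n : ℝ) + s) / 2))) 0 :=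
        ContinuousAt.rpow_const (by fun_prop) (Or.inl (by have := hp.1; have := hp.2; simp; linarith))
      unfold FN
      exact continuousAt_const.mul (h1.mul h2)
    exact hc.tendsto.comp tendsto_one_div_add_atTop_nhds_zero_nat

end nb
end SFS

-- part 13
open MeasureTheory
open scoped ENNReal
set_option linter.unusedSectionVars false
set_option linter.unusedVariables false
namespace SFS
section fin
open scoped FourierTransform ContDiff
open Real (Gamma pi exp)
variable {n : ℕ}

lemma nu_pos : ∀ᵐ t ∂nu, 0 < t := by
  unfold nu
  filter_upwards [ae_restrict_mem measurableSet_Ioi] with t ht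
  exact ht

lemma nu_gamma {a b : ℝ} (ha : 0 < a) (hb : 0 < b) :
    ∫⁻ t, ENNReal.ofReal (t ^ (a - 1) * exp (-(b * t))) ∂nu = ENNReal.ofReal (Gamma a * b ^ (-a)) :=
  lint_gamma ha hb

lemma lint_beta {c m : ℝ} (hc : 0 < c) (hcm : c < m) :
    ENNReal.ofReal (Gamma m) * ∫⁻ u, ENNReal.ofReal (u ^ (c - 1) * (1 + u) ^ (-m)) ∂nu =
      ENNReal.ofReal (Gamma c * Gamma (m - c)) := by
  have hm : 0 < m := by linarith
  have gm := Real.Gamma_pos_of_pos hm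
  have gc := Real.Gamma_pos_of_pos hc
  calc _ = ∫⁻ u, ∫⁻ v, ENNReal.ofReal (u ^ (c - 1)) * ENNReal.ofReal (v ^ (m - 1) * exp (-((1 + u) * v))) ∂nu ∂nu := by
        rw [← lintegral_const_mul' _ _ (by simp)]
        refine lintegral_congr_ae ?_
        filter_upwards [nu_pos] with u hu
        rw [lintegral_const_mul' _ _ (by simp), nu_gamma hm (by positivity), ← ENNReal.ofReal_mul (by positivity),
          ← ENNReal.ofReal_mul (by positivity)]
        congr 1; ring
    _ = ∫⁻ v, ∫⁻ u, ENNReal.ofReal (u ^ (c - 1)) * ENNReal.ofReal (v ^ (m - 1) * exp (-((1 + u) * v))) ∂nu ∂nu :=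
        lintegral_lintegral_swap (Measurable.aemeasurable (by fun_prop))
    _ = ∫⁻ v, ENNReal.ofReal (Gamma c) * ENNReal.ofReal (wt (m - c) v) ∂nu := by
        refine lintegral_congr_ae ?_
        filter_upwards [nu_pos] with v hv
        have : ∫⁻ u, ENNReal.ofReal (u ^ (c - 1)) * ENNReal.ofReal (v ^ (m - 1) * exp (-((1 + u) * v))) ∂nu =
            ∫⁻ u, ENNReal.ofReal (v ^ (m - 1) * exp (-v)) * ENNReal.ofReal (u ^ (c - 1) * exp (-(v * u))) ∂nu := by
          refine lintegral_congr_ae ?_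
          filter_upwards [nu_pos] with u hu
          rw [← ENNReal.ofReal_mul (by positivity), ← ENNReal.ofReal_mul (by positivity)]
          congr 1
          rw [show -((1 + u) * v) = -v + -(v * u) by ring, Real.exp_add]; ring
        rw [this, lintegral_const_mul' _ _ (by simp), nu_gamma hc hv, ← ENNReal.ofReal_mul (by positivity),
          ← ENNReal.ofReal_mul (by positivity)]
        congr 1
        unfold wt
        rw [show m - c - 1 = (m - 1) + -c by ring, Real.rpow_add hv]; ring
    _ = _ := by
        rw [lintegral_const_mul' _ _ (by simp), lint_wt (by linarith), ← ENNReal.ofReal_mul gc.le]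

lemma lint_dbl {c h : ℝ} (hc : 0 < c) (hh : c < 2 * h) :
    ENNReal.ofReal (Gamma c) * ∫⁻ p, ENNReal.ofReal (wt h p.1 * wt h p.2 * (p.1 + p.2) ^ (-c)) ∂(nu.prod nu) =
      ENNReal.ofReal (Gamma h ^ 2 * (Gamma c * Gamma (2 * h - c) / Gamma (2 * h))) := by
  have hh0 : 0 < h := by linarith
  have gh := Real.Gamma_pos_of_pos hh0
  have gc := Real.Gamma_pos_of_pos hc
  have g2 := Real.Gamma_pos_of_pos (s := 2 * h) (by linarith)
  have g3 := Real.Gamma_pos_of_pos (s := 2 * h - c) (by linarith)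
  have hw : ∀ t : ℝ, 0 < t → 0 ≤ wt h t := fun t ht => by unfold wt; positivity
  have hwm := wt_meas h
  calc _ = ∫⁻ p, (∫⁻ u, ENNReal.ofReal (wt h p.1 * wt h p.2) * ENNReal.ofReal (u ^ (c - 1) * exp (-((p.1 + p.2) * u))) ∂nu) ∂(nu.prod nu) := by
        rw [← lintegral_const_mul' _ _ (by simp)]
        refine lintegral_congr_ae ?_
        filter_upwards [nu_prod_pos] with p hp
        obtain ⟨h1, h2⟩ := hp
        have := hw _ h1
        have := hw _ h2
        rw [lintegral_const_mul' _ _ (by simp), nu_gamma hc (by positivity), ← ENNReal.ofReal_mul (by positivity),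
          ← ENNReal.ofReal_mul (by positivity)]
        congr 1; ring
    _ = ∫⁻ u, (∫⁻ p : ℝ × ℝ, ENNReal.ofReal (wt h p.1 * wt h p.2) * ENNReal.ofReal (u ^ (c - 1) * exp (-((p.1 + p.2) * u))) ∂(nu.prod nu)) ∂nu :=
        lintegral_lintegral_swap (Measurable.aemeasurable (by
          have h1 : Measurable (fun q : (ℝ × ℝ) × ℝ => wt h q.1.1) := hwm.comp measurable_fst.fst
          have h2 : Measurable (fun q : (ℝ × ℝ) × ℝ => wt h q.1.2) := hwm.comp measurable_fst.snd
          exact (h1.mul h2).ennreal_ofReal.mul (by fun_prop)))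
    _ = ∫⁻ u, ENNReal.ofReal (Gamma h ^ 2) * ENNReal.ofReal (u ^ (c - 1) * (1 + u) ^ (-(2 * h))) ∂nu := by
        refine lintegral_congr_ae ?_
        filter_upwards [nu_pos] with u hu
        have : ∫⁻ p : ℝ × ℝ, ENNReal.ofReal (wt h p.1 * wt h p.2) * ENNReal.ofReal (u ^ (c - 1) * exp (-((p.1 + p.2) * u))) ∂(nu.prod nu) =
            ∫⁻ p : ℝ × ℝ, ENNReal.ofReal (u ^ (c - 1)) * (ENNReal.ofReal (p.1 ^ (h - 1) * exp (-((1 + u) * p.1))) *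
              ENNReal.ofReal (p.2 ^ (h - 1) * exp (-((1 + u) * p.2)))) ∂(nu.prod nu) := by
          refine lintegral_congr_ae ?_
          filter_upwards [nu_prod_pos] with p hp
          obtain ⟨h1, h2⟩ := hp
          have := hw _ h1
          have := hw _ h2
          rw [← ENNReal.ofReal_mul (by positivity), ← ENNReal.ofReal_mul (by positivity), ← ENNReal.ofReal_mul (by positivity)]
          congr 1
          unfold wt
          rw [show -((1 + u) * p.1) = -p.1 + -(p.1 * u) by ring, show -((1 + u) * p.2) = -p.2 + -(p.2 * u) by ring,
            show -((p.1 + p.2) * u) = -(p.1 * u) + -(p.2 * u) by ring, Real.exp_add, Real.exp_add, Real.exp_add]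
          ring
        rw [this, lintegral_const_mul' _ _ (by simp),
          lintegral_prod_mul (f := fun t => ENNReal.ofReal (t ^ (h - 1) * exp (-((1 + u) * t))))
          (g := fun t => ENNReal.ofReal (t ^ (h - 1) * exp (-((1 + u) * t)))) (by fun_prop) (by fun_prop),
          nu_gamma hh0 (by positivity), ← ENNReal.ofReal_mul (by positivity), ← ENNReal.ofReal_mul (by positivity),
          ← ENNReal.ofReal_mul (by positivity)]
        congr 1
        rw [show -(2 * h) = -h + -h by ring, Real.rpow_add (by positivity)]
        ring
    _ = _ := by
        have hb := lint_beta hc hh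
        rw [lintegral_const_mul' _ _ (by simp), ENNReal.ofReal_mul (by positivity)]
        congr 1
        rw [ENNReal.ofReal_div_of_pos g2, ← hb, mul_comm (ENNReal.ofReal (Gamma (2 * h))),
          ENNReal.mul_div_cancel_right (by simpa using g2) (by simp)]

/-- The limiting Sobolev norm. -/
noncomputable def NI (n : ℕ) (s : ℝ) : ℝ :=
  2 ^ s * IJ n n * Gamma (((n : ℝ) + s) / 2) / Gamma (((n : ℝ) - s) / 2)

lemma FN_zero (hn : 1 ≤ n) {s : ℝ} (hs0 : 0 < s) (hsn : s < n) :
    ENNReal.ofReal (Gamma (((n : ℝ) - s) / 2))⁻¹ ^ 2 * ∫⁻ p, ENNReal.ofReal (FN n s 0 p) ∂(nu.prod nu) =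
      ENNReal.ofReal (NI n s) := by
  have hn' : (0 : ℝ) < n := by exact_mod_cast hn
  have hpi := Real.pi_pos
  have hCN := CN_pos hn hs0
  have ga := Real.Gamma_pos_of_pos (s := ((n : ℝ) - s) / 2) (by linarith)
  have gc := Real.Gamma_pos_of_pos (s := ((n : ℝ) + s) / 2) (by positivity)
  have gh := Real.Gamma_pos_of_pos (s := (n : ℝ) / 2) (by positivity)
  have gn := Real.Gamma_pos_of_pos (s := (n : ℝ)) (by positivity)
  have h2 := lint_dbl (c := ((n : ℝ) + s) / 2) (h := (n : ℝ) / 2) (by positivity) (by linarith)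
  have e1 : 2 * ((n : ℝ) / 2) = n := by ring
  have e2 : (n : ℝ) - (n + s) / 2 = (n - s) / 2 := by ring
  rw [e1, e2] at h2
  have e3 : ∫⁻ p, ENNReal.ofReal (FN n s 0 p) ∂(nu.prod nu) = ENNReal.ofReal (CN n s) *
      ∫⁻ p, ENNReal.ofReal (wt ((n : ℝ) / 2) p.1 * wt ((n : ℝ) / 2) p.2 * (p.1 + p.2) ^ (-(((n : ℝ) + s) / 2))) ∂(nu.prod nu) := by
    rw [← lintegral_const_mul' _ _ (by simp)]
    refine lintegral_congr_ae ?_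
    filter_upwards [nu_prod_pos] with p hp
    obtain ⟨h1, h2⟩ := hp
    rw [← ENNReal.ofReal_mul hCN.le]
    congr 1
    unfold FN wt
    have k : ∀ u : ℝ, 0 < u → u ^ ((n : ℝ) / 2 - 1) = u ^ (((n : ℝ) - s) / 2 - 1) * u ^ (s / 2) := by
      intro u hu
      rw [← Real.rpow_add hu]; congr 1; ring
    rw [k _ h1, k _ h2, add_zero, add_zero, Real.mul_rpow h1.le h2.le]
    ring
  set X := ∫⁻ p, ENNReal.ofReal (wt ((n : ℝ) / 2) p.1 * wt ((n : ℝ) / 2) p.2 * (p.1 + p.2) ^ (-(((n : ℝ) + s) / 2))) ∂(nu.prod nu)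
  have e4 : CN n s = 2 ^ s * Real.pi ^ ((n : ℝ) / 2) / Gamma ((n : ℝ) / 2) * Gamma (((n : ℝ) + s) / 2) := by
    unfold CN; ring
  rw [e3, e4, ENNReal.ofReal_mul (by positivity), mul_assoc, h2, ← ENNReal.ofReal_pow (by positivity),
    ← ENNReal.ofReal_mul (by positivity), ← ENNReal.ofReal_mul (by positivity)]
  congr 1
  unfold NI IJ
  rw [show (n : ℝ) - n / 2 = n / 2 by ring]
  field_simp

lemma SC_NI (hn : 1 ≤ n) {s : ℝ} (hs0 : 0 < s) (hsn : s < n) :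
    SC n s * NI n s = IJ n n ^ (2 / (2 * (n : ℝ) / (n - s))) := by
  have hn' : (0 : ℝ) < n := by exact_mod_cast hn
  have hd : 0 < (n : ℝ) - s := by linarith
  have ga := Real.Gamma_pos_of_pos (s := ((n : ℝ) - s) / 2) (by linarith)
  have gc := Real.Gamma_pos_of_pos (s := ((n : ℝ) + s) / 2) (by positivity)
  have hV : 0 < IJ n n := IJ_pos (by linarith)
  have e0 : 2 / (2 * (n : ℝ) / (n - s)) = 1 + -(s / n) := by field_simp; ring
  rw [e0, Real.rpow_add hV, Real.rpow_one]
  nth_rw 2 [V_eq hn]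
  rw [Real.mul_rpow (by positivity) Sph_pos.le, ← Real.rpow_mul (by norm_num)]
  have e1 : -(n : ℝ) * -(s / n) = s := by field_simp
  rw [e1]
  unfold SC NI
  field_simp

lemma Q_tendsto (hn : 1 ≤ n) {s : ℝ} (hs0 : 0 < s) (hsn : s < n) :
    Filter.Tendsto (fun k : ℕ => ∫ x : EE n, |fE n (((n : ℝ) - s) / 2) (1 / ((k : ℝ) + 1)) Nat.one_div_pos_of_nat x| ^ (2 * (n : ℝ) / (n - s)))
      Filter.atTop (nhds (IJ n n)) := by
  have hn' : (0 : ℝ) < n := by exact_mod_cast hn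
  have hd : 0 < (n : ℝ) - s := by linarith
  have hV : 0 < IJ n n := IJ_pos (by linarith)
  have hm : Measurable (fun x : EE n => J x ^ (-(n : ℝ))) := Measurable.pow_const J_cont.measurable _
  have hl := lint_J (n := n) (a := (n : ℝ)) (by linarith)
  have hpos : ∀ x : EE n, 0 ≤ J x ^ (-(n : ℝ)) := fun x => by have := J_pos x; positivity
  have hi : Integrable (fun x : EE n => J x ^ (-(n : ℝ))) := by
    refine ⟨hm.aestronglyMeasurable, ?_⟩
    rw [hasFiniteIntegral_iff_ofReal (Filter.Eventually.of_forall hpos), hl]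
    exact ENNReal.ofReal_lt_top
  have hv : ∫ x : EE n, J x ^ (-(n : ℝ)) = IJ n n := by
    rw [integral_eq_lintegral_of_nonneg_ae (Filter.Eventually.of_forall hpos) hm.aestronglyMeasurable, hl,
      ENNReal.toReal_ofReal hV.le]
  have hq : 0 < 2 * (n : ℝ) / (n - s) := by positivity
  have hval : ∀ (e : ℝ) (he : 0 < e) (x : EE n), |fE n (((n : ℝ) - s) / 2) e he x| ^ (2 * (n : ℝ) / (n - s)) =
      J x ^ (-(n : ℝ)) * exp (-e * ‖x‖ ^ 2) ^ (2 * (n : ℝ) / (n - s)) := by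
    intro e he x
    have hJ := J_pos x
    rw [fE_apply, abs_of_nonneg (by positivity), Real.mul_rpow (by positivity) (by positivity), ← Real.rpow_mul hJ.le]
    congr 2; field_simp
  rw [← hv]
  refine tendsto_integral_of_dominated_convergence (fun x => J x ^ (-(n : ℝ))) ?_ hi ?_ ?_
  · intro k
    exact (Measurable.pow_const (SchwartzMap.continuous _).abs.measurable _).aestronglyMeasurable
  · intro k
    refine Filter.Eventually.of_forall fun x => ?_
    have hk : (0 : ℝ) < 1 / ((k : ℝ) + 1) := Nat.one_div_pos_of_nat
    rw [Real.norm_of_nonneg (by positivity), hval]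
    refine mul_le_of_le_one_right (hpos x) (Real.rpow_le_one (by positivity) ?_ hq.le)
    rw [Real.exp_le_one_iff]
    nlinarith [sq_nonneg ‖x‖, mul_nonneg hk.le (sq_nonneg ‖x‖)]
  · refine Filter.Eventually.of_forall fun x => ?_
    simp_rw [hval]
    have hc : Continuous (fun e : ℝ => J x ^ (-(n : ℝ)) * exp (-e * ‖x‖ ^ 2) ^ (2 * (n : ℝ) / (n - s))) := by
      refine continuous_const.mul (Continuous.rpow_const (by fun_prop) fun e => Or.inr hq.le)
    have := (hc.tendsto 0).comp (tendsto_one_div_add_atTop_nhds_zero_nat (𝕜 := ℝ))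
    simpa [Function.comp_def] using this

theorem optimal (hn : 1 ≤ n) {s : ℝ} (hs0 : 0 < s) (hsn : s < n) {S : ℝ} (hS : S < SC n s) :
    ∃ f : SchwartzMap (EE n) ℝ, ¬ ((∫ x, |f x| ^ (2 * n / (n - s))) ^ (2 / (2 * n / (n - s))) ≤
      S * ∫ ξ, (2 * Real.pi * ‖ξ‖) ^ s * ‖𝓕 (fun x => (f x : ℂ)) ξ‖ ^ 2) := by
  by_contra! hcon
  have hn' : (0 : ℝ) < n := by exact_mod_cast hn
  have hpi := Real.pi_pos
  have hd : 0 < (n : ℝ) - s := by linarith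
  have ga := Real.Gamma_pos_of_pos (s := ((n : ℝ) - s) / 2) (by linarith)
  have gc := Real.Gamma_pos_of_pos (s := ((n : ℝ) + s) / 2) (by positivity)
  have hV : 0 < IJ n n := IJ_pos (by linarith)
  have hq : 0 < 2 / (2 * (n : ℝ) / (n - s)) := by positivity
  have hNI : 0 < NI n s := by unfold NI; positivity
  have hSC : 0 < SC n s := by unfold SC; have := Sph_pos (n := n); positivity
  set S' := max S 0
  have hS' : S' < SC n s := max_lt hS hSC
  have hS0 : 0 ≤ S' := le_max_right _ _
  have l1 := (ENNReal.continuous_ofReal.tendsto _).comp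
    ((Q_tendsto hn hs0 hsn).rpow_const (p := 2 / (2 * (n : ℝ) / (n - s))) (Or.inr hq.le))
  have l2 := ENNReal.Tendsto.const_mul (a := ENNReal.ofReal S') (ENNReal.Tendsto.const_mul (a := ENNReal.ofReal (Gamma (((n : ℝ) - s) / 2))⁻¹ ^ 2)
    (FN_tendsto hn hs0 hsn) (Or.inr (by simp))) (Or.inr (by simp))
  rw [FN_zero hn hs0 hsn] at l2
  have h := le_of_tendsto_of_tendsto' l1 l2 (fun k => ?_)
  · rw [← ENNReal.ofReal_mul hS0, ENNReal.ofReal_le_ofReal_iff (by positivity), ← SC_NI hn hs0 hsn] at h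
    nlinarith
  · have hk : (0 : ℝ) < 1 / ((k : ℝ) + 1) := Nat.one_div_pos_of_nat
    refine le_trans ?_ (mul_le_mul_right (norm_le hn hs0 hsn hk) _)
    let Φ : SchwartzMap (EE n) ℂ := SchwartzMap.postcompCLM (𝕜 := ℝ) Complex.ofRealCLM (fE n (((n : ℝ) - s) / 2) _ hk)
    have hΦ : (Φ : EE n → ℂ) = fun x => (fE n (((n : ℝ) - s) / 2) _ hk x : ℂ) := rfl
    have hs := sob_lint hs0 hsn Φ
    rw [hΦ] at hs
    rw [← hs, ← ENNReal.ofReal_mul hS0]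
    refine ENNReal.ofReal_le_ofReal ((hcon _).trans ?_)
    exact mul_le_mul_of_nonneg_right (le_max_left _ _) (integral_nonneg fun ξ => by positivity)

end fin
end SFS

/-- Sharp fractional Sobolev inequality on `ℝⁿ`, with optimality of the
constant `S_{n,s}`. -/
theorem sharp_fractional_sobolev (n : ℕ) (hn : 1 ≤ n) (s qstar Sns : ℝ)
    (hs : s ∈ Set.Ioo (0 : ℝ) (n : ℝ))
    (hqstar : qstar = 2 * n / (n - s))
    (hSns : Sns = Gamma ((n - s) / 2) / Gamma ((n + s) / 2) *
      (2 * π ^ (((n : ℝ) + 1) / 2) / Gamma (((n : ℝ) + 1) / 2)) ^ (-(s / n))) :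
    (∀ f : SchwartzMap (EuclideanSpace ℝ (Fin n)) ℝ,
      (∫ x : EuclideanSpace ℝ (Fin n), |f x| ^ qstar) ^ (2 / qstar)
        ≤ Sns * homogSobolevNormSq n s f) ∧
    (∀ S : ℝ, S < Sns →
      ∃ f : SchwartzMap (EuclideanSpace ℝ (Fin n)) ℝ,
        ¬ ((∫ x : EuclideanSpace ℝ (Fin n), |f x| ^ qstar) ^ (2 / qstar)
            ≤ S * homogSobolevNormSq n s f)) := by
  obtain ⟨hs0, hsn⟩ := hs
  subst hqstar hSns
  refine ⟨fun f => ?_, fun S hS => ?_⟩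
  · exact SFS.sobolev_ineq hn hs0 hsn f
  · exact SFS.optimal hn hs0 hsn hS
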